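/- Let d ≥ 1, a ≥ 0, r ≥ 2 and 2 < q < ∞ with 2/q + d/r = (d+a+1)/2. Then there exists a constant C = C(d,a,r) > 0 such that for all u₀ ∈ 𝒮(ℝ^{d+1}_+) and F ∈ 𝒮(ℝ^{d+1}_+×ℝ), the function U = 𝕋_a^*(u₀) + 𝔻_a(F) satisfies the bulk Strichartz estimate sup_{z>0} ‖U(·,z,·)‖_{L^q_tL^r_x} ≤ C·( ‖u₀‖_{L²_a(ℝ^{d+1}_+)} + ∫₀^∞ ‖F(·,ζ,·)‖_{L^{q'}_tL^{r'}_x} ζ^a dζ ). -/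

import Mathlib

open MeasureTheory Filter Complex
open scoped ENNReal NNReal Topology

noncomputable section

/-- Bessel function of the first kind of order `ν`, via its power series. -/
def besselJ (ν : ℝ) (x : ℝ) : ℝ :=
  ∑' k : ℕ, ((-1 : ℝ) ^ k / ((k.factorial : ℝ) * Real.Gamma ((k : ℝ) + ν + 1))) *
    (x / 2) ^ (2 * (k : ℝ) + ν)

/-- The half-line Schrödinger–Bessel kernel `S_a(z,ζ,t)`. -/
def SaK (a : ℝ) (z ζ t : ℝ) : ℂ :=
  (Complex.exp (-Complex.I * ((Real.sign t : ℝ) : ℂ) * (((a + 1) * Real.pi / 4 : ℝ) : ℂ)) /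
      (((2 * |t|) ^ ((a + 1) / 2) : ℝ) : ℂ)) *
    (((z * ζ / (2 * |t|)) ^ ((1 - a) / 2) : ℝ) : ℂ) *
    ((besselJ ((a - 1) / 2) (z * ζ / (2 * |t|)) : ℝ) : ℂ) *
    Complex.exp (Complex.I * ((z ^ 2 + ζ ^ 2 : ℝ) : ℂ) / ((4 * t : ℝ) : ℂ))

/-- The boundary kernel `S_a(z,0,t)`. -/
def Sa0 (a : ℝ) (z t : ℝ) : ℂ :=
  ((((2 : ℝ) ^ (-a) / Real.Gamma ((a + 1) / 2) : ℝ)) : ℂ) *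
    Complex.exp (-Complex.I * ((Real.sign t : ℝ) : ℂ) * (((a + 1) * Real.pi / 4 : ℝ) : ℂ)) *
    (((|t| ^ (-((a + 1) / 2)) : ℝ)) : ℂ) *
    Complex.exp (Complex.I * ((z ^ 2 : ℝ) : ℂ) / ((4 * t : ℝ) : ℂ))

/-- The free Schrödinger kernel on `ℝ^d` (principal branch of the power). -/
def Sfree (d : ℕ) (x y : Fin d → ℝ) (t : ℝ) : ℂ :=
  (4 * (Real.pi : ℂ) * Complex.I * (t : ℂ)) ^ (-(d : ℂ) / 2) *
    Complex.exp (Complex.I * ((∑ i, (x i - y i) ^ 2 : ℝ) : ℂ) / ((4 * t : ℝ) : ℂ))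

/-- The full half-space kernel `𝕊_a(X,Y,t) = S_a(z,ζ,t)·S(x,y,t)`. -/
def SK (d : ℕ) (a : ℝ) (X Y : (Fin d → ℝ) × ℝ) (t : ℝ) : ℂ :=
  SaK a X.2 Y.2 t * Sfree d X.1 Y.1 t

/-- The weighted measure `dω_a = z^a dx dz` on the half-space `ℝ^d × (0,∞)`. -/
def ωa (d : ℕ) (a : ℝ) : Measure ((Fin d → ℝ) × ℝ) :=
  (volume : Measure (Fin d → ℝ)).prod
    (((volume : Measure ℝ).restrict (Set.Ioi 0)).withDensity fun z => ENNReal.ofReal (z ^ a))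

/-- The mixed norm `‖Φ‖_{L^q_t L^r_x}`. -/
def mixNorm (d : ℕ) (q r : ℝ) (Φ : (Fin d → ℝ) → ℝ → ℂ) : ℝ≥0∞ :=
  (∫⁻ t : ℝ, (∫⁻ x : Fin d → ℝ, (‖Φ x t‖₊ : ℝ≥0∞) ^ r) ^ (q / r)) ^ (1 / q)

/-- The mixed norm `‖Φ‖_{L^q_T L^r_x}` over the time interval `[0,T]`. -/
def mixNormT (d : ℕ) (T q r : ℝ) (Φ : (Fin d → ℝ) → ℝ → ℂ) : ℝ≥0∞ :=
  (∫⁻ t in Set.Ioc (0 : ℝ) T, (∫⁻ x : Fin d → ℝ, (‖Φ x t‖₊ : ℝ≥0∞) ^ r) ^ (q / r)) ^ (1 / q)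

/-- The homogeneous propagator `𝕋_a^*(u₀)`. -/
def Tstar (d : ℕ) (a : ℝ) (u₀ : (Fin d → ℝ) × ℝ → ℂ) (X : (Fin d → ℝ) × ℝ) (t : ℝ) : ℂ :=
  if t = 0 then u₀ X else ∫ Y, SK d a X Y t * u₀ Y ∂(ωa d a)

/-- The inhomogeneous Duhamel term `𝔻_a(F)`. -/
def Dop (d : ℕ) (a : ℝ) (F : (Fin d → ℝ) × ℝ → ℝ → ℂ) (X : (Fin d → ℝ) × ℝ) (t : ℝ) : ℂ :=
  ∫ τ in (0 : ℝ)..t, ∫ Y, SK d a X Y (t - τ) * F Y τ ∂(ωa d a)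

/-- The boundary-data operator `Θ_a^*(Φ)`. -/
def ThetaStar (d : ℕ) (a : ℝ) (Φ : (Fin d → ℝ) → ℝ → ℂ) (X : (Fin d → ℝ) × ℝ) (t : ℝ) : ℂ :=
  Complex.I *
    ∫ τ in (0 : ℝ)..t, ∫ y : Fin d → ℝ, Sa0 a X.2 (t - τ) * Sfree d X.1 y (t - τ) * Φ y τ

/-- The weight `k(z) = min{1, z^{a/2}}`. -/
def kwt (a z : ℝ) : ℝ := min 1 (z ^ (a / 2))

/-- The weight `k^{-1}(z) = max{1, z^{-a/2}}`. -/
def kinv (a z : ℝ) : ℝ := max 1 (z ^ (-a / 2))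

/-- Normalised entire Bessel-type series. -/
def Psi (b : ℝ) (w : ℂ) : ℂ :=
  ∑' k : ℕ, ((((k.factorial : ℝ) * Real.Gamma ((k : ℝ) + b))⁻¹ : ℝ) : ℂ) * w ^ k

lemma psiG_pos {b : ℝ} (hb : 0 < b) (k : ℕ) : 0 < (k.factorial : ℝ) * Real.Gamma ((k : ℝ) + b) := by
  have : 0 < Real.Gamma ((k : ℝ) + b) := Real.Gamma_pos_of_pos (by positivity)
  positivity

lemma psiG_lower {b : ℝ} (hb : 0 < b) (k : ℕ) :
    min 1 b * Real.Gamma b ≤ Real.Gamma ((k : ℝ) + b) := by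
  have hG := Real.Gamma_pos_of_pos hb
  have h1 : ∀ k : ℕ, min 1 b * Real.Gamma b ≤ Real.Gamma (((k + 1 : ℕ) : ℝ) + b) := by
    intro k
    induction k with
    | zero =>
      have : ((0 + 1 : ℕ) : ℝ) + b = b + 1 := by push_cast; ring
      rw [this, Real.Gamma_add_one hb.ne']
      exact mul_le_mul_of_nonneg_right (min_le_right _ _) hG.le
    | succ n ih =>
      have : ((n + 1 + 1 : ℕ) : ℝ) + b = (((n + 1 : ℕ) : ℝ) + b) + 1 := by push_cast; ring
      rw [this, Real.Gamma_add_one (by positivity)]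
      have h2 : (1 : ℝ) ≤ ((n + 1 : ℕ) : ℝ) + b := by push_cast; linarith [(Nat.cast_nonneg n : (0:ℝ) ≤ n)]
      have h3 : 0 < Real.Gamma (((n + 1 : ℕ) : ℝ) + b) := Real.Gamma_pos_of_pos (by positivity)
      nlinarith
  cases k with
  | zero =>
    simp only [Nat.cast_zero, zero_add]
    nlinarith [min_le_left 1 b]
  | succ k => exact h1 k

lemma psi_summable_norm {b : ℝ} (hb : 0 < b) (x : ℝ) (hx : 0 ≤ x) :
    Summable fun k : ℕ => ((k.factorial : ℝ) * Real.Gamma ((k : ℝ) + b))⁻¹ * x ^ k := by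
  have hG := Real.Gamma_pos_of_pos hb
  have hc : 0 < min 1 b * Real.Gamma b := by positivity
  refine Summable.of_nonneg_of_le (fun k => ?_) (fun k => ?_)
    ((Real.summable_pow_div_factorial x).mul_left (min 1 b * Real.Gamma b)⁻¹)
  · have := psiG_pos hb k
    positivity
  · have h1 := psiG_lower hb k
    have h2 : (0:ℝ) < k.factorial := by positivity
    rw [mul_inv, div_eq_inv_mul, mul_comm ((k.factorial : ℝ)⁻¹), mul_assoc]
    gcongr

lemma psi_summable {b : ℝ} (hb : 0 < b) (w : ℂ) :
    Summable fun k : ℕ => ((((k.factorial : ℝ) * Real.Gamma ((k : ℝ) + b))⁻¹ : ℝ) : ℂ) * w ^ k := by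
  refine Summable.of_norm ?_
  refine (psi_summable_norm hb ‖w‖ (norm_nonneg _)).congr (fun k => ?_)
  rw [norm_mul, norm_pow, Complex.norm_real, Real.norm_of_nonneg]
  exact (inv_pos.2 (psiG_pos hb k)).le

lemma psi_coeff_succ {b : ℝ} (hb : 0 < b) (k : ℕ) :
    (((k+1).factorial : ℝ) * Real.Gamma (((k + 1 : ℕ) : ℝ) + b))⁻¹ * ((k + 1 : ℕ) : ℝ) =
      ((k.factorial : ℝ) * Real.Gamma ((k : ℝ) + (b + 1)))⁻¹ := by
  have : ((k + 1 : ℕ) : ℝ) + b = (k : ℝ) + (b + 1) := by push_cast; ring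
  rw [this, Nat.factorial_succ]
  have h1 : 0 < Real.Gamma ((k : ℝ) + (b + 1)) := Real.Gamma_pos_of_pos (by positivity)
  push_cast
  have h2 : (0:ℝ) < k.factorial := by positivity
  field_simp

lemma psi_hasDerivAt {b : ℝ} (hb : 0 < b) (w : ℂ) : HasDerivAt (Psi b) (Psi (b + 1) w) w := by
  set R : ℝ := ‖w‖ + 1
  have hR : 0 ≤ R := by positivity
  have hs := psi_summable_norm (b := b + 1) (by positivity) R hR
  have hu : Summable fun k : ℕ => (((k.factorial : ℝ) * Real.Gamma ((k : ℝ) + b))⁻¹ * (k : ℝ)) * R ^ (k - 1) := by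
    rw [← summable_nat_add_iff 1]
    refine hs.congr fun k => ?_
    rw [psi_coeff_succ hb]; simp
  have key := hasDerivAt_tsum_of_isPreconnected (𝕜 := ℂ) (F := ℂ) (y₀ := w) (y := w)
    (g := fun (k : ℕ) (w : ℂ) => ((((k.factorial : ℝ) * Real.Gamma ((k : ℝ) + b))⁻¹ : ℝ) : ℂ) * w ^ k)
    (g' := fun (k : ℕ) (w : ℂ) => ((((k.factorial : ℝ) * Real.Gamma ((k : ℝ) + b))⁻¹ : ℝ) : ℂ) * ((k : ℂ) * w ^ (k - 1)))
    (t := Metric.ball 0 R) hu Metric.isOpen_ball (convex_ball 0 R).isPreconnected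
    (fun k y _ => by simpa using (hasDerivAt_pow k y).const_mul _)
    (fun k y hy => by
      have hy' : ‖y‖ ≤ R := by simpa using (mem_ball_zero_iff.1 hy).le
      rw [norm_mul, norm_mul, norm_pow, Complex.norm_real, Complex.norm_natCast, Real.norm_of_nonneg (inv_pos.2 (psiG_pos hb k)).le, ← mul_assoc]
      have := psiG_pos hb k
      gcongr)
    (by simp [R]) (psi_summable hb w) (by simp [R])
  have e : (∑' k : ℕ, ((((k.factorial : ℝ) * Real.Gamma ((k : ℝ) + b))⁻¹ : ℝ) : ℂ) * ((k : ℂ) * w ^ (k - 1))) = Psi (b + 1) w := by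
    have hsum : Summable fun k : ℕ => ((((k.factorial : ℝ) * Real.Gamma ((k : ℝ) + b))⁻¹ : ℝ) : ℂ) * ((k : ℂ) * w ^ (k - 1)) := by
      rw [← summable_nat_add_iff 1]
      refine (psi_summable (b := b+1) (by positivity) w).congr fun k => ?_
      rw [← psi_coeff_succ hb]; push_cast; simp; ring
    rw [hsum.tsum_eq_zero_add]
    simp only [Nat.cast_zero, zero_mul, mul_zero, zero_add, Psi]
    refine tsum_congr fun k => ?_
    rw [← psi_coeff_succ hb]; push_cast; simp; ring
  rw [e] at key
  exact key

lemma psi_rec {b : ℝ} (hb : 0 < b) (w : ℂ) :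
    Psi b w = b * Psi (b + 1) w + w * Psi (b + 2) w := by
  have h0 := psi_summable hb w
  have h1 := psi_summable (b := b+1) (by positivity) w
  have h2 := psi_summable (b := b+2) (by positivity) w
  simp only [Psi]
  rw [h0.tsum_eq_zero_add, h1.tsum_eq_zero_add, mul_add, add_assoc, ← tsum_mul_left, ← tsum_mul_left,
    ← Summable.tsum_add]
  · congr 1
    · have := (Real.Gamma_pos_of_pos hb).ne'
      have hbc : (b : ℂ) ≠ 0 := by exact_mod_cast hb.ne'
      simp [Real.Gamma_add_one hb.ne']
      field_simp
    · refine tsum_congr fun k => ?_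
      have e1 : ((k + 1 : ℕ) : ℝ) + (b + 1) = (((k+1 : ℕ) : ℝ) + b) + 1 := by ring
      have e2 : (k : ℝ) + (b + 2) = (((k+1 : ℕ) : ℝ) + b) + 1 := by push_cast; ring
      have hp : 0 < ((k+1 : ℕ) : ℝ) + b := by positivity
      rw [e1, e2, Real.Gamma_add_one hp.ne', Nat.factorial_succ]
      have h1 : (0:ℝ) < Real.Gamma (((k+1 : ℕ) : ℝ) + b) := Real.Gamma_pos_of_pos hp
      have h2 : (0:ℝ) < k.factorial := by positivity
      have : ((((k + 1) * k.factorial : ℕ) : ℝ) * Real.Gamma (((k+1 : ℕ) : ℝ) + b))⁻¹ =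
        b * ((((k + 1) * k.factorial : ℕ) : ℝ) * ((((k+1 : ℕ) : ℝ) + b) * Real.Gamma (((k+1 : ℕ) : ℝ) + b)))⁻¹
          + (((k.factorial : ℕ) : ℝ) * ((((k+1 : ℕ) : ℝ) + b) * Real.Gamma (((k+1 : ℕ) : ℝ) + b)))⁻¹ := by
        generalize Real.Gamma (((k+1 : ℕ) : ℝ) + b) = G at h1
        push_cast at hp ⊢
        field_simp
        ring
      rw [this]
      push_cast
      ring
  · exact ((summable_nat_add_iff 1).2 h1).mul_left _
  · exact h2.mul_left _

lemma psi_zero {b : ℝ} : Psi b 0 = (((Real.Gamma b)⁻¹ : ℝ) : ℂ) := by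
  rw [Psi, tsum_eq_single 0]
  · simp
  · intro k hk; simp [hk]

lemma psi_continuous {b : ℝ} (hb : 0 < b) : Continuous (Psi b) :=
  continuous_iff_continuousAt.2 fun w => (psi_hasDerivAt hb w).continuousAt

lemma psi_bound {b : ℝ} (hb : 1 / 2 ≤ b) (w : ℂ) :
    ‖Psi b (w ^ 2 / 4)‖ ≤ (Real.Gamma b)⁻¹ * Real.exp |w.re| := by
  have hb0 : 0 < b := by linarith
  set h : ℝ → ℂ := fun s => Psi b ((s : ℂ) ^ 2 * w ^ 2 / 4) with hh
  set m : ℝ → ℂ := fun s => Psi (b + 1) ((s : ℂ) ^ 2 * w ^ 2 / 4) with hm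
  set k : ℝ → ℂ := fun s => ((s : ℂ) * w / 2) * m s with hk
  have harg : ∀ s : ℝ, HasDerivAt (fun s : ℝ => (s : ℂ) ^ 2 * w ^ 2 / 4) ((s : ℂ) * w ^ 2 / 2) s := by
    intro s
    have := ((((hasDerivAt_id (s:ℂ)).pow 2).mul_const (w^2)).div_const 4).comp_ofReal
    refine this.congr_deriv ?_
    simp only [id]; push_cast; ring
  have dh : ∀ s : ℝ, HasDerivAt h (w * k s) s := by
    intro s
    have := (psi_hasDerivAt hb0 ((s : ℂ) ^ 2 * w ^ 2 / 4)).scomp s (harg s)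
    refine this.congr_deriv ?_
    change _ = w * (((s : ℂ) * w / 2) * Psi (b + 1) ((s : ℂ) ^ 2 * w ^ 2 / 4))
    simp only [smul_eq_mul]; ring
  have dk : ∀ s : ℝ, HasDerivAt k (w * (h s - ((b - 1/2 : ℝ) : ℂ) * m s)) s := by
    intro s
    have h1 := (psi_hasDerivAt (b := b+1) (by positivity) ((s : ℂ) ^ 2 * w ^ 2 / 4)).scomp s (harg s)
    have h2 : HasDerivAt (fun s : ℝ => (s : ℂ) * w / 2) (w / 2) s := by
      have := (((hasDerivAt_id (s:ℂ)).mul_const w).div_const 2).comp_ofReal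
      simpa using this
    have h3 := h2.mul h1
    refine h3.congr_deriv ?_
    have := psi_rec hb0 ((s : ℂ) ^ 2 * w ^ 2 / 4)
    change _ = w * (Psi b ((s : ℂ) ^ 2 * w ^ 2 / 4) - ((b - 1/2 : ℝ) : ℂ) * Psi (b + 1) ((s : ℂ) ^ 2 * w ^ 2 / 4))
    simp only [Function.comp]
    rw [this, show b + 1 + 1 = b + 2 by ring]
    simp only [smul_eq_mul]
    push_cast
    ring
  set A : ℝ := |w.re|
  set E : ℝ → ℝ := fun s => (‖h s‖ ^ 2 + ‖k s‖ ^ 2) * Real.exp (-(2 * A * s)) with hE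
  set N' : ℝ → ℝ := fun s => 2 * inner ℝ (h s) (w * k s) + 2 * inner ℝ (k s) (w * (h s - ((b - 1/2 : ℝ) : ℂ) * m s))
  have dE : ∀ s : ℝ, HasDerivAt E (N' s * Real.exp (-(2 * A * s)) + (‖h s‖ ^ 2 + ‖k s‖ ^ 2) * (Real.exp (-(2 * A * s)) * (-(2 * A)))) s := by
    intro s
    have e1 := (dh s).norm_sq
    have e2 := (dk s).norm_sq
    have e3 : HasDerivAt (fun s : ℝ => Real.exp (-(2 * A * s))) (Real.exp (-(2 * A * s)) * (-(2 * A))) s := by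
      have := (((hasDerivAt_id s).const_mul (2 * A)).neg).exp
      simpa using this
    exact (e1.add e2).mul e3
  have anti : AntitoneOn E (Set.Icc 0 1) := by
    refine antitoneOn_of_deriv_nonpos (convex_Icc 0 1)
      (fun s _ => (dE s).continuousAt.continuousWithinAt)
      (fun s _ => (dE s).differentiableAt.differentiableWithinAt) (fun s hs => ?_)
    rw [interior_Icc] at hs
    rw [(dE s).deriv]
    have hN : N' s ≤ 2 * A * (‖h s‖ ^ 2 + ‖k s‖ ^ 2) := by
      have hks : k s = ((s : ℂ) * w / 2) * m s := rfl
      have e : N' s = 4 * w.re * ((h s).re * (k s).re + (h s).im * (k s).im)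
          - (2 * b - 1) * (s / 2) * (w.re ^ 2 + w.im ^ 2) * ((m s).re ^ 2 + (m s).im ^ 2) := by
        have r1 : (k s).re = s / 2 * (w.re * (m s).re - w.im * (m s).im) := by
          rw [hks, show (s : ℂ) * w / 2 * m s = ((s / 2 : ℝ) : ℂ) * (w * m s) by push_cast; ring,
            Complex.re_ofReal_mul, Complex.mul_re]
        have r2 : (k s).im = s / 2 * (w.re * (m s).im + w.im * (m s).re) := by
          rw [hks, show (s : ℂ) * w / 2 * m s = ((s / 2 : ℝ) : ℂ) * (w * m s) by push_cast; ring,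
            Complex.im_ofReal_mul, Complex.mul_im]
        simp only [N', Complex.inner, Complex.mul_re, Complex.mul_im, Complex.conj_re, Complex.conj_im, Complex.sub_re, Complex.sub_im, Complex.ofReal_re, Complex.ofReal_im]
        rw [r1, r2]
        ring
      rw [e, Complex.sq_norm, Complex.sq_norm, Complex.normSq_apply, Complex.normSq_apply]
      have p1 : 0 ≤ (2 * b - 1) * (s / 2) * (w.re ^ 2 + w.im ^ 2) * ((m s).re ^ 2 + (m s).im ^ 2) := by
        have := hs.1
        have : 0 ≤ 2 * b - 1 := by linarith
        positivity
      have p2 := le_abs_self (w.re * (2 * ((h s).re * (k s).re + (h s).im * (k s).im)))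
      rw [abs_mul] at p2
      have p3 : |2 * ((h s).re * (k s).re + (h s).im * (k s).im)| ≤ (h s).re * (h s).re + (h s).im * (h s).im + ((k s).re * (k s).re + (k s).im * (k s).im) := by
        rw [abs_le]; constructor <;>
        nlinarith [sq_nonneg ((h s).re + (k s).re), sq_nonneg ((h s).im + (k s).im), sq_nonneg ((h s).re - (k s).re), sq_nonneg ((h s).im - (k s).im)]
      have p4 := mul_le_mul_of_nonneg_left p3 (abs_nonneg w.re)
      simp only [A]
      linarith
    have := Real.exp_pos (-(2 * A * s))
    nlinarith
  have h01 := anti (Set.left_mem_Icc.2 zero_le_one) (Set.right_mem_Icc.2 zero_le_one) zero_le_one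
  have hG := Real.Gamma_pos_of_pos hb0
  have E0 : E 0 = ((Real.Gamma b)⁻¹) ^ 2 := by
    simp [hE, hh, hk, psi_zero, abs_of_pos hG]
  have h1 : h 1 = Psi b (w ^ 2 / 4) := by simp [hh]
  rw [E0] at h01
  have hle : ‖Psi b (w ^ 2 / 4)‖ ^ 2 * Real.exp (-(2 * A)) ≤ ((Real.Gamma b)⁻¹) ^ 2 := by
    refine le_trans ?_ h01
    simp only [hE, h1, mul_one]
    gcongr
    nlinarith [sq_nonneg ‖k 1‖]
  have hle2 : ‖Psi b (w ^ 2 / 4)‖ ^ 2 ≤ ((Real.Gamma b)⁻¹ * Real.exp A) ^ 2 := by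
    have : Real.exp (2 * A) * Real.exp (-(2 * A)) = 1 := by rw [← Real.exp_add]; simp
    have e2 : Real.exp A ^ 2 = Real.exp (2 * A) := by rw [← Real.exp_nat_mul]; norm_num
    rw [mul_pow, e2]
    have := mul_le_mul_of_nonneg_right hle (Real.exp_pos (2 * A)).le
    nlinarith
  exact le_of_sq_le_sq hle2 (by positivity)

lemma chu_vand (i : ℕ) : ∀ (j : ℕ) (b : ℝ), 0 < b →
    ∑ n ∈ Finset.range (i + 1), (i.choose n : ℝ) * (j.descFactorial n : ℝ) / Real.Gamma ((n : ℝ) + b) =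
      Real.Gamma ((i : ℝ) + j + b) / (Real.Gamma (i + b) * Real.Gamma (j + b)) := by
  induction i with
  | zero =>
    intro j b hb
    have h1 := (Real.Gamma_pos_of_pos hb).ne'
    have h2 : Real.Gamma ((j : ℝ) + b) ≠ 0 := (Real.Gamma_pos_of_pos (by positivity)).ne'
    simp
    field_simp
  | succ i ih =>
    intro j b hb
    have step : ∑ n ∈ Finset.range (i + 1 + 1), ((i+1).choose n : ℝ) * (j.descFactorial n : ℝ) / Real.Gamma ((n : ℝ) + b)
        = ∑ n ∈ Finset.range (i + 1), (i.choose n : ℝ) * (j.descFactorial n : ℝ) / Real.Gamma ((n : ℝ) + b)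
          + ∑ n ∈ Finset.range (i + 1), (i.choose n : ℝ) * (j.descFactorial (n+1) : ℝ) / Real.Gamma ((n : ℝ) + (b + 1)) := by
      rw [Finset.sum_range_succ' _ (i+1)]
      have e1 : ∀ n ∈ Finset.range (i+1), ((i+1).choose (n+1) : ℝ) * (j.descFactorial (n+1) : ℝ) / Real.Gamma (((n + 1 : ℕ) : ℝ) + b)
          = (i.choose n : ℝ) * (j.descFactorial (n+1) : ℝ) / Real.Gamma ((n : ℝ) + (b + 1))
            + (i.choose (n+1) : ℝ) * (j.descFactorial (n+1) : ℝ) / Real.Gamma (((n + 1 : ℕ) : ℝ) + b) := by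
        intro n _
        rw [Nat.choose_succ_succ, show ((n + 1 : ℕ) : ℝ) + b = (n : ℝ) + (b + 1) by push_cast; ring]
        push_cast; ring
      rw [Finset.sum_congr rfl e1, Finset.sum_add_distrib]
      have e2 : ∑ n ∈ Finset.range (i + 1), (i.choose n : ℝ) * (j.descFactorial n : ℝ) / Real.Gamma ((n : ℝ) + b)
          = ∑ n ∈ Finset.range (i + 1), (i.choose (n+1) : ℝ) * (j.descFactorial (n+1) : ℝ) / Real.Gamma (((n + 1 : ℕ) : ℝ) + b)
            + (i.choose 0 : ℝ) * (j.descFactorial 0 : ℝ) / Real.Gamma (((0 : ℕ) : ℝ) + b) := by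
        rw [← Finset.sum_range_succ' (fun n => (i.choose n : ℝ) * (j.descFactorial n : ℝ) / Real.Gamma ((n : ℝ) + b)) (i+1),
          Finset.sum_range_succ _ (i+1)]
        simp
      rw [e2]
      simp
      ring
    rw [step, ih j b hb]
    have hi : 0 < (i : ℝ) + b := by positivity
    have hij : 0 < (i : ℝ) + j + b := by positivity
    have g1 := (Real.Gamma_pos_of_pos hi)
    have g2 : 0 < Real.Gamma ((j : ℝ) + b) := (Real.Gamma_pos_of_pos (by positivity))
    have g3 := (Real.Gamma_pos_of_pos hij)
    rw [show ((i + 1 : ℕ) : ℝ) + j + b = ((i : ℝ) + j + b) + 1 by push_cast; ring,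
        show ((i + 1 : ℕ) : ℝ) + b = ((i : ℝ) + b) + 1 by push_cast; ring,
        Real.Gamma_add_one hi.ne', Real.Gamma_add_one hij.ne']
    cases j with
    | zero =>
      simp
      simp at hij g1 g3
      field_simp
    | succ j =>
      have e3 : ∀ n, ((j+1).descFactorial (n+1) : ℝ) = (j + 1) * (j.descFactorial n : ℝ) := by
        intro n; rw [Nat.succ_descFactorial_succ]; push_cast; ring
      have e4 := ih j (b+1) (by positivity)
      have e5 : ∑ n ∈ Finset.range (i + 1), (i.choose n : ℝ) * ((j+1).descFactorial (n+1) : ℝ) / Real.Gamma ((n : ℝ) + (b + 1))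
        = (j + 1) * ∑ n ∈ Finset.range (i + 1), (i.choose n : ℝ) * (j.descFactorial n : ℝ) / Real.Gamma ((n : ℝ) + (b + 1)) := by
        rw [Finset.mul_sum]; refine Finset.sum_congr rfl fun n _ => ?_
        rw [e3]; ring
      rw [e5, e4, show (i : ℝ) + j + (b + 1) = (i : ℝ) + ((j + 1 : ℕ) : ℝ) + b by push_cast; ring,
        show (i : ℝ) + (b + 1) = ((i : ℝ) + b) + 1 by ring,
        show (j : ℝ) + (b + 1) = ((j + 1 : ℕ) : ℝ) + b by push_cast; ring, Real.Gamma_add_one hi.ne']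
      generalize Real.Gamma ((i:ℝ) + ((j+1 : ℕ) : ℝ) + b) = G3 at *
      generalize Real.Gamma (((j+1 : ℕ) : ℝ) + b) = G2 at *
      generalize Real.Gamma ((i:ℝ) + b) = G1 at *
      push_cast
      field_simp
      ring

/-- coefficient -/
def cPsi (b : ℝ) (k : ℕ) : ℝ := ((k.factorial : ℝ) * Real.Gamma ((k : ℝ) + b))⁻¹

/-- auxiliary triple term -/
def hTri (b : ℝ) (x y : ℂ) (t : ℕ × (ℕ × ℕ)) : ℂ := if t.1 ≤ t.2.1 ∧ t.1 ≤ t.2.2 then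
      (((cPsi b t.1 : ℝ) : ℂ) * (x * y) ^ t.1) *
      ((x ^ (t.2.1 - t.1) / ((t.2.1 - t.1).factorial : ℂ)) * (y ^ (t.2.2 - t.1) / ((t.2.2 - t.1).factorial : ℂ))) else 0

lemma hTri_sum {b : ℝ} (hb : 0 < b) (x y : ℂ) (i j : ℕ) :
    ((Real.Gamma ((i : ℝ) + j + b) * cPsi b i * cPsi b j : ℝ) : ℂ) * x ^ i * y ^ j =
      ∑ n ∈ Finset.range (i + 1), hTri b x y (n, (i, j)) := by
  have cv := chu_vand i j b hb
  have gi : 0 < Real.Gamma ((i : ℝ) + b) := (Real.Gamma_pos_of_pos (by positivity))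
  have gj : 0 < Real.Gamma ((j : ℝ) + b) := (Real.Gamma_pos_of_pos (by positivity))
  have : Real.Gamma ((i : ℝ) + j + b) * cPsi b i * cPsi b j =
    (∑ n ∈ Finset.range (i + 1), (i.choose n : ℝ) * (j.descFactorial n : ℝ) / Real.Gamma ((n : ℝ) + b)) / (i.factorial * j.factorial) := by
    rw [cv, cPsi, cPsi]
    field_simp
  rw [this, mul_assoc, Finset.sum_div, Complex.ofReal_sum, Finset.sum_mul]
  refine Finset.sum_congr rfl fun n hn => ?_
  have hni : n ≤ i := by simpa [Nat.lt_succ_iff] using hn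
  simp only [hTri]
  split_ifs with hcond
  · have hnj := hcond.2
    have k1 : (i.choose n : ℝ) = i.factorial / (n.factorial * (i - n).factorial) := by
      rw [Nat.cast_choose ℝ hni]
    have k2 : (j.descFactorial n : ℝ) = j.factorial / (j - n).factorial := by
      rw [eq_div_iff (by positivity), mul_comm]
      exact_mod_cast Nat.factorial_mul_descFactorial hnj
    have gn : 0 < Real.Gamma ((n : ℝ) + b) := (Real.Gamma_pos_of_pos (by positivity))
    have k3 : (i.choose n : ℝ) * (j.descFactorial n : ℝ) / Real.Gamma ((n : ℝ) + b) / (i.factorial * j.factorial)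
      = cPsi b n / ((i - n).factorial * (j - n).factorial) := by
      rw [k1, k2, cPsi]
      have : (i.factorial : ℝ) ≠ 0 := by positivity
      have : (j.factorial : ℝ) ≠ 0 := by positivity
      field_simp
    rw [k3]
    have ex : x ^ i = x ^ n * x ^ (i - n) := by rw [← pow_add, Nat.add_sub_cancel' hni]
    have ey : y ^ j = y ^ n * y ^ (j - n) := by rw [← pow_add, Nat.add_sub_cancel' hnj]
    rw [ex, ey, mul_pow]
    push_cast
    have : (((i - n).factorial : ℕ) : ℂ) ≠ 0 := by exact_mod_cast (Nat.factorial_pos _).ne'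
    have : (((j - n).factorial : ℕ) : ℂ) ≠ 0 := by exact_mod_cast (Nat.factorial_pos _).ne'
    field_simp
  · have hnj : j < n := by
      by_contra hcon
      exact hcond ⟨hni, not_lt.1 hcon⟩
    rw [Nat.descFactorial_eq_zero_iff_lt.2 hnj]
    simp

lemma hasSum_mul_prod {ι κ : Type*} {f : ι → ℂ} {g : κ → ℂ} {s t : ℂ} (hf : HasSum f s) (hg : HasSum g t) :
    HasSum (fun p : ι × κ => f p.1 * g p.2) (s * t) :=
  HasSum.mul hf hg (summable_mul_of_summable_norm hf.summable.norm hg.summable.norm)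

lemma hasSum_double {b : ℝ} (hb : 0 < b) (x y : ℂ) :
    HasSum (fun ij : ℕ × ℕ => ((Real.Gamma ((ij.1 : ℝ) + ij.2 + b) * cPsi b ij.1 * cPsi b ij.2 : ℝ) : ℂ) * x ^ ij.1 * y ^ ij.2)
      (Complex.exp (x + y) * Psi b (x * y)) := by
  have hex : ∀ z : ℂ, HasSum (fun m : ℕ => z ^ m / (m.factorial : ℂ)) (Complex.exp z) := by
    intro z
    have := NormedSpace.expSeries_div_hasSum_exp (𝔸 := ℂ) z
    rwa [← Complex.exp_eq_exp_ℂ] at this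
  have hP : HasSum (fun n : ℕ => ((cPsi b n : ℝ) : ℂ) * (x * y) ^ n) (Psi b (x * y)) :=
    (psi_summable hb (x * y)).hasSum
  have hxy := hasSum_mul_prod (hex x) (hex y)
  have h3 := hasSum_mul_prod hP hxy
  obtain ⟨g, hg⟩ : ∃ g : ℕ × (ℕ × ℕ) → ℕ × (ℕ × ℕ), g = fun t => (t.1, (t.2.1 + t.1, t.2.2 + t.1)) := ⟨_, rfl⟩
  have ginj : Function.Injective g := by
    rintro ⟨n, m, l⟩ ⟨n', m', l'⟩ he
    simp only [hg, Prod.mk.injEq] at he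
    obtain ⟨h1, h2, h3⟩ := he
    simp only [Prod.mk.injEq]; omega
  have hz : ∀ t ∉ Set.range g, hTri b x y t = 0 := by
    rintro ⟨n, i, j⟩ ht
    simp only [hTri]
    rw [if_neg]
    rintro ⟨h1, h2⟩
    apply ht
    refine ⟨(n, (i - n, j - n)), ?_⟩
    simp only [hg] at *
    simp [Nat.sub_add_cancel h1, Nat.sub_add_cancel h2]
  have hc : hTri b x y ∘ g = (fun t : ℕ × (ℕ × ℕ) => (((cPsi b t.1 : ℝ) : ℂ) * (x * y) ^ t.1) *
      ((x ^ t.2.1 / (t.2.1.factorial : ℂ)) * (y ^ t.2.2 / (t.2.2.factorial : ℂ)))) := by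
    funext t
    simp [hTri, hg]
  rw [← hc, ginj.hasSum_iff hz] at h3
  have h4 : HasSum (fun t : (ℕ × ℕ) × ℕ => hTri b x y (t.2, t.1)) (Psi b (x * y) * (Complex.exp x * Complex.exp y)) :=
    ((Equiv.prodComm (ℕ × ℕ) ℕ).hasSum_iff (f := hTri b x y)).2 h3
  have h5 := h4.prod_fiberwise (g := fun ij : ℕ × ℕ => ((Real.Gamma ((ij.1 : ℝ) + ij.2 + b) * cPsi b ij.1 * cPsi b ij.2 : ℝ) : ℂ) * x ^ ij.1 * y ^ ij.2) ?_
  · rwa [Complex.exp_add, mul_comm]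
  rintro ⟨i, j⟩
  have e := hTri_sum hb x y i j
  rw [e]
  refine hasSum_sum_of_ne_finset_zero fun n hn => ?_
  have : i < n := by simpa [Nat.lt_succ_iff] using hn
  simp only [hTri]
  rw [if_neg]
  rintro ⟨h1, _⟩
  omega

lemma intOn_gamma {s r : ℝ} (hs : 0 < s) (hr : 0 < r) :
    IntegrableOn (fun u : ℝ => u ^ (s - 1) * Real.exp (-(r * u))) (Set.Ioi 0) := by
  have := integrableOn_rpow_mul_exp_neg_mul_rpow (p := 1) (s := s - 1) (b := r) (by linarith) one_pos hr
  simpa using this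

lemma norm_gterm (s : ℝ) (p : ℂ) {u : ℝ} (hu : 0 < u) :
    ‖((u ^ s : ℝ) : ℂ) * Complex.exp (-(p * u))‖ = u ^ s * Real.exp (-(p.re * u)) := by
  rw [norm_mul, Complex.norm_real, Complex.norm_exp, Real.norm_of_nonneg (by positivity)]
  simp

lemma meas_gterm (s : ℝ) (p : ℂ) : Measurable fun u : ℝ => ((u ^ s : ℝ) : ℂ) * Complex.exp (-(p * u)) := by
  fun_prop

lemma intOn_cgamma {s : ℝ} (hs : 0 < s) {p : ℂ} (hp : 0 < p.re) :
    IntegrableOn (fun u : ℝ => ((u ^ (s - 1) : ℝ) : ℂ) * Complex.exp (-(p * u))) (Set.Ioi 0) := by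
  refine Integrable.mono' (intOn_gamma hs hp) (meas_gterm _ _).aestronglyMeasurable ?_
  filter_upwards [ae_restrict_mem measurableSet_Ioi] with u hu
  rw [norm_gterm _ _ hu]

lemma cmoment {s : ℝ} (hs : 0 < s) {p : ℂ} (hp : 0 < p.re) :
    ∫ u in Set.Ioi (0:ℝ), ((u ^ (s - 1) : ℝ) : ℂ) * Complex.exp (-(p * u)) = (1 / p) ^ (s : ℂ) * (Real.Gamma s : ℂ) := by
  set U : Set ℂ := {p | 0 < p.re}
  have hU : IsOpen U := isOpen_lt continuous_const Complex.continuous_re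
  have hUc : Convex ℝ U := convex_halfSpace_re_gt 0
  have hf : DifferentiableOn ℂ (fun p : ℂ => ∫ u in Set.Ioi (0:ℝ), ((u ^ (s - 1) : ℝ) : ℂ) * Complex.exp (-(p * u))) U := by
    intro p hp
    have hp' : 0 < p.re := hp
    have hb : ∀ᵐ u ∂(volume.restrict (Set.Ioi (0:ℝ))), ∀ x ∈ {x : ℂ | p.re / 2 < x.re},
        ‖((u ^ (s - 1) : ℝ) : ℂ) * (Complex.exp (-(x * u)) * (-(u : ℂ)))‖ ≤ u ^ ((s + 1) - 1) * Real.exp (-(p.re / 2 * u)) := by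
      filter_upwards [ae_restrict_mem measurableSet_Ioi] with u hu x hx
      have hu0 : 0 < u := hu
      rw [← mul_assoc, norm_mul, norm_gterm _ _ hu, norm_neg, Complex.norm_real, Real.norm_of_nonneg hu0.le]
      have : u ^ (s + 1 - 1) = u ^ (s - 1) * u := by
        rw [show s + 1 - 1 = (s - 1) + 1 by ring, Real.rpow_add_one hu0.ne']
      rw [this]
      have h2 : Real.exp (-(x.re * u)) ≤ Real.exp (-(p.re / 2 * u)) := by
        have hx' : p.re / 2 < x.re := hx
        gcongr
      have := mul_le_mul_of_nonneg_left h2 (show 0 ≤ u ^ (s - 1) * u by positivity)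
      linarith
    have key := hasDerivAt_integral_of_dominated_loc_of_deriv_le (𝕜 := ℂ) (μ := volume.restrict (Set.Ioi (0:ℝ)))
      (F := fun (p : ℂ) (u : ℝ) => ((u ^ (s - 1) : ℝ) : ℂ) * Complex.exp (-(p * u)))
      (F' := fun (p : ℂ) (u : ℝ) => ((u ^ (s - 1) : ℝ) : ℂ) * (Complex.exp (-(p * u)) * (-(u : ℂ))))
      (bound := fun u : ℝ => u ^ ((s + 1) - 1) * Real.exp (-(p.re / 2 * u)))
      (s := {x : ℂ | p.re / 2 < x.re}) (x₀ := p)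
      ((isOpen_lt continuous_const Complex.continuous_re).mem_nhds (by simp; linarith))
      (Eventually.of_forall fun x => (meas_gterm _ _).aestronglyMeasurable)
      (intOn_cgamma hs hp')
      (by
        have : Measurable (fun (u : ℝ) => ((u ^ (s - 1) : ℝ) : ℂ) * (Complex.exp (-(p * u)) * (-(u : ℂ)))) := by fun_prop
        exact this.aestronglyMeasurable)
      hb (intOn_gamma (by linarith) (by linarith))
      (Eventually.of_forall fun u x _ => by
        have h1 : HasDerivAt (fun x : ℂ => -(x * (u : ℂ))) (-(u : ℂ)) x := by
          have := ((hasDerivAt_id x).mul_const (u : ℂ)).fun_neg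
          simpa using this
        exact (h1.cexp).const_mul _)
    exact key.2.differentiableAt.differentiableWithinAt
  have hg : DifferentiableOn ℂ (fun p : ℂ => (1 / p) ^ (s : ℂ) * (Real.Gamma s : ℂ)) U := by
    intro p hp
    have hp' : 0 < p.re := hp
    have hp0 : p ≠ 0 := by rintro rfl; simp at hp'
    refine DifferentiableAt.differentiableWithinAt (DifferentiableAt.mul_const (DifferentiableAt.cpow_const ?_ (Or.inl ?_)) _)
    · exact (differentiableAt_const _).div differentiableAt_id hp0
    · rw [one_div, Complex.inv_re]
      exact div_pos hp' (Complex.normSq_pos.2 hp0)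
  have hreal : ∀ r : ℝ, 0 < r → ∫ u in Set.Ioi (0:ℝ), ((u ^ (s - 1) : ℝ) : ℂ) * Complex.exp (-((r : ℂ) * u)) = (1 / (r : ℂ)) ^ (s : ℂ) * (Real.Gamma s : ℂ) := by
    intro r hr
    have := Real.integral_rpow_mul_exp_neg_mul_Ioi hs hr
    have h2 := congrArg (fun x : ℝ => (x : ℂ)) this
    rw [← integral_complex_ofReal] at h2
    push_cast [Complex.ofReal_cpow (show 0 ≤ 1 / r by positivity)] at h2 ⊢
    exact h2
  refine AnalyticOnNhd.eqOn_of_preconnected_of_frequently_eq (hf.analyticOnNhd hU) (hg.analyticOnNhd hU)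
    hUc.isPreconnected (z₀ := 1) (by simp [U]) ?_ hp
  have ht : Tendsto (fun n : ℕ => ((1 + 1 / ((n : ℝ) + 1) : ℝ) : ℂ)) atTop (𝓝[≠] 1) := by
    refine tendsto_nhdsWithin_iff.2 ⟨?_, Eventually.of_forall fun n => ?_⟩
    · have h1 : Tendsto (fun n : ℕ => (1 + 1 / ((n : ℝ) + 1) : ℝ)) atTop (𝓝 (1 + 0)) :=
        tendsto_const_nhds.add tendsto_one_div_add_atTop_nhds_zero_nat
      have h2 := (Complex.continuous_ofReal.tendsto _).comp h1
      simpa [Function.comp_def] using h2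
    · simp only [Set.mem_compl_iff, Set.mem_singleton_iff]
      have : (0 : ℝ) < 1 / ((n : ℝ) + 1) := by positivity
      intro hc
      have : (1 + 1 / ((n : ℝ) + 1) : ℝ) = 1 := by exact_mod_cast hc
      linarith
  refine ht.frequently (Frequently.of_forall fun n => ?_)
  exact hreal _ (by positivity)

lemma weber {b : ℝ} (hb : 0 < b) (A B : ℝ) {p : ℂ} (hp : 0 < p.re) :
    ∫ u in Set.Ioi (0:ℝ), (Psi b (-((A : ℂ) * u)) * Psi b (-((B : ℂ) * u))) * (((u ^ (b - 1) : ℝ) : ℂ) * Complex.exp (-(p * u))) =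
      (1 / p) ^ (b : ℂ) * (Complex.exp (-(A / p) + -(B / p)) * Psi b ((-(A / p)) * (-(B / p)))) := by
  have hp0 : p ≠ 0 := by rintro rfl; simp at hp
  set F : ℕ × ℕ → ℝ → ℂ := fun ij u => ((cPsi b ij.1 * cPsi b ij.2 : ℝ) : ℂ) * (-(A:ℂ)) ^ ij.1 * (-(B:ℂ)) ^ ij.2 *
    (((u ^ (((ij.1 : ℝ) + ij.2 + b) - 1) : ℝ) : ℂ) * Complex.exp (-(p * u))) with hF
  have hsij : ∀ ij : ℕ × ℕ, 0 < (ij.1 : ℝ) + ij.2 + b := fun ij => by positivity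
  have hint : ∀ ij, Integrable (F ij) (volume.restrict (Set.Ioi 0)) := fun ij =>
    (intOn_cgamma (hsij ij) hp).const_mul _
  have hcp : ∀ k, 0 < cPsi b k := fun k => inv_pos.2 (psiG_pos hb k)
  have hnorm : ∀ ij, ∫ u in Set.Ioi (0:ℝ), ‖F ij u‖ = (1 / p.re) ^ b *
      ‖((Real.Gamma ((ij.1 : ℝ) + ij.2 + b) * cPsi b ij.1 * cPsi b ij.2 : ℝ) : ℂ) * ((|A| / p.re : ℝ) : ℂ) ^ ij.1 * ((|B| / p.re : ℝ) : ℂ) ^ ij.2‖ := by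
    rintro ⟨i, j⟩
    have hs := hsij (i, j)
    simp only at hs
    have hG := Real.Gamma_pos_of_pos hs
    have e1 : ∫ u in Set.Ioi (0:ℝ), ‖F (i, j) u‖ = ∫ u in Set.Ioi (0:ℝ), (cPsi b i * cPsi b j * |A| ^ i * |B| ^ j) * (u ^ (((i : ℝ) + j + b) - 1) * Real.exp (-(p.re * u))) := by
      refine setIntegral_congr_fun measurableSet_Ioi fun u hu => ?_
      have := mul_pos (hcp i) (hcp j)
      simp only [hF]
      rw [norm_mul, norm_gterm _ _ hu, norm_mul, norm_mul, norm_pow, norm_pow, norm_neg, norm_neg, Complex.norm_real, Complex.norm_real, Complex.norm_real, Real.norm_of_nonneg this.le, Real.norm_eq_abs, Real.norm_eq_abs]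
    rw [e1, integral_const_mul, Real.integral_rpow_mul_exp_neg_mul_Ioi hs hp]
    have := hcp i
    have := hcp j
    rw [norm_mul, norm_mul, norm_pow, norm_pow, Complex.norm_real, Complex.norm_real, Complex.norm_real, Real.norm_of_nonneg (by positivity), Real.norm_of_nonneg (by positivity), Real.norm_of_nonneg (by positivity)]
    rw [Real.rpow_add (by positivity), Real.rpow_add (by positivity), Real.rpow_natCast, Real.rpow_natCast]
    simp only [div_pow, one_pow]
    ring
  have hsum : Summable fun ij => ∫ u in Set.Ioi (0:ℝ), ‖F ij u‖ := by
    simp_rw [hnorm]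
    exact (hasSum_double hb _ _).summable.norm.mul_left _
  have key := hasSum_integral_of_summable_integral_norm hint hsum
  have hval : ∀ ij, ∫ u in Set.Ioi (0:ℝ), F ij u = (1 / p) ^ (b : ℂ) *
      (((Real.Gamma ((ij.1 : ℝ) + ij.2 + b) * cPsi b ij.1 * cPsi b ij.2 : ℝ) : ℂ) * (-(A / p)) ^ ij.1 * (-(B / p)) ^ ij.2) := by
    rintro ⟨i, j⟩
    simp only [hF]
    have := cmoment (hsij (i, j)) hp
    simp only at this
    rw [integral_const_mul, this]
    have h1p : 1 / p ≠ 0 := one_div_ne_zero hp0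
    push_cast
    rw [Complex.cpow_add _ _ h1p, Complex.cpow_add _ _ h1p, Complex.cpow_natCast, Complex.cpow_natCast,
      ← neg_div, ← neg_div]
    simp only [div_pow, one_pow]
    ring
  have hval2 : HasSum (fun ij => ∫ u in Set.Ioi (0:ℝ), F ij u) ((1 / p) ^ (b : ℂ) * (Complex.exp (-(A / p) + -(B / p)) * Psi b ((-(A / p)) * (-(B / p))))) := by
    simp_rw [hval]
    exact (hasSum_double hb _ _).mul_left _
  have e := key.unique hval2
  rw [← e]
  refine setIntegral_congr_fun measurableSet_Ioi fun u hu => ?_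
  have hu0 : 0 < u := hu
  have s1 := (psi_summable hb (-((A : ℂ) * u))).hasSum
  have s2 := (psi_summable hb (-((B : ℂ) * u))).hasSum
  have s3 := (hasSum_mul_prod s1 s2).mul_right (((u ^ (b - 1) : ℝ) : ℂ) * Complex.exp (-(p * u)))
  have s4 := s3.tsum_eq
  simp only [Psi]
  rw [← s4]
  refine tsum_congr fun ij => ?_
  simp only [hF, cPsi]
  rw [show (ij.1 : ℝ) + ij.2 + b - 1 = (b - 1) + ij.1 + ij.2 by ring, Real.rpow_add hu0, Real.rpow_add hu0, Real.rpow_natCast, Real.rpow_natCast]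
  rw [← neg_mul, ← neg_mul, mul_pow, mul_pow]
  push_cast
  ring

lemma weber_bound {b : ℝ} (hb : 1 / 2 ≤ b) (α β : ℝ) (hα : 0 ≤ α) (hβ : 0 ≤ β) {p : ℂ} (hp : 0 < p.re) :
    ‖∫ ζ in Set.Ioi (0:ℝ), (Psi b (-(((α * ζ) ^ 2 / 4 : ℝ) : ℂ)) * Psi b (-(((β * ζ) ^ 2 / 4 : ℝ) : ℂ))) *
      (((ζ ^ (2 * b - 1) : ℝ) : ℂ) * Complex.exp (-(p * (ζ : ℂ) ^ 2)))‖ ≤ (Real.Gamma b)⁻¹ * ‖p‖ ^ (-b) := by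
  have hb0 : 0 < b := by linarith
  have hp0 : p ≠ 0 := by rintro rfl; simp at hp
  have hG := Real.Gamma_pos_of_pos hb0
  have sub := integral_comp_rpow_Ioi_of_pos (p := 2) (g := fun u : ℝ => (Psi b (-(((α ^ 2 / 4 : ℝ) : ℂ) * u)) * Psi b (-(((β ^ 2 / 4 : ℝ) : ℂ) * u))) * (((u ^ (b - 1) : ℝ) : ℂ) * Complex.exp (-(p * u)))) two_pos
  rw [weber hb0 _ _ hp] at sub
  have e : ∫ ζ in Set.Ioi (0:ℝ), (Psi b (-(((α * ζ) ^ 2 / 4 : ℝ) : ℂ)) * Psi b (-(((β * ζ) ^ 2 / 4 : ℝ) : ℂ))) *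
      (((ζ ^ (2 * b - 1) : ℝ) : ℂ) * Complex.exp (-(p * (ζ : ℂ) ^ 2))) = (1 / 2 : ℂ) * ((1 / p) ^ (b : ℂ) * (Complex.exp (-(((α ^ 2 / 4 : ℝ) : ℂ) / p) + -(((β ^ 2 / 4 : ℝ) : ℂ) / p)) * Psi b ((-(((α ^ 2 / 4 : ℝ) : ℂ) / p)) * (-(((β ^ 2 / 4 : ℝ) : ℂ) / p))))) := by
    rw [← sub, ← integral_const_mul]
    refine setIntegral_congr_fun measurableSet_Ioi fun u hu => ?_
    have hu0 : 0 < u := hu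
    have h1 : ((u ^ (2:ℝ)) : ℝ) ^ (b - 1) * u = u ^ (2 * b - 1) := by
      rw [← Real.rpow_mul hu0.le, ← Real.rpow_add_one hu0.ne']; congr 1; ring
    rw [← h1, show (2:ℝ) - 1 = 1 by norm_num, Real.rpow_one, Complex.real_smul]
    have h2 : u ^ (2:ℝ) = u ^ 2 := by exact_mod_cast Real.rpow_natCast u 2
    rw [h2]
    push_cast
    rw [mul_pow, mul_pow, show (α:ℂ) ^ 2 * (u:ℂ) ^ 2 / 4 = (α:ℂ) ^ 2 / 4 * (u:ℂ) ^ 2 by ring, show (β:ℂ) ^ 2 * (u:ℂ) ^ 2 / 4 = (β:ℂ) ^ 2 / 4 * (u:ℂ) ^ 2 by ring]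
    ring
  rw [e]
  set w : ℂ := ((α * β / 2 : ℝ) : ℂ) / p with hw
  have hww : (-(((α ^ 2 / 4 : ℝ) : ℂ) / p)) * (-(((β ^ 2 / 4 : ℝ) : ℂ) / p)) = w ^ 2 / 4 := by
    rw [hw]; push_cast; field_simp; ring
  rw [hww]
  set κ : ℝ := (1 / p).re
  have hκ : 0 < κ := by
    simp only [κ]; rw [one_div, Complex.inv_re]
    exact div_pos hp (Complex.normSq_pos.2 hp0)
  have hrew : w.re = α * β / 2 * κ := by
    rw [hw, div_eq_mul_one_div, Complex.re_ofReal_mul]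
  have hpb := psi_bound hb w
  rw [norm_mul, norm_mul, norm_mul, Complex.norm_exp]
  have hre : (-(((α ^ 2 / 4 : ℝ) : ℂ) / p) + -(((β ^ 2 / 4 : ℝ) : ℂ) / p)).re = -((α ^ 2 + β ^ 2) / 4 * κ) := by
    rw [Complex.add_re, Complex.neg_re, Complex.neg_re, div_eq_mul_one_div ((α ^ 2 / 4 : ℝ) : ℂ) p, div_eq_mul_one_div ((β ^ 2 / 4 : ℝ) : ℂ) p, Complex.re_ofReal_mul, Complex.re_ofReal_mul]
    ring
  rw [hre]
  have hcp : ‖(1 / p) ^ (b : ℂ)‖ = ‖p‖ ^ (-b) := by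
    rw [Complex.norm_cpow_real, norm_div, norm_one, one_div, Real.inv_rpow (norm_nonneg _), Real.rpow_neg (norm_nonneg _)]
  rw [hcp]
  have habs : |w.re| = α * β / 2 * κ := by rw [hrew, abs_of_nonneg (by positivity)]
  rw [habs] at hpb
  have h12 : ‖(1 / 2 : ℂ)‖ ≤ 1 := by norm_num
  have hexp : Real.exp (-((α ^ 2 + β ^ 2) / 4 * κ)) * ‖Psi b (w ^ 2 / 4)‖ ≤ (Real.Gamma b)⁻¹ := by
    calc _ ≤ Real.exp (-((α ^ 2 + β ^ 2) / 4 * κ)) * ((Real.Gamma b)⁻¹ * Real.exp (α * β / 2 * κ)) := by gcongr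
      _ = (Real.Gamma b)⁻¹ * Real.exp (-((α - β) ^ 2 / 4 * κ)) := by
        rw [mul_left_comm, ← Real.exp_add]; congr 2; ring
      _ ≤ (Real.Gamma b)⁻¹ * 1 := by
        gcongr
        rw [Real.exp_le_one_iff]
        have : 0 ≤ (α - β) ^ 2 / 4 * κ := by positivity
        linarith
      _ = _ := mul_one _
  calc _ ≤ 1 * (‖p‖ ^ (-b) * (Real.Gamma b)⁻¹) := by gcongr
    _ = _ := by ring

def SaP (a z ζ t : ℝ) : ℂ :=
  (Complex.exp (-Complex.I * ((Real.sign t : ℝ) : ℂ) * (((a + 1) * Real.pi / 4 : ℝ) : ℂ)) /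
      (((2 * |t|) ^ ((a + 1) / 2) : ℝ) : ℂ)) * (((2 : ℝ) ^ ((1 - a) / 2) : ℝ) : ℂ) *
    Psi ((a + 1) / 2) (-(((z / (2 * |t|) * ζ) ^ 2 / 4 : ℝ) : ℂ)) *
    Complex.exp (Complex.I * ((z ^ 2 + ζ ^ 2 : ℝ) : ℂ) / ((4 * t : ℝ) : ℂ))

lemma saK_eq (a : ℝ) {z ζ t : ℝ} (hz : 0 < z) (hζ : 0 < ζ) (ht : t ≠ 0) :
    SaK a z ζ t = SaP a z ζ t := by
  unfold SaK SaP
  have ht' : 0 < |t| := abs_pos.2 ht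
  set s : ℝ := z * ζ / (2 * |t|) with hs
  have hs0 : 0 < s := by positivity
  have e : z / (2 * |t|) * ζ = s := by rw [hs]; ring
  rw [e]
  congr 1
  simp only [mul_assoc (_ / _)]
  congr 1
  unfold besselJ Psi
  rw [Complex.ofReal_tsum, ← tsum_mul_left, ← tsum_mul_left]
  refine tsum_congr fun k => ?_
  have h1 : s ^ ((1 - a) / 2) * (s / 2) ^ (2 * (k : ℝ) + (a - 1) / 2) = 2 ^ ((1 - a) / 2) * (s ^ 2 / 4) ^ k := by
    rw [Real.rpow_add (by positivity), Real.div_rpow hs0.le (by norm_num) ((a - 1) / 2), show (1 - a) / 2 = - ((a - 1) / 2) by ring,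
      Real.rpow_neg hs0.le, Real.rpow_neg (by norm_num), Real.rpow_mul (by positivity), Real.rpow_natCast,
      show (s / 2) ^ (2 : ℝ) = s ^ 2 / 4 by rw [show (2:ℝ) = ((2:ℕ):ℝ) by norm_num, Real.rpow_natCast]; push_cast; ring]
    have := Real.rpow_pos_of_pos hs0 ((a - 1) / 2)
    have := Real.rpow_pos_of_pos (two_pos (α := ℝ)) ((a - 1) / 2)
    field_simp
  rw [show (k : ℝ) + (a - 1) / 2 + 1 = k + (a + 1) / 2 by ring]
  have h2 := congrArg (fun x : ℝ => (x : ℂ)) h1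
  push_cast at h2 ⊢
  rw [← neg_one_mul ((s : ℂ) ^ 2 / 4), mul_pow]
  linear_combination ((-1) ^ k / ((k.factorial : ℂ) * (Real.Gamma (k + (a + 1) / 2) : ℂ))) * h2

lemma psi_conj_real (b x : ℝ) : (starRingEnd ℂ) (Psi b (x : ℂ)) = Psi b x := by
  unfold Psi
  rw [Complex.conj_tsum]
  refine tsum_congr fun k => ?_
  simp

lemma psi_neg_bound {b : ℝ} (hb : 1 / 2 ≤ b) (x : ℝ) : ‖Psi b (-((x ^ 2 / 4 : ℝ) : ℂ))‖ ≤ (Real.Gamma b)⁻¹ := by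
  have := psi_bound hb (Complex.I * x)
  rw [mul_pow, Complex.I_sq] at this
  simpa [neg_div] using this

def cS (a : ℝ) : ℝ := 2 ^ ((1 - a) / 2) * (Real.Gamma ((a + 1) / 2))⁻¹

lemma norm_phase (x y : ℝ) : ‖Complex.exp (Complex.I * (x : ℂ) / (y : ℂ))‖ = 1 := by
  rw [mul_div_assoc, ← Complex.ofReal_div, mul_comm, Complex.norm_exp_ofReal_mul_I]

lemma norm_phase2 (x y : ℝ) : ‖Complex.exp (-Complex.I * (x : ℂ) * (y : ℂ))‖ = 1 := by
  rw [show -Complex.I * (x : ℂ) * (y : ℂ) = ((-(x * y) : ℝ) : ℂ) * Complex.I by push_cast; ring, Complex.norm_exp_ofReal_mul_I]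

lemma cS_pos {a : ℝ} (ha : 0 ≤ a) : 0 < cS a := by
  have := Real.Gamma_pos_of_pos (show 0 < (a + 1) / 2 by linarith)
  unfold cS; positivity

lemma saP_norm_le {a : ℝ} (ha : 0 ≤ a) (z ζ t : ℝ) : ‖SaP a z ζ t‖ ≤ cS a * ((2 * |t|) ^ ((a + 1) / 2))⁻¹ := by
  unfold SaP cS
  have h1 := psi_neg_bound (b := (a + 1) / 2) (by linarith) (z / (2 * |t|) * ζ)
  rw [norm_mul, norm_mul, norm_mul, norm_phase, norm_div, norm_phase2, Complex.norm_real, Complex.norm_real,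
    Real.norm_of_nonneg (by positivity), Real.norm_of_nonneg (by positivity)]
  calc _ ≤ 1 / (2 * |t|) ^ ((a + 1) / 2) * 2 ^ ((1 - a) / 2) * (Real.Gamma ((a + 1) / 2))⁻¹ * 1 := by gcongr
    _ = _ := by ring

lemma measurable_sign : Measurable Real.sign := by
  unfold Real.sign
  exact Measurable.ite (measurableSet_lt measurable_id measurable_const) measurable_const
    (Measurable.ite (measurableSet_lt measurable_const measurable_id) measurable_const measurable_const)

lemma saP_meas {a : ℝ} (ha : 0 ≤ a) (z : ℝ) : Measurable fun p : ℝ × ℝ => SaP a z p.1 p.2 := by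
  unfold SaP
  have h := (psi_continuous (b := (a + 1) / 2) (by linarith)).measurable
  have h2 := measurable_sign
  fun_prop

lemma saP_kernel {a : ℝ} (ha : 0 ≤ a) {z : ℝ} (hz : 0 ≤ z) {ε : ℝ} (hε : 0 < ε) {t t' : ℝ} (ht : t ≠ 0) (ht' : t' ≠ 0) (htt : t ≠ t') :
    ‖∫ ζ in Set.Ioi (0:ℝ), (SaP a z ζ t * (starRingEnd ℂ) (SaP a z ζ t')) * (((Real.exp (-(ε * ζ ^ 2)) : ℝ) : ℂ) * ((ζ ^ a : ℝ) : ℂ))‖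
      ≤ 2 ^ (1 - a) * (Real.Gamma ((a + 1) / 2))⁻¹ * |t - t'| ^ (-((a + 1) / 2)) := by
  set b := (a + 1) / 2 with hb
  have hb12 : 1 / 2 ≤ b := by rw [hb]; linarith
  have hG := Real.Gamma_pos_of_pos (show 0 < b by linarith)
  set p : ℂ := (ε : ℂ) + (((1 / (4 * t') - 1 / (4 * t) : ℝ)) : ℂ) * Complex.I with hp
  have hpre : p.re = ε := by simp [hp]
  have hpim : p.im = 1 / (4 * t') - 1 / (4 * t) := by rw [hp]; simp [-Complex.ofReal_sub]
  have T := abs_pos.2 ht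
  have T' := abs_pos.2 ht'
  have W := weber_bound hb12 (z / (2 * |t|)) (z / (2 * |t'|)) (by positivity) (by positivity) (p := p) (by rw [hpre]; exact hε)
  set c : ℝ → ℂ := fun t => (Complex.exp (-Complex.I * ((Real.sign t : ℝ) : ℂ) * (((a + 1) * Real.pi / 4 : ℝ) : ℂ)) /
      (((2 * |t|) ^ b : ℝ) : ℂ)) * (((2 : ℝ) ^ ((1 - a) / 2) : ℝ) : ℂ) * Complex.exp (Complex.I * ((z ^ 2 : ℝ) : ℂ) / ((4 * t : ℝ) : ℂ)) with hc
  have hcn : ∀ t, ‖c t‖ = ((2 * |t|) ^ b)⁻¹ * 2 ^ ((1 - a) / 2) := by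
    intro t
    simp only [hc]
    rw [norm_mul, norm_mul, norm_phase, norm_div, norm_phase2, Complex.norm_real, Complex.norm_real,
      Real.norm_of_nonneg (by positivity), Real.norm_of_nonneg (by positivity)]
    ring
  have e : ∀ ζ : ℝ, (SaP a z ζ t * (starRingEnd ℂ) (SaP a z ζ t')) * (((Real.exp (-(ε * ζ ^ 2)) : ℝ) : ℂ) * ((ζ ^ a : ℝ) : ℂ))
      = (c t * (starRingEnd ℂ) (c t')) * ((Psi b (-(((z / (2 * |t|) * ζ) ^ 2 / 4 : ℝ) : ℂ)) * Psi b (-(((z / (2 * |t'|) * ζ) ^ 2 / 4 : ℝ) : ℂ))) *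
      (((ζ ^ (2 * b - 1) : ℝ) : ℂ) * Complex.exp (-(p * (ζ : ℂ) ^ 2)))) := by
    intro ζ
    have hab : 2 * b - 1 = a := by rw [hb]; ring
    rw [hab]
    have e1 : SaP a z ζ t = c t * Psi b (-(((z / (2 * |t|) * ζ) ^ 2 / 4 : ℝ) : ℂ)) * Complex.exp (Complex.I * ((ζ ^ 2 : ℝ) : ℂ) / ((4 * t : ℝ) : ℂ)) := by
      simp only [hc, SaP, ← hb]
      rw [Complex.ofReal_add, mul_add, add_div, Complex.exp_add]
      ring
    have e2 : (starRingEnd ℂ) (SaP a z ζ t') = (starRingEnd ℂ) (c t') * Psi b (-(((z / (2 * |t'|) * ζ) ^ 2 / 4 : ℝ) : ℂ)) * Complex.exp (-Complex.I * ((ζ ^ 2 : ℝ) : ℂ) / ((4 * t' : ℝ) : ℂ)) := by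
      have e1 : SaP a z ζ t' = c t' * Psi b (-(((z / (2 * |t'|) * ζ) ^ 2 / 4 : ℝ) : ℂ)) * Complex.exp (Complex.I * ((ζ ^ 2 : ℝ) : ℂ) / ((4 * t' : ℝ) : ℂ)) := by
        simp only [hc, SaP, ← hb]
        rw [Complex.ofReal_add, mul_add, add_div, Complex.exp_add]
        ring
      rw [e1, map_mul, map_mul, ← Complex.ofReal_neg, psi_conj_real, ← Complex.exp_conj]
      congr 2
      rw [map_div₀, map_mul, Complex.conj_I, Complex.conj_ofReal, Complex.conj_ofReal]
    have e3 : Complex.exp (-(p * (ζ : ℂ) ^ 2)) = Complex.exp (Complex.I * ((ζ ^ 2 : ℝ) : ℂ) / ((4 * t : ℝ) : ℂ)) * Complex.exp (-Complex.I * ((ζ ^ 2 : ℝ) : ℂ) / ((4 * t' : ℝ) : ℂ)) * ((Real.exp (-(ε * ζ ^ 2)) : ℝ) : ℂ) := by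
      rw [Complex.ofReal_exp, ← Complex.exp_add, ← Complex.exp_add]
      congr 1
      rw [hp]; push_cast
      ring
    rw [e1, e2, e3]
    ring
  simp_rw [e]
  rw [integral_const_mul, norm_mul, norm_mul, RCLike.norm_conj, hcn, hcn]
  have hpn : |t - t'| / (4 * |t| * |t'|) ≤ ‖p‖ := by
    refine le_trans (le_of_eq ?_) (Complex.abs_im_le_norm p)
    rw [hpim, show 1 / (4 * t') - 1 / (4 * t) = (t - t') / (4 * t * t') by field_simp, abs_div, abs_mul, abs_mul]
    norm_num
  have hd : 0 < |t - t'| := abs_pos.2 (sub_ne_zero.2 htt)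
  have hpb : ‖p‖ ^ (-b) ≤ (|t - t'| / (4 * |t| * |t'|)) ^ (-b) :=
    Real.rpow_le_rpow_of_nonpos (by positivity) hpn (by linarith)
  have h2 : (2:ℝ) ^ ((1 - a) / 2) * 2 ^ ((1 - a) / 2) = 2 ^ (1 - a) := by
    rw [← Real.rpow_add two_pos]; congr 1; ring
  have h3 : ((2 * |t|) ^ b)⁻¹ * ((2 * |t'|) ^ b)⁻¹ * (|t - t'| / (4 * |t| * |t'|)) ^ (-b) = |t - t'| ^ (-b) := by
    rw [← mul_inv, ← Real.mul_rpow (by positivity) (by positivity), Real.div_rpow (by positivity) (by positivity),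
      ← Real.rpow_neg (by positivity), show 2 * |t| * (2 * |t'|) = 4 * |t| * |t'| by ring]
    field_simp
  calc _ ≤ ((2 * |t|) ^ b)⁻¹ * 2 ^ ((1 - a) / 2) * (((2 * |t'|) ^ b)⁻¹ * 2 ^ ((1 - a) / 2)) * ((Real.Gamma b)⁻¹ * (|t - t'| / (4 * |t| * |t'|)) ^ (-b)) := by
        gcongr
        exact W.trans (by gcongr)
    _ = (2:ℝ) ^ ((1 - a) / 2) * 2 ^ ((1 - a) / 2) * (Real.Gamma b)⁻¹ * (((2 * |t|) ^ b)⁻¹ * ((2 * |t'|) ^ b)⁻¹ * (|t - t'| / (4 * |t| * |t'|)) ^ (-b)) := by ring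
    _ = _ := by rw [h2, h3]

lemma lintegral_abs_le (φ : ℝ → ℝ≥0∞) (hφ : Measurable φ) :
    ∫⁻ u : ℝ, φ |u| = 2 * ∫⁻ u in Set.Ioi (0:ℝ), φ u := by
  have hm : Measurable fun u : ℝ => φ |u| := by fun_prop
  rw [← lintegral_add_compl _ (measurableSet_Ioi (a := (0:ℝ))), Set.compl_Ioi, two_mul]
  congr 1
  · exact setLIntegral_congr_fun measurableSet_Ioi fun u hu => by rw [abs_of_pos hu]
  · have := (Measure.measurePreserving_neg (volume : Measure ℝ)).setLIntegral_comp_preimage (measurableSet_Iic (a := (0:ℝ))) hm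
    rw [← this]
    simp only [Set.neg_preimage, abs_neg, Set.neg_Iic, neg_zero]
    rw [setLIntegral_congr Ioi_ae_eq_Ici.symm]
    exact setLIntegral_congr_fun measurableSet_Ioi fun u hu => by rw [abs_of_pos hu]

lemma lint_near {β R : ℝ} (hβ : β < 1) (hR : 0 < R) :
    ∫⁻ u in Set.Ioc 0 R, ENNReal.ofReal (u ^ (-β)) = ENNReal.ofReal (R ^ (1 - β) / (1 - β)) := by
  have hi : IntegrableOn (fun u : ℝ => u ^ (-β)) (Set.Ioc 0 R) := by
    have := intervalIntegral.intervalIntegrable_rpow' (a := 0) (b := R) (r := -β) (by linarith)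
    rwa [intervalIntegrable_iff_integrableOn_Ioc_of_le hR.le] at this
  rw [← ofReal_integral_eq_lintegral_ofReal hi, ← intervalIntegral.integral_of_le hR.le, integral_rpow (Or.inl (by linarith))]
  · rw [Real.zero_rpow (by linarith)]; congr 1
    rw [show -β + 1 = 1 - β by ring]; ring
  · filter_upwards [ae_restrict_mem measurableSet_Ioc] with u hu
    exact Real.rpow_nonneg hu.1.le _

lemma lint_far {R : ℝ} (hR : 0 < R) :
    ∫⁻ u in Set.Ioi R, ENNReal.ofReal (u ^ (-2:ℝ)) = ENNReal.ofReal (R⁻¹) := by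
  rw [← ofReal_integral_eq_lintegral_ofReal (integrableOn_Ioi_rpow_of_lt (by norm_num) hR), integral_Ioi_rpow_of_lt (by norm_num) hR]
  · congr 1
    norm_num [Real.rpow_neg_one]
  · filter_upwards [ae_restrict_mem measurableSet_Ioi] with u hu
    exact Real.rpow_nonneg (hR.le.trans (le_of_lt hu)) _

def hK (β u : ℝ) : ℝ≥0∞ := ENNReal.ofReal (|u| ^ (-β))

lemma hK_meas (β : ℝ) : Measurable (hK β) := by unfold hK; fun_prop

lemma hK_near {β R : ℝ} (hβ : β < 1) (hR : 0 < R) (t : ℝ) :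
    ∫⁻ s : ℝ, (if |t - s| ≤ R then hK β (t - s) else 0) = 2 * ENNReal.ofReal (R ^ (1 - β) / (1 - β)) := by
  rw [lintegral_sub_left_eq_self (fun u => if |u| ≤ R then hK β u else 0) t]
  unfold hK
  have hm : Measurable fun v : ℝ => if v ≤ R then ENNReal.ofReal (v ^ (-β)) else 0 :=
    Measurable.ite measurableSet_Iic (by fun_prop) measurable_const
  rw [lintegral_abs_le (fun v => if v ≤ R then ENNReal.ofReal (v ^ (-β)) else 0) hm, ← lint_near hβ hR]
  congr 1
  rw [← Set.Ioi_inter_Iic, Set.inter_comm, ← Measure.restrict_restrict measurableSet_Iic, ← lintegral_indicator measurableSet_Iic]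
  · rfl

lemma hK_far {β R q : ℝ} (hq : 0 < q) (hβ : β * q = 2) (hR : 0 < R) (t : ℝ) :
    ∫⁻ s : ℝ, (if |t - s| ≤ R then 0 else hK β (t - s)) ^ q = 2 * ENNReal.ofReal (R⁻¹) := by
  rw [lintegral_sub_left_eq_self (fun u => (if |u| ≤ R then 0 else hK β u) ^ q) t]
  unfold hK
  have hm : Measurable fun v : ℝ => (if v ≤ R then 0 else ENNReal.ofReal (v ^ (-β))) ^ q :=
    (Measurable.ite measurableSet_Iic measurable_const (by fun_prop)).pow_const _
  rw [lintegral_abs_le (fun v => (if v ≤ R then 0 else ENNReal.ofReal (v ^ (-β))) ^ q) hm, ← lint_far hR]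
  congr 1
  have : Set.Ioi R = Set.Ioi R ∩ Set.Ioi 0 := by
    rw [Set.Ioi_inter_Ioi, max_eq_left hR.le]
  rw [this, ← Measure.restrict_restrict (measurableSet_Ioi (a := R)), ← lintegral_indicator (measurableSet_Ioi (a := R))]
  refine setLIntegral_congr_fun measurableSet_Ioi fun v hv => ?_
  have hv0 : 0 < v := hv
  simp only [Set.indicator, Set.mem_Ioi]
  by_cases h : v ≤ R
  · rw [if_pos h, if_neg (not_lt.2 h), ENNReal.zero_rpow_of_pos hq]
  · rw [if_neg h, if_pos (not_le.1 h), ENNReal.ofReal_rpow_of_nonneg (by positivity) hq.le, ← Real.rpow_mul hv0.le]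
    congr 2; linarith

lemma hls_inner {β q p : ℝ} (hq : 2 < q) (hβ : β = 2 / q) (hp : p = q / (q - 1)) (h : ℝ → ℝ≥0∞) (hh : Measurable h)
    (hN : ∫⁻ s, h s ^ p ≤ 2) (t : ℝ) (ht : h t ≠ ∞) :
    h t * ∫⁻ s, (if h s ≤ h t then h s * hK β (t - s) else 0) ≤ (2 * ENNReal.ofReal (1 / (1 - β)) + 4) * h t ^ p := by
  have hq1 : 0 < q - 1 := by linarith
  have hp1 : 1 < p := by rw [hp, lt_div_iff₀ hq1]; linarith
  have hβ1 : β < 1 := by rw [hβ, div_lt_one (by linarith)]; exact hq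
  have hc : p.HolderConjugate q := by
    rw [hp]; exact (Real.HolderConjugate.conjExponent (by linarith : 1 < q)).symm
  by_cases h0 : h t = 0
  · simp [h0]
  set l : ℝ := (h t).toReal with hl
  have hl0 : 0 < l := ENNReal.toReal_pos h0 ht
  have hle : h t = ENNReal.ofReal l := (ENNReal.ofReal_toReal ht).symm
  set R : ℝ := l ^ (-p) with hR
  have hR0 : 0 < R := by positivity
  have hpq : p / q = p - 1 := by rw [hp]; field_simp; ring
  have hne : q ≠ 0 := by linarith
  have s1 : ∫⁻ s, (if h s ≤ h t then h s * hK β (t - s) else 0) ≤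
      (∫⁻ s, h t * (if |t - s| ≤ R then hK β (t - s) else 0)) + ∫⁻ s, (h * fun s => (if |t - s| ≤ R then 0 else hK β (t - s))) s := by
    rw [← lintegral_add_right]
    · refine lintegral_mono fun s => ?_
      simp only [Pi.mul_apply]
      by_cases h1 : h s ≤ h t
      · by_cases h2 : |t - s| ≤ R
        · simp only [h1, h2, if_true]; simp; gcongr
        · simp only [h1, h2, if_true, if_false]; simp
      · simp [h1]
    · refine hh.mul (Measurable.ite (measurableSet_le (by fun_prop) measurable_const) measurable_const ?_)
      exact (hK_meas β).comp (by fun_prop)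
  have mk1 : Measurable fun s => (if |t - s| ≤ R then hK β (t - s) else 0) :=
    (Measurable.ite (measurableSet_le (by fun_prop) measurable_const) ((hK_meas β).comp (by fun_prop)) measurable_const)
  have mk2 : Measurable fun s => (if |t - s| ≤ R then 0 else hK β (t - s)) :=
    (Measurable.ite (measurableSet_le (by fun_prop) measurable_const) measurable_const ((hK_meas β).comp (by fun_prop)))
  have s2 := ENNReal.lintegral_mul_le_Lp_mul_Lq volume hc hh.aemeasurable mk2.aemeasurable
  rw [lintegral_const_mul _ mk1, hK_near hβ1 hR0] at s1
  rw [hK_far (by linarith) (by rw [hβ]; field_simp) hR0] at s2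
  have s3 : (∫⁻ s, h s ^ p) ^ (1 / p) ≤ 2 := by
    calc _ ≤ (2 : ℝ≥0∞) ^ (1 / p) := by gcongr
      _ ≤ 2 ^ (1:ℝ) := by
        refine ENNReal.rpow_le_rpow_of_exponent_le (by norm_num) ?_
        rw [div_le_one (by linarith)]; linarith
      _ = 2 := by simp
  have s4 : (2 * ENNReal.ofReal R⁻¹) ^ (1 / q) ≤ 2 * ENNReal.ofReal (l ^ (p - 1)) := by
    rw [ENNReal.mul_rpow_of_nonneg _ _ (by positivity)]
    gcongr
    · calc (2:ℝ≥0∞) ^ (1 / q) ≤ 2 ^ (1:ℝ) := by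
            refine ENNReal.rpow_le_rpow_of_exponent_le (by norm_num) ?_
            rw [div_le_one (by linarith)]; linarith
        _ = 2 := by simp
    · rw [ENNReal.ofReal_rpow_of_nonneg (by positivity) (by positivity), hR, ← Real.rpow_neg hl0.le, ← Real.rpow_mul hl0.le, ← hpq]
      apply le_of_eq; congr 2; ring
  have s5 : h t * (2 * ENNReal.ofReal (R ^ (1 - β) / (1 - β))) = 2 * ENNReal.ofReal (1 / (1 - β)) * ENNReal.ofReal (l ^ (p - 1)) := by
    have hb1 : 0 < 1 - β := by linarith
    have : ENNReal.ofReal (l * (R ^ (1 - β) / (1 - β))) = ENNReal.ofReal (1 / (1 - β) * l ^ (p - 1)) := by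
      congr 1
      have e1 : l * R ^ (1 - β) = l ^ (p - 1) := by
        rw [hR, ← Real.rpow_mul hl0.le, mul_comm, ← Real.rpow_add_one hl0.ne']
        congr 1
        have : p * β = 2 * (p - 1) := by rw [← hpq, hβ]; field_simp
        linarith
      rw [← e1]; ring
    rw [mul_left_comm, hle, ← ENNReal.ofReal_mul hl0.le, this, ENNReal.ofReal_mul (by positivity), mul_assoc]
  have s6 : ∫⁻ s, (if h s ≤ h t then h s * hK β (t - s) else 0) ≤ (2 * ENNReal.ofReal (1 / (1 - β)) + 4) * ENNReal.ofReal (l ^ (p - 1)) := by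
    refine s1.trans ?_
    rw [s5, add_mul]
    gcongr
    refine s2.trans ?_
    calc _ ≤ 2 * (2 * ENNReal.ofReal (l ^ (p - 1))) := by gcongr
      _ = _ := by rw [← mul_assoc]; norm_num
  have s7 : h t ^ p = h t * ENNReal.ofReal (l ^ (p - 1)) := by
    rw [hle, ← ENNReal.ofReal_mul hl0.le, ENNReal.ofReal_rpow_of_pos hl0]
    congr 1
    rw [mul_comm, ← Real.rpow_add_one hl0.ne']; congr 1; ring
  calc _ ≤ h t * ((2 * ENNReal.ofReal (1 / (1 - β)) + 4) * ENNReal.ofReal (l ^ (p - 1))) := by gcongr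
    _ = _ := by rw [s7]; ring

lemma hls_self {β q p : ℝ} (hq : 2 < q) (hβ : β = 2 / q) (hp : p = q / (q - 1)) (h : ℝ → ℝ≥0∞) (hh : Measurable h)
    (hN : ∫⁻ s, h s ^ p ≤ 2) :
    ∫⁻ t, ∫⁻ s, h s * h t * hK β (t - s) ≤ 4 * (2 * ENNReal.ofReal (1 / (1 - β)) + 4) := by
  have hq1 : 0 < q - 1 := by linarith
  have hp1 : 1 < p := by rw [hp, lt_div_iff₀ hq1]; linarith
  set c := (2 * ENNReal.ofReal (1 / (1 - β)) + 4)
  have hfin : ∀ᵐ t, h t ≠ ∞ := by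
    have := ae_lt_top (hh.pow_const p) (ne_top_of_le_ne_top (by norm_num) hN)
    filter_upwards [this] with t ht h1
    rw [h1, ENNReal.top_rpow_of_pos (by linarith)] at ht
    exact lt_irrefl _ ht
  have hkm : Measurable fun z : ℝ × ℝ => hK β (z.1 - z.2) := (hK_meas β).comp (by fun_prop)
  have hm1 : Measurable fun z : ℝ × ℝ => (if h z.2 ≤ h z.1 then h z.2 * h z.1 * hK β (z.1 - z.2) else 0) :=
    Measurable.ite (measurableSet_le (by fun_prop) (by fun_prop)) (by fun_prop) measurable_const
  have hm2 : Measurable fun z : ℝ × ℝ => (if h z.1 ≤ h z.2 then h z.2 * h z.1 * hK β (z.1 - z.2) else 0) :=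
    Measurable.ite (measurableSet_le (by fun_prop) (by fun_prop)) (by fun_prop) measurable_const
  have A : ∫⁻ t, ∫⁻ s, (if h s ≤ h t then h s * h t * hK β (t - s) else 0) ≤ c * 2 := by
    calc _ ≤ ∫⁻ t, c * h t ^ p := by
          refine lintegral_mono_ae ?_
          filter_upwards [hfin] with t ht
          refine le_trans (le_of_eq ?_) (hls_inner hq hβ hp h hh hN t ht)
          rw [← lintegral_const_mul]
          · refine lintegral_congr fun s => ?_
            split_ifs
            · ring
            · simp
          · exact Measurable.ite (measurableSet_le (by fun_prop) (by fun_prop)) (hh.mul ((hK_meas β).comp (by fun_prop))) measurable_const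
      _ = c * ∫⁻ t, h t ^ p := by rw [lintegral_const_mul _ (hh.pow_const p)]
      _ ≤ _ := by gcongr
  have B : ∫⁻ t, ∫⁻ s, (if h t ≤ h s then h s * h t * hK β (t - s) else 0) ≤ c * 2 := by
    rw [lintegral_lintegral_swap hm2.aemeasurable]
    refine le_trans (le_of_eq ?_) A
    refine lintegral_congr fun t => lintegral_congr fun s => ?_
    have : hK β (s - t) = hK β (t - s) := by unfold hK; rw [abs_sub_comm]
    rw [this, mul_comm (h t)]
  calc _ ≤ ∫⁻ t, ((∫⁻ s, (if h s ≤ h t then h s * h t * hK β (t - s) else 0)) + ∫⁻ s, (if h t ≤ h s then h s * h t * hK β (t - s) else 0)) := by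
        refine lintegral_mono fun t => ?_
        have hmt : Measurable fun s => (if h s ≤ h t then h s * h t * hK β (t - s) else 0) := hm1.comp (by fun_prop : Measurable fun s : ℝ => (t, s))
        rw [← lintegral_add_left hmt]
        refine lintegral_mono fun s => ?_
        rcases le_total (h s) (h t) with h1 | h1 <;> simp [h1]
    _ = (∫⁻ t, (∫⁻ s, (if h s ≤ h t then h s * h t * hK β (t - s) else 0))) + ∫⁻ t, ∫⁻ s, (if h t ≤ h s then h s * h t * hK β (t - s) else 0) :=
        lintegral_add_left (hm1.lintegral_prod_right') _
    _ ≤ c * 2 + c * 2 := by gcongr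
    _ = _ := by ring

lemma hls {β q p : ℝ} (hq : 2 < q) (hβ : β = 2 / q) (hp : p = q / (q - 1)) (f g : ℝ → ℝ≥0∞) (hf : Measurable f) (hg : Measurable g) :
    ∫⁻ t, ∫⁻ s, f s * g t * hK β (t - s) ≤ (4 * (2 * ENNReal.ofReal (1 / (1 - β)) + 4)) * ((∫⁻ s, f s ^ p) ^ (1 / p) * (∫⁻ s, g s ^ p) ^ (1 / p)) := by
  have hq1 : 0 < q - 1 := by linarith
  have hp1 : 1 < p := by rw [hp, lt_div_iff₀ hq1]; linarith
  have hp0 : 0 < p := by linarith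
  set c := (4 * (2 * ENNReal.ofReal (1 / (1 - β)) + 4))
  have hc0 : c ≠ 0 := by simp [c]
  have zero : ∀ f : ℝ → ℝ≥0∞, Measurable f → (∫⁻ s, f s ^ p) ^ (1 / p) = 0 → ∀ᵐ s, f s = 0 := by
    intro f hf h
    rw [ENNReal.rpow_eq_zero_iff_of_pos (by positivity), lintegral_eq_zero_iff (hf.pow_const p)] at h
    filter_upwards [h] with s hs
    simpa [hp0, hp0.le, hp0.not_gt] using hs
  by_cases hf0 : (∫⁻ s, f s ^ p) ^ (1 / p) = 0
  · have : ∫⁻ t, ∫⁻ s, f s * g t * hK β (t - s) = 0 := by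
      rw [← lintegral_zero]
      refine lintegral_congr fun t => ?_
      refine (lintegral_eq_zero_iff' ?_).2 ?_
      · have := (hK_meas β).comp (by fun_prop : Measurable fun s : ℝ => t - s)
        exact ((hf.mul_const _).mul this).aemeasurable
      · filter_upwards [zero f hf hf0] with s hs; simp [hs]
    rw [this]; exact zero_le
  by_cases hg0 : (∫⁻ s, g s ^ p) ^ (1 / p) = 0
  · have : ∫⁻ t, ∫⁻ s, f s * g t * hK β (t - s) = 0 := by
      rw [← lintegral_zero]
      refine lintegral_congr_ae ?_
      filter_upwards [zero g hg hg0] with t ht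
      simp [ht]
    rw [this]; exact zero_le
  by_cases hf1 : (∫⁻ s, f s ^ p) ^ (1 / p) = ∞
  · rw [hf1, ENNReal.top_mul hg0, ENNReal.mul_top hc0]; exact le_top
  by_cases hg1 : (∫⁻ s, g s ^ p) ^ (1 / p) = ∞
  · rw [hg1, ENNReal.mul_top hf0, ENNReal.mul_top hc0]; exact le_top
  set Nf := (∫⁻ s, f s ^ p) ^ (1 / p) with hNf
  set Ng := (∫⁻ s, g s ^ p) ^ (1 / p) with hNg
  have nrm : ∀ f : ℝ → ℝ≥0∞, Measurable f → ∀ N, N = (∫⁻ s, f s ^ p) ^ (1 / p) → N ≠ 0 → N ≠ ∞ → ∫⁻ s, (f s * N⁻¹) ^ p ≤ 1 := by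
    intro f hf N hN h0 h1
    have e : N ^ p = ∫⁻ s, f s ^ p := by
      rw [hN, ← ENNReal.rpow_mul, one_div, inv_mul_cancel₀ hp0.ne', ENNReal.rpow_one]
    have : ∀ s, (f s * N⁻¹) ^ p = f s ^ p * (N ^ p)⁻¹ := fun s => by
      rw [ENNReal.mul_rpow_of_nonneg _ _ hp0.le, ENNReal.inv_rpow]
    simp_rw [this]
    rw [lintegral_mul_const _ (hf.pow_const p), ← e]
    exact ENNReal.mul_inv_le_one _
  have key := hls_self hq hβ hp (fun s => max (f s * Nf⁻¹) (g s * Ng⁻¹)) ((hf.mul_const _).max (hg.mul_const _)) (by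
    calc _ ≤ ∫⁻ s, ((f s * Nf⁻¹) ^ p + (g s * Ng⁻¹) ^ p) := by
          refine lintegral_mono fun s => ?_
          rcases max_cases (f s * Nf⁻¹) (g s * Ng⁻¹) with h | h
          · simp only [h.1]; exact le_self_add
          · simp only [h.1]; exact le_add_self
      _ = (∫⁻ s, (f s * Nf⁻¹) ^ p) + ∫⁻ s, (g s * Ng⁻¹) ^ p := lintegral_add_left ((hf.mul_const _).pow_const p) _
      _ ≤ 1 + 1 := add_le_add (nrm f hf _ hNf hf0 hf1) (nrm g hg _ hNg hg0 hg1)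
      _ = 2 := by norm_num)
  have hkm : Measurable fun z : ℝ × ℝ => hK β (z.1 - z.2) := (hK_meas β).comp (by fun_prop)
  have hfg : Measurable fun z : ℝ × ℝ => f z.2 * g z.1 * hK β (z.1 - z.2) := by fun_prop
  have h2 : (∫⁻ t, ∫⁻ s, f s * g t * hK β (t - s)) * (Nf⁻¹ * Ng⁻¹) ≤ c := by
    refine le_trans ?_ key
    rw [← lintegral_mul_const _ hfg.lintegral_prod_right']
    refine lintegral_mono fun t => ?_
    have hmt : Measurable fun s => f s * g t * hK β (t - s) := hfg.comp (by fun_prop : Measurable fun s : ℝ => (t, s))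
    dsimp only
    rw [← lintegral_mul_const _ hmt]
    refine lintegral_mono fun s => ?_
    calc f s * g t * hK β (t - s) * (Nf⁻¹ * Ng⁻¹) = (f s * Nf⁻¹) * (g t * Ng⁻¹) * hK β (t - s) := by ring
      _ ≤ _ := by gcongr; exact le_max_left _ _; exact le_max_right _ _
  rw [← ENNReal.mul_inv (Or.inl hf0) (Or.inl hf1)] at h2
  exact (ENNReal.div_le_iff (mul_ne_zero hf0 hg0) (ENNReal.mul_ne_top hf1 hg1)).1 h2

lemma kint_meas {α γ : Type*} [MeasurableSpace α] [MeasurableSpace γ] (μ : Measure α) [SFinite μ] {k : γ → α → ℂ} (hk : Measurable fun z : γ × α => k z.1 z.2)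
    {f : α → ℂ} (hf : Measurable f) : Measurable fun x => ∫ y, k x y * f y ∂μ := by
  have : StronglyMeasurable (Function.uncurry fun x y => k x y * f y) := by
    refine Measurable.stronglyMeasurable ?_
    simp only [Function.uncurry_def]
    exact hk.mul (hf.comp measurable_snd)
  exact this.integral_prod_right.measurable

lemma marc_level {α : Type*} [MeasurableSpace α] (μ : Measure α) [SFinite μ] {k : α → α → ℂ} (hk : Measurable fun z : α × α => k z.1 z.2)
    {A : ℝ} (hA : 0 < A) (hkA : ∀ x y, ‖k x y‖ ≤ A)
    (hL2 : ∀ f : α → ℂ, Measurable f → Integrable f μ → ∫⁻ x, ‖∫ y, k x y * f y ∂μ‖ₑ ^ (2:ℝ) ∂μ ≤ ∫⁻ x, ‖f x‖ₑ ^ (2:ℝ) ∂μ)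
    {p N : ℝ} (hp : 1 < p) (hN : 0 < N) {f : α → ℂ} (hf : Measurable f) (hfi : Integrable f μ)
    (hfN : ∫⁻ x, ‖f x‖ₑ ^ p ∂μ ≤ ENNReal.ofReal N) {l s : ℝ} (hl : 0 < l) (hs : 0 < s) (hls : A * (s ^ (1 - p) * N) ≤ l / 2) :
    μ {x | l < ‖∫ y, k x y * f y ∂μ‖} ≤ ENNReal.ofReal (4 / l ^ 2) * ∫⁻ y, (if ‖f y‖ ≤ s then ENNReal.ofReal (‖f y‖ ^ 2) else 0) ∂μ := by
  set S : Set α := {y | ‖f y‖ ≤ s}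
  have hS : MeasurableSet S := measurableSet_le hf.norm measurable_const
  set g : α → ℂ := S.indicator f
  set h : α → ℂ := Sᶜ.indicator f
  have hg : Measurable g := hf.indicator hS
  have hgi : Integrable g μ := hfi.indicator hS
  have hhi : Integrable h μ := hfi.indicator hS.compl
  have hmul : ∀ u : α → ℂ, Integrable u μ → ∀ x, Integrable (fun y => k x y * u y) μ := by
    intro u hu x
    exact hu.bdd_mul (hk.comp measurable_prodMk_left).aestronglyMeasurable (Eventually.of_forall fun y => hkA x y)
  have hsplit : ∀ x, ∫ y, k x y * f y ∂μ = (∫ y, k x y * g y ∂μ) + ∫ y, k x y * h y ∂μ := by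
    intro x
    rw [← integral_add (hmul g hgi x) (hmul h hhi x)]
    refine integral_congr_ae (Eventually.of_forall fun y => ?_)
    have : g y + h y = f y := by simp only [g, h]; exact Set.indicator_self_add_compl_apply S f y
    simp only [← this]; ring
  have hbig : ∀ x, ‖∫ y, k x y * h y ∂μ‖ ≤ l / 2 := by
    intro x
    have h1 : ‖∫ y, k x y * h y ∂μ‖ₑ ≤ ENNReal.ofReal (l / 2) := by
      calc _ ≤ ∫⁻ y, ‖k x y * h y‖ₑ ∂μ := enorm_integral_le_lintegral_enorm _
        _ ≤ ∫⁻ y, ENNReal.ofReal (A * s ^ (1 - p)) * ‖f y‖ₑ ^ p ∂μ := by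
          refine lintegral_mono fun y => ?_
          by_cases hy : ‖f y‖ ≤ s
          · have : h y = 0 := Set.indicator_of_notMem (by simp [S, hy]) _
            simp [this]
          · have e : h y = f y := Set.indicator_of_mem (by simpa [S] using hy) _
            have hy' : s < ‖f y‖ := not_le.1 hy
            have hf0 : 0 < ‖f y‖ := hs.trans hy'
            rw [e, ← ofReal_norm, ← ofReal_norm, ENNReal.ofReal_rpow_of_pos hf0, ← ENNReal.ofReal_mul (by positivity), norm_mul]
            refine ENNReal.ofReal_le_ofReal ?_
            have h2 : ‖f y‖ ≤ s ^ (1 - p) * ‖f y‖ ^ p := by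
              calc ‖f y‖ = ‖f y‖ ^ (1 - p) * ‖f y‖ ^ p := by rw [← Real.rpow_add hf0]; simp
                _ ≤ _ := by
                  have := Real.rpow_le_rpow_of_nonpos hs hy'.le (show 1 - p ≤ 0 by linarith)
                  gcongr
            calc _ ≤ A * (s ^ (1 - p) * ‖f y‖ ^ p) := by gcongr; exact hkA x y
              _ = _ := by ring
        _ ≤ ENNReal.ofReal (A * s ^ (1 - p)) * ENNReal.ofReal N := by
          rw [lintegral_const_mul _ (by fun_prop)]; gcongr
        _ ≤ _ := by
          rw [← ENNReal.ofReal_mul (by positivity)]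
          refine ENNReal.ofReal_le_ofReal ?_
          linarith
    rw [← ofReal_norm] at h1
    exact (ENNReal.ofReal_le_ofReal_iff (by positivity)).1 h1
  have hsub : {x | l < ‖∫ y, k x y * f y ∂μ‖} ⊆ {x | ENNReal.ofReal (l ^ 2 / 4) ≤ ‖∫ y, k x y * g y ∂μ‖ₑ ^ (2:ℝ)} := by
    intro x hx
    simp only [Set.mem_ofPred_eq] at hx ⊢
    rw [hsplit x] at hx
    have h1 := norm_add_le (∫ y, k x y * g y ∂μ) (∫ y, k x y * h y ∂μ)
    have h2 := hbig x
    have h3 : l / 2 ≤ ‖∫ y, k x y * g y ∂μ‖ := by linarith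
    rw [← ofReal_norm, ENNReal.ofReal_rpow_of_nonneg (norm_nonneg _) (by norm_num)]
    refine ENNReal.ofReal_le_ofReal ?_
    rw [Real.rpow_two]
    nlinarith
  have hl2 : ENNReal.ofReal (l ^ 2 / 4) ≠ 0 := by simp; positivity
  calc _ ≤ μ {x | ENNReal.ofReal (l ^ 2 / 4) ≤ ‖∫ y, k x y * g y ∂μ‖ₑ ^ (2:ℝ)} := measure_mono hsub
    _ ≤ (∫⁻ x, ‖∫ y, k x y * g y ∂μ‖ₑ ^ (2:ℝ) ∂μ) / ENNReal.ofReal (l ^ 2 / 4) :=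
      meas_ge_le_lintegral_div (((kint_meas μ hk hg).enorm).pow_const _).aemeasurable hl2 ENNReal.ofReal_ne_top
    _ ≤ (∫⁻ x, ‖g x‖ₑ ^ (2:ℝ) ∂μ) / ENNReal.ofReal (l ^ 2 / 4) := ENNReal.div_le_div_right (hL2 g hg hgi) _
    _ = _ := by
      rw [div_eq_mul_inv, mul_comm, ← ENNReal.ofReal_inv_of_pos (by positivity), inv_div]
      congr 1
      refine lintegral_congr fun y => ?_
      by_cases hy : ‖f y‖ ≤ s
      · rw [if_pos hy, show g y = f y from Set.indicator_of_mem (show y ∈ S from hy) f, ← ofReal_norm, ENNReal.ofReal_rpow_of_nonneg (norm_nonneg _) (by norm_num), Real.rpow_two]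
      · rw [if_neg hy, show g y = 0 from Set.indicator_of_notMem (show y ∉ S from hy) f]; simp

lemma marc_core {α : Type*} [MeasurableSpace α] (μ : Measure α) [SFinite μ] {k : α → α → ℂ} (hk : Measurable fun z : α × α => k z.1 z.2)
    {A : ℝ} (hA : 0 < A) (hkA : ∀ x y, ‖k x y‖ ≤ A)
    (hL2 : ∀ f : α → ℂ, Measurable f → Integrable f μ → ∫⁻ x, ‖∫ y, k x y * f y ∂μ‖ₑ ^ (2:ℝ) ∂μ ≤ ∫⁻ x, ‖f x‖ₑ ^ (2:ℝ) ∂μ)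
    {r p N : ℝ} (hr : 2 < r) (hp : p = r / (r - 1)) (hN : 0 < N) {f : α → ℂ} (hf : Measurable f) (hfi : Integrable f μ)
    (hfN : ∫⁻ x, ‖f x‖ₑ ^ p ∂μ = ENNReal.ofReal N) :
    ∫⁻ x, ‖∫ y, k x y * f y ∂μ‖ₑ ^ r ∂μ ≤ ENNReal.ofReal (4 * r / (r - 2) * 2 ^ (r - 2) * A ^ (r - 2) * N ^ (r - 1)) := by
  have hr1 : 0 < r - 1 := by linarith
  have hp1 : 1 < p := by rw [hp, lt_div_iff₀ hr1]; linarith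
  have hpr : (p - 1) * (r - 1) = 1 := by rw [hp]; field_simp; ring
  have hTm := kint_meas μ hk hf
  have e1 := lintegral_rpow_eq_lintegral_meas_lt_mul μ (f := fun x => ‖∫ y, k x y * f y ∂μ‖) (Eventually.of_forall fun x => norm_nonneg _) hTm.norm.aemeasurable (p := r) (by linarith)
  have e2 : ∫⁻ x, ‖∫ y, k x y * f y ∂μ‖ₑ ^ r ∂μ = ∫⁻ x, ENNReal.ofReal (‖∫ y, k x y * f y ∂μ‖ ^ r) ∂μ := by
    refine lintegral_congr fun x => ?_
    rw [← ofReal_norm, ENNReal.ofReal_rpow_of_nonneg (norm_nonneg _) (by linarith)]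
  rw [e2, e1]
  set s : ℝ → ℝ := fun l => (2 * A * N / l) ^ (r - 1) with hs
  set G : ℝ → α → ℝ≥0∞ := fun l y => ENNReal.ofReal (4 / l ^ 2 * l ^ (r - 1)) * (if ‖f y‖ ≤ s l then ENNReal.ofReal (‖f y‖ ^ 2) else 0) with hG
  have hGm : Measurable (Function.uncurry G) := by
    simp only [hG, Function.uncurry_def, hs]
    refine Measurable.mul (by fun_prop) (Measurable.ite (measurableSet_le ?_ ?_) ?_ measurable_const)
    · exact (hf.comp measurable_snd).norm
    · fun_prop
    · have := (hf.comp (measurable_snd (α := ℝ))).norm; fun_prop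
  have st1 : ∫⁻ l in Set.Ioi (0:ℝ), μ {x | l < ‖∫ y, k x y * f y ∂μ‖} * ENNReal.ofReal (l ^ (r - 1)) ≤ ∫⁻ l in Set.Ioi (0:ℝ), ∫⁻ y, G l y ∂μ := by
    refine setLIntegral_mono' measurableSet_Ioi fun l hl => ?_
    have hl0 : 0 < l := hl
    have hb : 0 < 2 * A * N / l := by positivity
    have := marc_level μ hk hA hkA hL2 hp1 hN hf hfi hfN.le hl0 (s := s l) (by simp only [hs]; positivity) (by
      simp only [hs]
      rw [← Real.rpow_mul hb.le, show (r - 1) * (1 - p) = -1 by linarith, Real.rpow_neg_one]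
      apply le_of_eq; field_simp)
    simp only [hG]
    rw [lintegral_const_mul, ENNReal.ofReal_mul (by positivity)]
    · calc _ ≤ _ := mul_le_mul_left this _
        _ = _ := by ring
    · exact Measurable.ite (measurableSet_le hf.norm measurable_const) (by fun_prop) measurable_const
  have st2 : ∫⁻ l in Set.Ioi (0:ℝ), ∫⁻ y, G l y ∂μ = ∫⁻ y, (∫⁻ l in Set.Ioi (0:ℝ), G l y) ∂μ :=
    lintegral_lintegral_swap hGm.aemeasurable
  have st3 : ∀ y, ∫⁻ l in Set.Ioi (0:ℝ), G l y ≤ ENNReal.ofReal (4 / (r - 2) * (2 * A * N) ^ (r - 2)) * ‖f y‖ₑ ^ p := by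
    intro y
    rcases (norm_nonneg (f y)).eq_or_lt with h0 | h0
    · have h00 : f y = 0 := norm_eq_zero.1 h0.symm
      simp [hG, h00]
    set L : ℝ := 2 * A * N * ‖f y‖ ^ (1 - p) with hL
    have hL0 : 0 < L := by positivity
    have c1 : ∫⁻ l in Set.Ioi (0:ℝ), G l y ≤ ∫⁻ l in Set.Ioi (0:ℝ), (Set.Iic L).indicator (fun l => ENNReal.ofReal (4 * ‖f y‖ ^ 2) * ENNReal.ofReal (l ^ (-(3 - r)))) l := by
      refine setLIntegral_mono' measurableSet_Ioi fun l hl => ?_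
      have hl0 : 0 < l := hl
      simp only [hG]
      split_ifs with hc
      · have hlL : l ≤ L := by
          have hb : 0 < 2 * A * N / l := by positivity
          have h1 := Real.rpow_le_rpow h0.le hc (show 0 ≤ p - 1 by linarith)
          simp only [hs] at h1
          rw [← Real.rpow_mul hb.le, mul_comm (r - 1), hpr, Real.rpow_one, le_div_iff₀ hl0] at h1
          rw [hL, show 1 - p = -(p - 1) by ring, Real.rpow_neg h0.le, ← div_eq_mul_inv, le_div_iff₀ (by positivity)]
          linarith
        rw [Set.indicator_of_mem (Set.mem_Iic.2 hlL), ← ENNReal.ofReal_mul (by positivity), ← ENNReal.ofReal_mul (by positivity)]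
        refine ENNReal.ofReal_le_ofReal (le_of_eq ?_)
        rw [show -(3 - r) = (r - 1) - 2 by ring, Real.rpow_sub hl0 (r - 1) 2, Real.rpow_two]
        ring
      · simp
    refine c1.trans ?_
    rw [lintegral_indicator measurableSet_Iic, Measure.restrict_restrict measurableSet_Iic, Set.inter_comm, Set.Ioi_inter_Iic,
      lintegral_const_mul _ (by fun_prop), lint_near (by linarith) hL0, ← ENNReal.ofReal_mul (by positivity), ← ofReal_norm,
      ENNReal.ofReal_rpow_of_pos h0, ← ENNReal.ofReal_mul (by have : 0 < r - 2 := by linarith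
                                                              positivity)]
    refine ENNReal.ofReal_le_ofReal (le_of_eq ?_)
    rw [show 1 - (3 - r) = r - 2 by ring, hL, Real.mul_rpow (by positivity) (by positivity), ← Real.rpow_mul h0.le]
    have : ‖f y‖ ^ p = ‖f y‖ ^ 2 * ‖f y‖ ^ ((1 - p) * (r - 2)) := by
      rw [← Real.rpow_two, ← Real.rpow_add h0]; congr 1; linarith
    rw [this]; ring
  have hr2 : 0 < r - 2 := by linarith
  calc _ ≤ ENNReal.ofReal r * ∫⁻ y, ENNReal.ofReal (4 / (r - 2) * (2 * A * N) ^ (r - 2)) * ‖f y‖ₑ ^ p ∂μ := by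
        gcongr
        exact st1.trans (st2.le.trans (lintegral_mono st3))
    _ = _ := by
      rw [lintegral_const_mul _ (by fun_prop), hfN, ← ENNReal.ofReal_mul (by positivity), ← ENNReal.ofReal_mul (by linarith)]
      congr 1
      rw [Real.mul_rpow (by positivity) (by positivity), Real.mul_rpow (by positivity) (by positivity),
        show r - 1 = (r - 2) + 1 by ring, Real.rpow_add_one hN.ne']
      ring

def cM (r : ℝ) : ℝ := if r = 2 then 1 else (4 * r / (r - 2) * 2 ^ (r - 2)) ^ (1 / r)

lemma marc {α : Type*} [MeasurableSpace α] (μ : Measure α) [SFinite μ] {k : α → α → ℂ} (hk : Measurable fun z : α × α => k z.1 z.2)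
    {A : ℝ} (hA : 0 < A) (hkA : ∀ x y, ‖k x y‖ ≤ A)
    (hL2 : ∀ f : α → ℂ, Measurable f → Integrable f μ → ∫⁻ x, ‖∫ y, k x y * f y ∂μ‖ₑ ^ (2:ℝ) ∂μ ≤ ∫⁻ x, ‖f x‖ₑ ^ (2:ℝ) ∂μ)
    {r p : ℝ} (hr : 2 ≤ r) (hp : p = r / (r - 1)) {f : α → ℂ} (hf : Measurable f) (hfi : Integrable f μ) :
    (∫⁻ x, ‖∫ y, k x y * f y ∂μ‖ₑ ^ r ∂μ) ^ (1 / r) ≤ ENNReal.ofReal (cM r * A ^ (1 - 2 / r)) * (∫⁻ x, ‖f x‖ₑ ^ p ∂μ) ^ (1 / p) := by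
  rcases hr.eq_or_lt with h2 | h2
  · subst h2
    have : p = 2 := by rw [hp]; norm_num
    subst this
    simp only [cM, if_true]
    norm_num
    have := hL2 f hf hfi
    simp only [ENNReal.rpow_two] at this ⊢
    gcongr
  have hr1 : 0 < r - 1 := by linarith
  have hr2 : 0 < r - 2 := by linarith
  have hp1 : 1 < p := by rw [hp, lt_div_iff₀ hr1]; linarith
  have hcM : cM r = (4 * r / (r - 2) * 2 ^ (r - 2)) ^ (1 / r) := by rw [cM, if_neg (by linarith)]
  have hcM0 : 0 < cM r := by rw [hcM]; positivity
  by_cases h0 : ∫⁻ x, ‖f x‖ₑ ^ p ∂μ = 0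
  · have hfz : ∀ᵐ x ∂μ, f x = 0 := by
      rw [lintegral_eq_zero_iff (by fun_prop)] at h0
      filter_upwards [h0] with x hx
      simpa [show 0 < p by linarith, show ¬ p < 0 by linarith] using hx
    have : ∀ x, ∫ y, k x y * f y ∂μ = 0 := by
      intro x
      rw [← integral_zero α ℂ (μ := μ)]
      refine integral_congr_ae ?_
      filter_upwards [hfz] with y hy; simp [hy]
    simp [this, show 0 < r by linarith]
  by_cases h1 : ∫⁻ x, ‖f x‖ₑ ^ p ∂μ = ∞
  · rw [h1, ENNReal.top_rpow_of_pos (by positivity), ENNReal.mul_top]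
    · exact le_top
    · simp only [ne_eq, ENNReal.ofReal_eq_zero, not_le]; positivity
  set N := (∫⁻ x, ‖f x‖ₑ ^ p ∂μ).toReal
  have hN : 0 < N := ENNReal.toReal_pos h0 h1
  have hfN : ∫⁻ x, ‖f x‖ₑ ^ p ∂μ = ENNReal.ofReal N := (ENNReal.ofReal_toReal h1).symm
  have key := marc_core μ hk hA hkA hL2 h2 hp hN hf hfi hfN
  calc _ ≤ (ENNReal.ofReal (4 * r / (r - 2) * 2 ^ (r - 2) * A ^ (r - 2) * N ^ (r - 1))) ^ (1 / r) := by gcongr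
    _ = _ := by
      rw [hfN, ENNReal.ofReal_rpow_of_pos hN, ← ENNReal.ofReal_mul (by positivity), ENNReal.ofReal_rpow_of_pos (by positivity)]
      congr 1
      rw [Real.mul_rpow (by positivity) (by positivity), Real.mul_rpow (by positivity) (by positivity), hcM, ← Real.rpow_mul hA.le, ← Real.rpow_mul hN.le]
      congr 2
      · congr 1; field_simp
      · rw [hp]; field_simp

lemma tt_identity {α γ : Type*} [MeasurableSpace α] [MeasurableSpace γ] (μ : Measure α) [SFinite μ] (ν : Measure γ) [SFinite ν]
    {g : α → γ → ℂ} (hg : Measurable fun z : α × γ => g z.1 z.2) {B : γ → ℝ} (hgB : ∀ x y, ‖g x y‖ ≤ B y) (hB : Integrable B ν)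
    {χ : α → ℝ} (hχ : Integrable χ μ) :
    Integrable (fun z : γ × γ => ∫ x, (χ x : ℂ) * (g x z.1 * (starRingEnd ℂ) (g x z.2)) ∂μ) (ν.prod ν) ∧
    (((∫ x, χ x * ‖∫ y, g x y ∂ν‖ ^ 2 ∂μ : ℝ)) : ℂ) = ∫ z : γ × γ, ∫ x, (χ x : ℂ) * (g x z.1 * (starRingEnd ℂ) (g x z.2)) ∂μ ∂(ν.prod ν) := by
  have hint : Integrable (fun w : α × (γ × γ) => (χ w.1 : ℂ) * (g w.1 w.2.1 * (starRingEnd ℂ) (g w.1 w.2.2))) (μ.prod (ν.prod ν)) := by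
    have hd : Integrable (fun w : α × (γ × γ) => χ w.1 * (B w.2.1 * B w.2.2)) (μ.prod (ν.prod ν)) :=
      hχ.mul_prod (hB.mul_prod hB)
    refine hd.mono ?_ ?_
    · have h1 : AEStronglyMeasurable (fun w : α × (γ × γ) => (χ w.1 : ℂ)) (μ.prod (ν.prod ν)) :=
        (Complex.continuous_ofReal.comp_aestronglyMeasurable hχ.1).comp_fst
      have h2 : Measurable (fun w : α × (γ × γ) => g w.1 w.2.1) := hg.comp (by fun_prop : Measurable fun w : α × (γ × γ) => (w.1, w.2.1))
      have h3 : Measurable (fun w : α × (γ × γ) => (starRingEnd ℂ) (g w.1 w.2.2)) :=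
        Complex.continuous_conj.measurable.comp (hg.comp (by fun_prop : Measurable fun w : α × (γ × γ) => (w.1, w.2.2)))
      exact h1.mul (h2.mul h3).aestronglyMeasurable
    · refine Eventually.of_forall fun w => ?_
      rw [norm_mul, norm_mul, RCLike.norm_conj, norm_mul, norm_mul, Complex.norm_real]
      have h1 := (hgB w.1 w.2.1).trans (le_abs_self _)
      have h2 := (hgB w.1 w.2.2).trans (le_abs_self _)
      rw [Real.norm_eq_abs (B _), Real.norm_eq_abs (B _)]
      gcongr
  refine ⟨hint.integral_prod_right, ?_⟩
  rw [← integral_integral_swap (f := fun (x : α) (z : γ × γ) => (χ x : ℂ) * (g x z.1 * (starRingEnd ℂ) (g x z.2))) hint]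
  rw [← integral_complex_ofReal]
  refine integral_congr_ae (Eventually.of_forall fun x => ?_)
  simp only
  rw [integral_const_mul, integral_prod_mul (μ := ν) (ν := ν) (fun y => g x y) (fun y => (starRingEnd ℂ) (g x y)), integral_conj]
  push_cast
  rw [Complex.mul_conj, Complex.normSq_eq_norm_sq]
  push_cast
  rfl

def AF (d : ℕ) (t : ℝ) : ℝ := (4 * Real.pi * |t|) ^ (-((d : ℝ) / 2))

lemma sfree_norm (d : ℕ) (x y : Fin d → ℝ) {t : ℝ} : ‖Sfree d x y t‖ = AF d t := by
  unfold Sfree AF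
  rw [norm_mul, norm_phase, mul_one, show (-(d : ℂ) / 2) = ((-((d : ℝ) / 2) : ℝ) : ℂ) by push_cast; ring, Complex.norm_cpow_real]
  congr 1
  rw [norm_mul, norm_mul, norm_mul, Complex.norm_I, Complex.norm_real, Complex.norm_real, Real.norm_eq_abs, Real.norm_eq_abs, abs_of_pos Real.pi_pos]
  norm_num

lemma AF_nonneg (d : ℕ) (t : ℝ) : 0 ≤ AF d t := by unfold AF; positivity

lemma AF_pos (d : ℕ) {t : ℝ} (ht : t ≠ 0) : 0 < AF d t := by
  have := abs_pos.2 ht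
  unfold AF; positivity

lemma sfree_symm (d : ℕ) (x y : Fin d → ℝ) (t : ℝ) : Sfree d x y t = Sfree d y x t := by
  unfold Sfree
  congr 5
  refine Finset.sum_congr rfl fun i _ => by ring

lemma sfree_meas (d : ℕ) : Measurable fun w : ((Fin d → ℝ) × (Fin d → ℝ)) × ℝ => Sfree d w.1.1 w.1.2 w.2 := by
  unfold Sfree
  fun_prop

lemma gauss_int (d : ℕ) {ε : ℝ} (hε : 0 < ε) : Integrable fun y : Fin d → ℝ => Real.exp (-(ε * ∑ i, y i ^ 2)) := by
  have := (GaussianFourier.integrable_cexp_neg_mul_sum_add (ι := Fin d) (b := (ε : ℂ)) (by simpa using hε) (fun _ => 0)).norm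
  refine this.congr (Eventually.of_forall fun y => ?_)
  simp only [Complex.norm_exp]
  congr 1
  simp [← Complex.ofReal_pow, ← Complex.ofReal_sum]

lemma gauss_lint (d : ℕ) {ε : ℝ} (hε : 0 < ε) : ∫⁻ y : Fin d → ℝ, ENNReal.ofReal (Real.exp (-(ε * ∑ i, y i ^ 2))) = ENNReal.ofReal ((Real.pi / ε) ^ ((d : ℝ) / 2)) := by
  rw [← ofReal_integral_eq_lintegral_ofReal (gauss_int d hε) (Eventually.of_forall fun y => (Real.exp_pos _).le)]
  congr 1
  have := GaussianFourier.integral_cexp_neg_mul_sum_add (ι := Fin d) (b := (ε : ℂ)) (by simpa using hε) (fun _ => 0)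
  have h2 : ((∫ y : Fin d → ℝ, Real.exp (-(ε * ∑ i, y i ^ 2)) : ℝ) : ℂ) = (((Real.pi / ε) ^ ((d : ℝ) / 2) : ℝ) : ℂ) := by
    rw [← integral_complex_ofReal, Complex.ofReal_cpow (by positivity)]
    push_cast
    simpa using this
  exact_mod_cast h2

def kF (d : ℕ) (ε t t' : ℝ) (x x' : Fin d → ℝ) : ℂ :=
  ∫ y : Fin d → ℝ, ((Real.exp (-(ε * ∑ i, y i ^ 2)) : ℝ) : ℂ) * (Sfree d x y t * (starRingEnd ℂ) (Sfree d x' y t'))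

lemma kF_norm (d : ℕ) {ε : ℝ} (hε : 0 < ε) {t t' : ℝ} (ht : t ≠ 0) (ht' : t' ≠ 0) (x x' : Fin d → ℝ) {p : ℂ}
    (hp : p = (ε : ℂ) + (((1 / (4 * t') - 1 / (4 * t) : ℝ)) : ℂ) * Complex.I) :
    ‖kF d ε t t' x x'‖ = AF d t * AF d t' * ((Real.pi / ‖p‖) ^ ((d : ℝ) / 2) * Real.exp (-((1 / p).re / 4 * ∑ i, (x i / (2 * t) - x' i / (2 * t')) ^ 2))) := by
  have hpre : p.re = ε := by simp [hp]
  have hp0 : p ≠ 0 := by rintro h; rw [h] at hpre; simp at hpre; linarith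
  set c : Fin d → ℂ := fun i => -((x i / (2 * t) - x' i / (2 * t') : ℝ) : ℂ) * Complex.I with hc
  have G := GaussianFourier.integral_cexp_neg_mul_sum_add (ι := Fin d) (b := p) (by rw [hpre]; exact hε) c
  set W : ℂ := (4 * (Real.pi : ℂ) * Complex.I * (t : ℂ)) ^ (-(d : ℂ) / 2) * (starRingEnd ℂ) ((4 * (Real.pi : ℂ) * Complex.I * (t' : ℂ)) ^ (-(d : ℂ) / 2))
    * Complex.exp (Complex.I * (((∑ i, x i ^ 2) / (4 * t) - (∑ i, x' i ^ 2) / (4 * t') : ℝ) : ℂ)) with hW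
  have hWn : ‖W‖ = AF d t * AF d t' := by
    rw [hW, norm_mul, norm_mul, RCLike.norm_conj]
    have h1 := sfree_norm d 0 0 (t := t)
    have h2 := sfree_norm d 0 0 (t := t')
    unfold Sfree at h1 h2
    rw [norm_mul, norm_phase, mul_one] at h1 h2
    rw [h1, h2, mul_comm Complex.I, Complex.norm_exp_ofReal_mul_I, mul_one]
  have e : kF d ε t t' x x' = W * ((Real.pi / p) ^ ((Fintype.card (Fin d) : ℂ) / 2) * Complex.exp ((∑ i, c i ^ 2) / (4 * p))) := by
    rw [← G, ← integral_const_mul]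
    unfold kF
    refine integral_congr_ae (Eventually.of_forall fun y => ?_)
    simp only [Sfree, hW]
    rw [map_mul, ← Complex.exp_conj, Complex.ofReal_exp]
    rw [show ∀ A B C D E F H : ℂ, A * (B * C * (D * E)) = B * D * F * H ↔ B * D * (A * (C * E)) = B * D * (F * H) by
      intros; constructor <;> intro h <;> linear_combination h]
    congr 1
    rw [← Complex.exp_add, ← Complex.exp_add, ← Complex.exp_add]
    congr 1
    rw [map_div₀, map_mul, Complex.conj_I, Complex.conj_ofReal, Complex.conj_ofReal]
    have s1 : ∀ (x : Fin d → ℝ), ((∑ i, (x i - y i) ^ 2 : ℝ) : ℂ) = (∑ i, (x i : ℂ) ^ 2) - 2 * (∑ i, (x i : ℂ) * y i) + ∑ i, (y i : ℂ) ^ 2 := by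
      intro x
      push_cast
      rw [Finset.mul_sum, ← Finset.sum_sub_distrib, ← Finset.sum_add_distrib]
      exact Finset.sum_congr rfl fun i _ => by ring
    have s2 : ∑ i, c i * (y i : ℂ) = -Complex.I * ((∑ i, (x i : ℂ) * y i) / (2 * t) - (∑ i, (x' i : ℂ) * y i) / (2 * t')) := by
      rw [Finset.sum_div, Finset.sum_div, ← Finset.sum_sub_distrib, Finset.mul_sum]
      refine Finset.sum_congr rfl fun i _ => ?_
      simp only [hc]; push_cast; ring
    rw [s1, s1, s2, hp]
    push_cast
    have : (t : ℂ) ≠ 0 := by exact_mod_cast ht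
    have : (t' : ℂ) ≠ 0 := by exact_mod_cast ht'
    field_simp
    ring
  rw [e, norm_mul, hWn, norm_mul, Complex.norm_exp, Fintype.card_fin, show ((d : ℂ) / 2) = (((d : ℝ) / 2 : ℝ) : ℂ) by push_cast; ring,
    Complex.norm_cpow_real, norm_div, Complex.norm_real, Real.norm_of_nonneg Real.pi_pos.le]
  congr 4
  have s3 : ∑ i, c i ^ 2 = -((∑ i, (x i / (2 * t) - x' i / (2 * t')) ^ 2 : ℝ) : ℂ) := by
    push_cast
    rw [← Finset.sum_neg_distrib]
    refine Finset.sum_congr rfl fun i _ => ?_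
    simp only [hc]; push_cast; rw [mul_pow, Complex.I_sq]; ring
  rw [s3, show ∀ s : ℂ, -s / (4 * p) = s * (-(1 / p) / 4) by intro s; field_simp, Complex.re_ofReal_mul]
  simp
  ring

lemma kF_bound (d : ℕ) {ε : ℝ} (hε : 0 < ε) {t t' : ℝ} (ht : t ≠ 0) (ht' : t' ≠ 0) (htt : t ≠ t') (x x' : Fin d → ℝ) :
    ‖kF d ε t t' x x'‖ ≤ AF d (t - t') := by
  rw [kF_norm d hε ht ht' x x' rfl]
  set p : ℂ := (ε : ℂ) + (((1 / (4 * t') - 1 / (4 * t) : ℝ)) : ℂ) * Complex.I with hp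
  have hpre : p.re = ε := by simp [hp]
  have hpim : p.im = 1 / (4 * t') - 1 / (4 * t) := by rw [hp]; simp [-Complex.ofReal_sub]
  have hp0 : p ≠ 0 := by rintro h; rw [h] at hpre; simp at hpre; linarith
  have T := abs_pos.2 ht
  have T' := abs_pos.2 ht'
  have hd : 0 < |t - t'| := abs_pos.2 (sub_ne_zero.2 htt)
  have hpn : |t - t'| / (4 * |t| * |t'|) ≤ ‖p‖ := by
    refine le_trans (le_of_eq ?_) (Complex.abs_im_le_norm p)
    rw [hpim, show 1 / (4 * t') - 1 / (4 * t) = (t - t') / (4 * t * t') by field_simp, abs_div, abs_mul, abs_mul]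
    norm_num
  have hκ : 0 < (1 / p).re := by
    rw [one_div, Complex.inv_re]
    exact div_pos (by rw [hpre]; exact hε) (Complex.normSq_pos.2 hp0)
  have h1 : Real.exp (-((1 / p).re / 4 * ∑ i, (x i / (2 * t) - x' i / (2 * t')) ^ 2)) ≤ 1 := by
    rw [Real.exp_le_one_iff]
    have : 0 ≤ (1 / p).re / 4 * ∑ i, (x i / (2 * t) - x' i / (2 * t')) ^ 2 := by positivity
    linarith
  have h2 : (Real.pi / ‖p‖) ^ ((d : ℝ) / 2) ≤ (Real.pi / (|t - t'| / (4 * |t| * |t'|))) ^ ((d : ℝ) / 2) := by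
    gcongr
  calc _ ≤ AF d t * AF d t' * ((Real.pi / (|t - t'| / (4 * |t| * |t'|))) ^ ((d : ℝ) / 2) * 1) := by
        have := AF_nonneg d t
        have := AF_nonneg d t'
        gcongr
    _ = _ := by
      unfold AF
      rw [mul_one, ← Real.mul_rpow (by positivity) (by positivity), Real.rpow_neg (by positivity), Real.rpow_neg (by positivity), inv_mul_eq_div,
        ← Real.div_rpow (by positivity) (by positivity), ← Real.inv_rpow (by positivity)]
      congr 1
      field_simp

lemma lint_le_of_cut {α : Type*} [MeasurableSpace α] (μ : Measure α) {h : α → ℝ≥0∞} (hh : Measurable h) {χ : ℕ → α → ℝ≥0∞} (hχ : ∀ n, Measurable (χ n))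
    (hlim : ∀ x, Tendsto (fun n => χ n x) atTop (𝓝 1)) {M : ℝ≥0∞} (hM : ∀ n, ∫⁻ x, χ n x * h x ∂μ ≤ M) : ∫⁻ x, h x ∂μ ≤ M := by
  have h1 : ∀ x, liminf (fun n => χ n x * h x) atTop = h x := by
    intro x
    have : Tendsto (fun n => χ n x * h x) atTop (𝓝 (1 * h x)) := ENNReal.Tendsto.mul_const (hlim x) (Or.inl one_ne_zero)
    rw [one_mul] at this
    exact this.liminf_eq
  calc ∫⁻ x, h x ∂μ = ∫⁻ x, liminf (fun n => χ n x * h x) atTop ∂μ := lintegral_congr fun x => (h1 x).symm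
    _ ≤ liminf (fun n => ∫⁻ x, χ n x * h x ∂μ) atTop := lintegral_liminf_le fun n => (hχ n).mul hh
    _ ≤ M := by
      refine le_trans (liminf_le_liminf (Eventually.of_forall hM)) ?_
      simp

lemma cut_tendsto (s : ℝ) : Tendsto (fun n : ℕ => ENNReal.ofReal (Real.exp (-((1 / ((n : ℝ) + 1)) * s)))) atTop (𝓝 1) := by
  have h1 : Tendsto (fun n : ℕ => Real.exp (-((1 / ((n : ℝ) + 1)) * s))) atTop (𝓝 (Real.exp (-(0 * s)))) :=
    (Real.continuous_exp.tendsto _).comp ((tendsto_one_div_add_atTop_nhds_zero_nat.mul_const s).neg)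
  have := ENNReal.tendsto_ofReal h1
  simpa using this

lemma sfree_meas2 (d : ℕ) (t : ℝ) : Measurable fun w : (Fin d → ℝ) × (Fin d → ℝ) => Sfree d w.1 w.2 t :=
  (sfree_meas d).comp (by fun_prop : Measurable fun w : (Fin d → ℝ) × (Fin d → ℝ) => (w, t))

lemma kF_diag_mass (d : ℕ) {ε : ℝ} (hε : 0 < ε) {t : ℝ} (ht : t ≠ 0) (x : Fin d → ℝ) :
    ∫⁻ x', ‖kF d ε t t x x'‖ₑ = 1 := by
  have T := abs_pos.2 ht
  set δ : ℝ := 1 / (16 * t ^ 2 * ε) with hδ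
  have hδ0 : 0 < δ := by positivity
  have e : ∀ x', ‖kF d ε t t x x'‖ₑ = ENNReal.ofReal (AF d t * AF d t * (Real.pi / ε) ^ ((d : ℝ) / 2)) * ENNReal.ofReal (Real.exp (-(δ * ∑ i, (x - x') i ^ 2))) := by
    intro x'
    have := kF_norm d hε ht ht x x' (p := (ε : ℂ)) (by simp)
    have hA := AF_nonneg d t
    rw [← ofReal_norm, this, ← ENNReal.ofReal_mul (by positivity), Complex.norm_real, Real.norm_of_nonneg hε.le, mul_assoc (AF d t * AF d t)]
    congr 5
    have : (1 / (ε : ℂ)).re = 1 / ε := by rw [← Complex.ofReal_one, ← Complex.ofReal_div, Complex.ofReal_re]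
    rw [this, Finset.mul_sum, Finset.mul_sum]
    refine Finset.sum_congr rfl fun i _ => ?_
    rw [hδ, Pi.sub_apply]; field_simp; ring
  simp_rw [e]
  rw [lintegral_const_mul _ (by fun_prop), lintegral_sub_left_eq_self (fun y : Fin d → ℝ => ENNReal.ofReal (Real.exp (-(δ * ∑ i, y i ^ 2)))) x, gauss_lint d hδ0]
  have hA := AF_nonneg d t
  rw [← ENNReal.ofReal_mul (by positivity), ← ENNReal.ofReal_one]
  congr 1
  unfold AF
  rw [Real.rpow_neg (by positivity), ← mul_inv, mul_assoc, ← Real.mul_rpow (by positivity) (by positivity), ← Real.mul_rpow (by positivity) (by positivity)]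
  have : Real.pi / ε * (Real.pi / δ) = 4 * Real.pi * |t| * (4 * Real.pi * |t|) := by
    rw [hδ, ← sq_abs t]; field_simp; ring
  rw [this]
  exact inv_mul_cancel₀ (by positivity)

lemma kF_diag_mass' (d : ℕ) {ε : ℝ} (hε : 0 < ε) {t : ℝ} (ht : t ≠ 0) (x' : Fin d → ℝ) :
    ∫⁻ x, ‖kF d ε t t x x'‖ₑ = 1 := by
  rw [← kF_diag_mass d hε ht x']
  refine lintegral_congr fun x => ?_
  rw [← ofReal_norm, ← ofReal_norm, kF_norm d hε ht ht x x' rfl, kF_norm d hε ht ht x' x rfl]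
  congr 6
  refine Finset.sum_congr rfl fun i _ => by ring

lemma kF_meas (d : ℕ) (ε : ℝ) : Measurable fun w : ((Fin d → ℝ) × ℝ) × ((Fin d → ℝ) × ℝ) => kF d ε w.1.2 w.2.2 w.1.1 w.2.1 := by
  unfold kF
  have h1 := (sfree_meas d).comp (by fun_prop : Measurable fun w : (((Fin d → ℝ) × ℝ) × ((Fin d → ℝ) × ℝ)) × (Fin d → ℝ) => ((w.1.1.1, w.2), w.1.1.2))
  have h2 := Complex.continuous_conj.measurable.comp ((sfree_meas d).comp (by fun_prop : Measurable fun w : (((Fin d → ℝ) × ℝ) × ((Fin d → ℝ) × ℝ)) × (Fin d → ℝ) => ((w.1.2.1, w.2), w.1.2.2)))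
  have h3 : Measurable fun w : (((Fin d → ℝ) × ℝ) × ((Fin d → ℝ) × ℝ)) × (Fin d → ℝ) => ((Real.exp (-(ε * ∑ i, w.2 i ^ 2)) : ℝ) : ℂ) := by fun_prop
  exact (h3.mul (h1.mul h2)).stronglyMeasurable.integral_prod_right'.measurable

lemma kF_meas2 (d : ℕ) (ε t t' : ℝ) : Measurable fun w : (Fin d → ℝ) × (Fin d → ℝ) => kF d ε t t' w.1 w.2 := by
  have h : Measurable fun w : (Fin d → ℝ) × (Fin d → ℝ) => (((w.1, t), (w.2, t')) : ((Fin d → ℝ) × ℝ) × ((Fin d → ℝ) × ℝ)) := by fun_prop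
  have h2 := Measurable.comp (kF_meas d ε) h
  simp only [Function.comp_def] at h2
  exact h2

set_option maxHeartbeats 1000000 in
lemma free_L2_cut (d : ℕ) {ε : ℝ} (hε : 0 < ε) {t : ℝ} (ht : t ≠ 0) {f : (Fin d → ℝ) → ℂ} (hf : Measurable f) (hfi : Integrable f) :
    ∫⁻ x, ENNReal.ofReal (Real.exp (-(ε * ∑ i, x i ^ 2))) * ‖∫ y, Sfree d x y t * f y‖ₑ ^ (2:ℝ) ≤ ∫⁻ x, ‖f x‖ₑ ^ (2:ℝ) := by
  have hgm : Measurable fun z : (Fin d → ℝ) × (Fin d → ℝ) => Sfree d z.1 z.2 t * f z.2 := (sfree_meas2 d t).mul (hf.comp measurable_snd)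
  have hgB : ∀ x y, ‖Sfree d x y t * f y‖ ≤ AF d t * ‖f y‖ := fun x y => by rw [norm_mul, sfree_norm]
  have hB : Integrable (fun y => AF d t * ‖f y‖) := hfi.norm.const_mul _
  obtain ⟨-, h2⟩ := tt_identity volume volume (g := fun x y => Sfree d x y t * f y) hgm hgB hB (gauss_int d hε)
  have hu := kint_meas (volume : Measure (Fin d → ℝ)) (k := fun x y => Sfree d x y t) (sfree_meas2 d t) hf
  have hub : ∀ x, ‖∫ y, Sfree d x y t * f y‖ ≤ ∫ y, AF d t * ‖f y‖ := fun x =>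
    norm_integral_le_of_norm_le hB (Eventually.of_forall (hgB x))
  have hi : Integrable fun x : Fin d → ℝ => Real.exp (-(ε * ∑ i, x i ^ 2)) * ‖∫ y, Sfree d x y t * f y‖ ^ 2 := by
    refine (gauss_int d hε).mul_bdd (c := (∫ y, AF d t * ‖f y‖) ^ 2) (hu.norm.pow_const 2).aestronglyMeasurable (Eventually.of_forall fun x => ?_)
    rw [norm_pow, norm_norm]
    have := hub x
    gcongr
  have e1 : ∫⁻ x, ENNReal.ofReal (Real.exp (-(ε * ∑ i, x i ^ 2))) * ‖∫ y, Sfree d x y t * f y‖ₑ ^ (2:ℝ) = ‖((∫ x : Fin d → ℝ, Real.exp (-(ε * ∑ i, x i ^ 2)) * ‖∫ y, Sfree d x y t * f y‖ ^ 2 : ℝ) : ℂ)‖ₑ := by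
    rw [← ofReal_norm, Complex.norm_real, Real.norm_of_nonneg (integral_nonneg fun x => by positivity), ofReal_integral_eq_lintegral_ofReal hi (Eventually.of_forall fun x => by positivity)]
    refine lintegral_congr fun x => ?_
    rw [ENNReal.ofReal_mul (by positivity), ← ofReal_norm, ENNReal.ofReal_rpow_of_nonneg (norm_nonneg _) (by norm_num), Real.rpow_two]
  have e2 : ∀ z : (Fin d → ℝ) × (Fin d → ℝ), ∫ x : Fin d → ℝ, ((Real.exp (-(ε * ∑ i, x i ^ 2)) : ℝ) : ℂ) * ((Sfree d x z.1 t * f z.1) * (starRingEnd ℂ) (Sfree d x z.2 t * f z.2)) = (f z.1 * (starRingEnd ℂ) (f z.2)) * kF d ε t t z.1 z.2 := by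
    intro z
    unfold kF
    rw [← integral_const_mul]
    refine integral_congr_ae (Eventually.of_forall fun x => ?_)
    simp only
    rw [sfree_symm d x z.1, sfree_symm d x z.2, map_mul]
    ring
  simp_rw [e2] at h2
  rw [e1, h2]
  have hkm : Measurable fun z : (Fin d → ℝ) × (Fin d → ℝ) => ‖kF d ε t t z.1 z.2‖ₑ := (kF_meas2 d ε t t).enorm
  have hm1 : Measurable fun z : (Fin d → ℝ) × (Fin d → ℝ) => ‖f z.1‖ₑ ^ (2:ℝ) * ‖kF d ε t t z.1 z.2‖ₑ := ((hf.comp measurable_fst).enorm.pow_const _).mul hkm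
  have hm2 : Measurable fun z : (Fin d → ℝ) × (Fin d → ℝ) => ‖f z.2‖ₑ ^ (2:ℝ) * ‖kF d ε t t z.1 z.2‖ₑ := ((hf.comp measurable_snd).enorm.pow_const _).mul hkm
  have I1 : ∫⁻ z : (Fin d → ℝ) × (Fin d → ℝ), ‖f z.1‖ₑ ^ (2:ℝ) * ‖kF d ε t t z.1 z.2‖ₑ = ∫⁻ x, ‖f x‖ₑ ^ (2:ℝ) := by
    rw [Measure.volume_eq_prod, lintegral_prod _ hm1.aemeasurable]
    refine lintegral_congr fun x => ?_
    have hk1 : Measurable fun y => ‖kF d ε t t x y‖ₑ := by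
      have h := hkm.comp (measurable_prodMk_left (x := x))
      simp only [Function.comp_def] at h
      exact h
    dsimp only
    rw [lintegral_const_mul _ hk1, kF_diag_mass d hε ht, mul_one]
  have I2 : ∫⁻ z : (Fin d → ℝ) × (Fin d → ℝ), ‖f z.2‖ₑ ^ (2:ℝ) * ‖kF d ε t t z.1 z.2‖ₑ = ∫⁻ x, ‖f x‖ₑ ^ (2:ℝ) := by
    rw [Measure.volume_eq_prod, lintegral_prod_symm _ hm2.aemeasurable]
    refine lintegral_congr fun x => ?_
    have hk1 : Measurable fun y => ‖kF d ε t t y x‖ₑ := by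
      have h := hkm.comp (measurable_prodMk_right (y := x))
      simp only [Function.comp_def] at h
      exact h
    dsimp only
    rw [lintegral_const_mul _ hk1, kF_diag_mass' d hε ht, mul_one]
  calc _ ≤ ∫⁻ z : (Fin d → ℝ) × (Fin d → ℝ), ‖(f z.1 * (starRingEnd ℂ) (f z.2)) * kF d ε t t z.1 z.2‖ₑ := enorm_integral_le_lintegral_enorm _
    _ ≤ ∫⁻ z : (Fin d → ℝ) × (Fin d → ℝ), 2⁻¹ * (‖f z.1‖ₑ ^ (2:ℝ) * ‖kF d ε t t z.1 z.2‖ₑ + ‖f z.2‖ₑ ^ (2:ℝ) * ‖kF d ε t t z.1 z.2‖ₑ) := by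
      refine lintegral_mono fun z => ?_
      rw [← add_mul, ← mul_assoc, enorm_mul]
      gcongr
      have : (2⁻¹ : ℝ≥0∞) = ENNReal.ofReal (2⁻¹) := by rw [ENNReal.ofReal_inv_of_pos two_pos]; simp
      rw [enorm_mul, ← ofReal_norm, ← ofReal_norm, ← ofReal_norm, RCLike.norm_conj, ENNReal.ofReal_rpow_of_nonneg (norm_nonneg _) (by norm_num), ENNReal.ofReal_rpow_of_nonneg (norm_nonneg _) (by norm_num),
        ← ENNReal.ofReal_add (by positivity) (by positivity), ← ENNReal.ofReal_mul (by positivity), this, ← ENNReal.ofReal_mul (by positivity)]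
      refine ENNReal.ofReal_le_ofReal ?_
      rw [Real.rpow_two, Real.rpow_two]
      nlinarith [sq_nonneg (‖f z.1‖ - ‖f z.2‖)]
    _ = ∫⁻ x, ‖f x‖ₑ ^ (2:ℝ) := by
      rw [lintegral_const_mul' _ _ (by norm_num), lintegral_add_left hm1, I1, I2, ← two_mul, ← mul_assoc, ENNReal.inv_mul_cancel (by norm_num) (by norm_num), one_mul]

lemma free_L2 (d : ℕ) {t : ℝ} (ht : t ≠ 0) {f : (Fin d → ℝ) → ℂ} (hf : Measurable f) (hfi : Integrable f) :
    ∫⁻ x, ‖∫ y, Sfree d x y t * f y‖ₑ ^ (2:ℝ) ≤ ∫⁻ x, ‖f x‖ₑ ^ (2:ℝ) := by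
  have hu : Measurable fun x => ‖∫ y, Sfree d x y t * f y‖ₑ ^ (2:ℝ) := (kint_meas (volume : Measure (Fin d → ℝ)) (k := fun x y => Sfree d x y t) (sfree_meas2 d t) hf).enorm.pow_const _
  have hχ : ∀ n : ℕ, Measurable fun x : Fin d → ℝ => ENNReal.ofReal (Real.exp (-((1 / ((n : ℝ) + 1)) * ∑ i, x i ^ 2))) := fun n => by fun_prop
  exact lint_le_of_cut volume hu hχ (fun x => cut_tendsto (∑ i, x i ^ 2)) fun n => free_L2_cut d (by positivity) ht hf hfi

lemma free_disp (d : ℕ) {t : ℝ} (ht : t ≠ 0) {r p : ℝ} (hr : 2 ≤ r) (hp : p = r / (r - 1)) {f : (Fin d → ℝ) → ℂ} (hf : Measurable f) (hfi : Integrable f) :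
    (∫⁻ x, ‖∫ y, Sfree d x y t * f y‖ₑ ^ r) ^ (1 / r) ≤ ENNReal.ofReal (cM r * AF d t ^ (1 - 2 / r)) * (∫⁻ x, ‖f x‖ₑ ^ p) ^ (1 / p) :=
  marc volume (k := fun x y => Sfree d x y t) (sfree_meas2 d t) (AF_pos d ht) (fun x y => (sfree_norm d x y).le) (fun _ h1 h2 => free_L2 d ht h1 h2) hr hp hf hfi

lemma kF_L2 (d : ℕ) {ε : ℝ} (hε : 0 < ε) {t t' : ℝ} (ht : t ≠ 0) (ht' : t' ≠ 0) {f : (Fin d → ℝ) → ℂ} (hf : Measurable f) (hfi : Integrable f) :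
    ∫⁻ x, ‖∫ x', kF d ε t t' x x' * f x'‖ₑ ^ (2:ℝ) ≤ ∫⁻ x, ‖f x‖ₑ ^ (2:ℝ) := by
  set v : (Fin d → ℝ) → ℂ := fun y => ∫ x', (starRingEnd ℂ) (Sfree d x' y t') * f x' with hv
  set χ : (Fin d → ℝ) → ℝ := fun y => Real.exp (-(ε * ∑ i, y i ^ 2)) with hχ
  have hχi : Integrable χ := gauss_int d hε
  have hχm : Measurable χ := by simp only [hχ]; fun_prop
  have hf' : Measurable fun x => (starRingEnd ℂ) (f x) := Complex.continuous_conj.measurable.comp hf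
  have hfi' : Integrable fun x => (starRingEnd ℂ) (f x) := by
    refine hfi.mono hf'.aestronglyMeasurable (Eventually.of_forall fun x => ?_)
    rw [RCLike.norm_conj]
  have hv2 : ∀ y, v y = (starRingEnd ℂ) (∫ x', Sfree d y x' t' * (starRingEnd ℂ) (f x')) := by
    intro y
    rw [← integral_conj]
    refine integral_congr_ae (Eventually.of_forall fun x' => ?_)
    simp only [map_mul, Complex.conj_conj]
    rw [sfree_symm]
  have hvm : Measurable v := by
    have := Complex.continuous_conj.measurable.comp (kint_meas (volume : Measure (Fin d → ℝ)) (k := fun x y => Sfree d x y t') (sfree_meas2 d t') hf')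
    convert this using 1
    ext y
    exact hv2 y
  have hvb : ∀ y, ‖v y‖ ≤ ∫ x', AF d t' * ‖f x'‖ := fun y =>
    norm_integral_le_of_norm_le (hfi.norm.const_mul _) (Eventually.of_forall fun x' => by rw [norm_mul, RCLike.norm_conj, sfree_norm])
  have hhm : Measurable fun y => (χ y : ℂ) * v y := (Complex.measurable_ofReal.comp hχm).mul hvm
  have hhi : Integrable fun y => (χ y : ℂ) * v y :=
    hχi.ofReal.mul_bdd hvm.aestronglyMeasurable (Eventually.of_forall hvb)
  have e : ∀ x, ∫ x', kF d ε t t' x x' * f x' = ∫ y, Sfree d x y t * ((χ y : ℂ) * v y) := by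
    intro x
    unfold kF
    simp_rw [← integral_mul_const, hv, ← integral_const_mul]
    rw [integral_integral_swap]
    · refine integral_congr_ae (Eventually.of_forall fun y => ?_)
      refine integral_congr_ae (Eventually.of_forall fun x' => ?_)
      simp only [hχ]
      ring
    · have hd : Integrable (fun w : (Fin d → ℝ) × (Fin d → ℝ) => (AF d t * AF d t' * ‖f w.1‖) * χ w.2) :=
        (hfi.norm.const_mul (AF d t * AF d t')).mul_prod hχi
      refine hd.mono' ?_ ?_
      · have h1 := (sfree_meas2 d t).comp (by fun_prop : Measurable fun w : (Fin d → ℝ) × (Fin d → ℝ) => (x, w.2))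
        have h2 := Complex.continuous_conj.measurable.comp (sfree_meas2 d t')
        have h3 := Complex.measurable_ofReal.comp (hχm.comp (measurable_snd : Measurable (Prod.snd : (Fin d → ℝ) × (Fin d → ℝ) → (Fin d → ℝ))))
        exact ((h3.mul (h1.mul h2)).mul (hf.comp measurable_fst)).aestronglyMeasurable
      · refine Eventually.of_forall fun w => ?_
        simp only [Function.uncurry_def]
        rw [norm_mul, norm_mul, norm_mul, RCLike.norm_conj, sfree_norm, sfree_norm, Complex.norm_real, Real.norm_of_nonneg (Real.exp_pos _).le]
        apply le_of_eq; simp only [hχ]; ring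
  simp_rw [e]
  refine (free_L2 d ht hhm hhi).trans ?_
  calc _ ≤ ∫⁻ x, ‖∫ x', Sfree d x x' t' * (starRingEnd ℂ) (f x')‖ₑ ^ (2:ℝ) := by
        refine lintegral_mono fun y => ?_
        refine ENNReal.rpow_le_rpow ?_ (by norm_num)
        rw [hv2, enorm_mul, ← ofReal_norm, ← ofReal_norm, ← ofReal_norm, RCLike.norm_conj, Complex.norm_real, Real.norm_of_nonneg (Real.exp_pos _).le, ← ENNReal.ofReal_mul (Real.exp_pos _).le]
        refine ENNReal.ofReal_le_ofReal ?_
        refine mul_le_of_le_one_left (norm_nonneg _) ?_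
        rw [Real.exp_le_one_iff]
        have : 0 ≤ ε * ∑ i, y i ^ 2 := by positivity
        linarith
    _ ≤ ∫⁻ x, ‖(starRingEnd ℂ) (f x)‖ₑ ^ (2:ℝ) := free_L2 d ht' hf' hfi'
    _ = _ := by
      refine lintegral_congr fun x => ?_
      rw [← ofReal_norm, ← ofReal_norm, RCLike.norm_conj]

lemma kF_disp (d : ℕ) {ε : ℝ} (hε : 0 < ε) {t t' : ℝ} (ht : t ≠ 0) (ht' : t' ≠ 0) (htt : t ≠ t') {r p : ℝ} (hr : 2 ≤ r) (hp : p = r / (r - 1)) {f : (Fin d → ℝ) → ℂ} (hf : Measurable f) (hfi : Integrable f) :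
    (∫⁻ x, ‖∫ x', kF d ε t t' x x' * f x'‖ₑ ^ r) ^ (1 / r) ≤ ENNReal.ofReal (cM r * AF d (t - t') ^ (1 - 2 / r)) * (∫⁻ x, ‖f x‖ₑ ^ p) ^ (1 / p) :=
  marc volume (k := fun x y => kF d ε t t' x y) (kF_meas2 d ε t t') (AF_pos d (sub_ne_zero.2 htt)) (fun x y => kF_bound d hε ht ht' htt x y) (fun _ h1 h2 => kF_L2 d hε ht ht' h1 h2) hr hp hf hfi


def mixE (d : ℕ) (q r : ℝ) (V : (Fin d → ℝ) → ℝ → ℝ≥0∞) : ℝ≥0∞ :=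
  (∫⁻ t : ℝ, (∫⁻ x : Fin d → ℝ, V x t ^ r) ^ (q / r)) ^ (1 / q)

lemma dual_step (d : ℕ) {q r : ℝ} (hq : 2 < q) (hr : 2 ≤ r) {V W : (Fin d → ℝ) → ℝ → ℝ≥0∞} (hW : Measurable fun z : (Fin d → ℝ) × ℝ => W z.1 z.2) (hWV : ∀ x t, W x t ≤ V x t)
    {M : ℝ≥0∞} {R δ c : ℝ} (hc : 0 < c) (hWR : ∀ x t, W x t ≤ ENNReal.ofReal R) (hsupp : ∀ x t, W x t ≠ 0 → ‖x‖ ≤ R ∧ δ ≤ |t| ∧ |t| ≤ R)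
    (hM : ∀ (g : (Fin d → ℝ) → ℝ → ℝ≥0∞) (K : ℝ), (Measurable fun z : (Fin d → ℝ) × ℝ => g z.1 z.2) → (∀ x t, g x t ≤ ENNReal.ofReal K) →
      (∀ x t, g x t ≠ 0 → ‖x‖ ≤ R ∧ δ ≤ |t| ∧ |t| ≤ R) → ∫⁻ t, ∫⁻ x, V x t * g x t ≤ M * mixE d (q / (q - 1)) (r / (r - 1)) g) :
    ∫⁻ t, (if ENNReal.ofReal c ≤ ∫⁻ x, W x t ^ r then (∫⁻ x, W x t ^ r) ^ (q / r) else 0) ≤ M ^ q := by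
  have hr1 : 0 < r - 1 := by linarith
  have hq1 : 0 < q - 1 := by linarith
  have hr0 : 0 < r := by linarith
  have hq0 : 0 < q := by linarith
  set N : ℝ → ℝ≥0∞ := fun t => ∫⁻ x, W x t ^ r with hN
  have hNm : Measurable N := by
    have h1 : Measurable fun z : ℝ × (Fin d → ℝ) => W z.2 z.1 ^ r := (hW.comp measurable_swap).pow_const r
    exact h1.lintegral_prod_right'
  set L : ℝ≥0∞ := ENNReal.ofReal R ^ r * volume (Metric.closedBall (0 : Fin d → ℝ) R) with hL
  have hLtop : L ≠ ⊤ := ENNReal.mul_ne_top (ENNReal.rpow_ne_top_of_nonneg hr0.le ENNReal.ofReal_ne_top) measure_closedBall_lt_top.ne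
  have hNL : ∀ t, N t ≤ L := by
    intro t
    calc N t ≤ ∫⁻ x, (Metric.closedBall (0 : Fin d → ℝ) R).indicator (fun _ => ENNReal.ofReal R ^ r) x := by
          refine lintegral_mono fun x => ?_
          by_cases h : W x t = 0
          · rw [h, ENNReal.zero_rpow_of_pos hr0]; exact zero_le
          · rw [Set.indicator_of_mem (by simpa using (hsupp x t h).1)]
            exact ENNReal.rpow_le_rpow (hWR x t) hr0.le
      _ = L := by rw [lintegral_indicator Metric.isClosed_closedBall.measurableSet]; simp [hL]
  have hNs : ∀ t, N t ≠ 0 → |t| ≤ R := by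
    intro t h
    by_contra h2
    refine h ?_
    simp only [hN]
    have : ∀ x, W x t ^ r = 0 := fun x => by
      by_cases h3 : W x t = 0
      · rw [h3, ENNReal.zero_rpow_of_pos hr0]
      · exact absurd (hsupp x t h3).2.2 h2
    simp [this]
  set e : ℝ := (q - r) / r with he
  set ψ : ℝ → ℝ≥0∞ := fun t => if ENNReal.ofReal c ≤ N t then N t ^ e else 0 with hψ
  have hAm : MeasurableSet {t | ENNReal.ofReal c ≤ N t} := measurableSet_le measurable_const hNm
  have hψm : Measurable ψ := Measurable.ite hAm (hNm.pow_const _) measurable_const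
  set g : (Fin d → ℝ) → ℝ → ℝ≥0∞ := fun x t => W x t ^ (r - 1) * ψ t with hg
  have hgm : Measurable fun z : (Fin d → ℝ) × ℝ => g z.1 z.2 := (hW.pow_const _).mul (hψm.comp measurable_snd)
  have hc0 : ENNReal.ofReal c ≠ 0 := by simpa using hc
  have hψb : ∀ t, ψ t ≤ L ^ e + ENNReal.ofReal c ^ e := by
    intro t
    simp only [hψ]
    split_ifs with h
    · rcases le_total 0 e with h0 | h0
      · exact (ENNReal.rpow_le_rpow (hNL t) h0).trans le_self_add
      · refine le_trans ?_ le_add_self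
        obtain ⟨y, hy⟩ : ∃ y, e = -y := ⟨-e, by ring⟩
        rw [hy, ENNReal.rpow_neg, ENNReal.rpow_neg, ENNReal.inv_le_inv]
        exact ENNReal.rpow_le_rpow h (by linarith)
    · exact zero_le
  -- main integral
  set I : ℝ≥0∞ := ∫⁻ t, (if ENNReal.ofReal c ≤ N t then N t ^ (q / r) else 0) with hI
  have hItop : I ≠ ⊤ := by
    have : I ≤ ∫⁻ t, (Set.Icc (-R) R).indicator (fun _ => L ^ (q / r)) t := by
      refine lintegral_mono fun t => ?_
      simp only
      split_ifs with h
      · have : N t ≠ 0 := fun h0 => hc0 (le_antisymm (h.trans h0.le) zero_le)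
        rw [Set.indicator_of_mem (by have := hNs t this; exact abs_le.1 this)]
        exact ENNReal.rpow_le_rpow (hNL t) (by positivity)
      · exact zero_le
    refine ne_top_of_le_ne_top ?_ this
    rw [lintegral_indicator measurableSet_Icc]
    simp only [lintegral_const, Measure.restrict_apply MeasurableSet.univ, Set.univ_inter, Real.volume_Icc]
    exact ENNReal.mul_ne_top (ENNReal.rpow_ne_top_of_nonneg (by positivity) hLtop) ENNReal.ofReal_ne_top
  have hNt : ∀ t, N t ≠ ⊤ := fun t => ne_top_of_le_ne_top hLtop (hNL t)
  by_cases hLz : L = 0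
  · have : I = 0 := by
      rw [hI]
      have : ∀ t, (if ENNReal.ofReal c ≤ N t then N t ^ (q / r) else 0) = 0 := by
        intro t
        rw [if_neg]
        intro h
        exact hc0 (le_antisymm (h.trans ((hNL t).trans hLz.le)) zero_le)
      simp [this]
    rw [this]; exact zero_le
  have hKtop : ENNReal.ofReal R ^ (r - 1) * (L ^ e + ENNReal.ofReal c ^ e) ≠ ⊤ := by
    refine ENNReal.mul_ne_top (ENNReal.rpow_ne_top_of_nonneg hr1.le ENNReal.ofReal_ne_top) (ENNReal.add_ne_top.2 ⟨?_, ?_⟩)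
    · intro h; rw [ENNReal.rpow_eq_top_iff] at h; rcases h with h | h
      · exact hLz h.1
      · exact hLtop h.1
    · intro h; rw [ENNReal.rpow_eq_top_iff] at h; rcases h with h | h
      · exact hc0 h.1
      · exact ENNReal.ofReal_ne_top h.1
  have h1 := hM g (ENNReal.ofReal R ^ (r - 1) * (L ^ e + ENNReal.ofReal c ^ e)).toReal hgm
    (fun x t => by
      rw [ENNReal.ofReal_toReal hKtop]
      exact mul_le_mul' (ENNReal.rpow_le_rpow (hWR x t) hr1.le) (hψb t))
    (fun x t h => hsupp x t fun h0 => h (by simp only [hg]; rw [h0, ENNReal.zero_rpow_of_pos hr1, zero_mul]))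
  have h2 : I ≤ ∫⁻ t, ∫⁻ x, V x t * g x t := by
    refine lintegral_mono fun t => ?_
    simp only
    have hWt : Measurable fun x => W x t ^ r := (hW.comp (measurable_prodMk_right (y := t))).pow_const r
    calc _ = N t * ψ t := by
          simp only [hψ]
          split_ifs with h
          · have : N t ≠ 0 := fun h0 => hc0 (le_antisymm (h.trans h0.le) zero_le)
            nth_rw 2 [← ENNReal.rpow_one (N t)]
            rw [← ENNReal.rpow_add _ _ this (hNt t)]
            congr 1
            rw [he]; field_simp; ring
          · simp
      _ = ∫⁻ x, W x t ^ r * ψ t := by rw [lintegral_mul_const _ hWt]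
      _ ≤ _ := by
        refine lintegral_mono fun x => ?_
        simp only [hg]
        rw [← mul_assoc]
        gcongr
        calc W x t ^ r = W x t ^ (1 + (r - 1)) := by congr 1; ring
          _ = W x t * W x t ^ (r - 1) := by rw [ENNReal.rpow_add_of_nonneg _ _ zero_le_one hr1.le, ENNReal.rpow_one]
          _ ≤ _ := by gcongr; exact hWV x t
  have h3 : mixE d (q / (q - 1)) (r / (r - 1)) g = I ^ (1 - 1 / q) := by
    unfold mixE
    have : 1 / (q / (q - 1)) = 1 - 1 / q := by field_simp
    rw [this]
    congr 1
    refine lintegral_congr fun t => ?_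
    have hWt : Measurable fun x => W x t ^ r := (hW.comp (measurable_prodMk_right (y := t))).pow_const r
    have e1 : ∀ x, g x t ^ (r / (r - 1)) = W x t ^ r * ψ t ^ (r / (r - 1)) := by
      intro x
      simp only [hg]
      rw [ENNReal.mul_rpow_of_nonneg _ _ (by positivity), ← ENNReal.rpow_mul]
      congr 2
      field_simp
    simp_rw [e1]
    rw [lintegral_mul_const _ hWt]
    simp only [hψ]
    split_ifs with h
    · have : N t ≠ 0 := fun h0 => hc0 (le_antisymm (h.trans h0.le) zero_le)
      change (N t * _) ^ _ = _
      nth_rw 1 [← ENNReal.rpow_one (N t)]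
      rw [← ENNReal.rpow_mul, ← ENNReal.rpow_add _ _ this (hNt t), ← ENNReal.rpow_mul]
      congr 1
      rw [he]; field_simp; ring
    · rw [ENNReal.zero_rpow_of_pos (by positivity), mul_zero, ENNReal.zero_rpow_of_pos (by positivity)]
  rw [h3] at h1
  have h4 := h2.trans h1
  by_cases hI0 : I = 0
  · rw [hI0]; exact zero_le
  have h5 : I ^ (1 / q) ≤ M := by
    have hne : I ^ (1 - 1 / q) ≠ 0 := by
      intro h; rw [ENNReal.rpow_eq_zero_iff] at h; rcases h with h | h
      · exact hI0 h.1
      · exact hItop h.1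
    have hnt : I ^ (1 - 1 / q) ≠ ⊤ := by
      intro h; rw [ENNReal.rpow_eq_top_iff] at h; rcases h with h | h
      · exact hI0 h.1
      · exact hItop h.1
    refine (ENNReal.mul_le_mul_iff_left hne hnt).1 ?_
    rw [← ENNReal.rpow_add _ _ hI0 hItop]
    have : 1 / q + (1 - 1 / q) = 1 := by ring
    rw [this, ENNReal.rpow_one]
    exact h4
  calc I = (I ^ (1 / q)) ^ q := by rw [← ENNReal.rpow_mul, one_div_mul_cancel hq0.ne', ENNReal.rpow_one]
    _ ≤ M ^ q := ENNReal.rpow_le_rpow h5 hq0.le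

lemma dual (d : ℕ) {q r : ℝ} (hq : 2 < q) (hr : 2 ≤ r) {V : (Fin d → ℝ) → ℝ → ℝ≥0∞} (hV : Measurable fun z : (Fin d → ℝ) × ℝ => V z.1 z.2) {M : ℝ≥0∞}
    (hM : ∀ (g : (Fin d → ℝ) → ℝ → ℝ≥0∞) (K R δ : ℝ), 0 < δ → (Measurable fun z : (Fin d → ℝ) × ℝ => g z.1 z.2) → (∀ x t, g x t ≤ ENNReal.ofReal K) →
      (∀ x t, g x t ≠ 0 → ‖x‖ ≤ R ∧ δ ≤ |t| ∧ |t| ≤ R) → ∫⁻ t, ∫⁻ x, V x t * g x t ≤ M * mixE d (q / (q - 1)) (r / (r - 1)) g) :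
    mixE d q r V ≤ M := by
  have hr0 : 0 < r := by linarith
  have hq0 : 0 < q := by linarith
  set S : ℕ → Set ((Fin d → ℝ) × ℝ) := fun n => {z | ‖z.1‖ ≤ (n : ℝ) ∧ 1 / ((n : ℝ) + 1) ≤ |z.2| ∧ |z.2| ≤ (n : ℝ)} with hS
  have hSm : ∀ n, MeasurableSet (S n) := fun n => by
    have m1 : Measurable fun z : (Fin d → ℝ) × ℝ => ‖z.1‖ := by fun_prop
    have m2 : Measurable fun z : (Fin d → ℝ) × ℝ => |z.2| := continuous_abs.measurable.comp measurable_snd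
    exact (measurableSet_le m1 measurable_const).inter ((measurableSet_le measurable_const m2).inter (measurableSet_le m2 measurable_const))
  set W : ℕ → (Fin d → ℝ) → ℝ → ℝ≥0∞ := fun n x t => (S n).indicator (fun z => min (V z.1 z.2) (ENNReal.ofReal n)) (x, t) with hW
  have hWm : ∀ n, Measurable fun z : (Fin d → ℝ) × ℝ => W n z.1 z.2 := fun n => (hV.min measurable_const).indicator (hSm n)
  have hstep : ∀ n : ℕ, ∫⁻ t, (if ENNReal.ofReal (1 / ((n : ℝ) + 1)) ≤ ∫⁻ x, W n x t ^ r then (∫⁻ x, W n x t ^ r) ^ (q / r) else 0) ≤ M ^ q := by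
    intro n
    refine dual_step d hq hr (hWm n) (V := V) ?_ (c := 1 / ((n : ℝ) + 1)) (R := n) (δ := 1 / ((n : ℝ) + 1)) (by positivity) ?_ ?_ ?_
    · intro x t; exact (Set.indicator_le_self _ _ _).trans (min_le_left _ _)
    · intro x t; exact (Set.indicator_le_self _ _ _).trans (min_le_right _ _)
    · intro x t h; exact (Set.mem_of_indicator_ne_zero h : (x, t) ∈ S n)
    · intro g K h1 h2 h3; exact hM g K n _ (by positivity) h1 h2 h3
  have hSmono : ∀ {m n : ℕ}, m ≤ n → S m ⊆ S n := by
    intro m n h z hz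
    have h' : (m : ℝ) ≤ n := by exact_mod_cast h
    exact ⟨hz.1.trans h', le_trans (one_div_le_one_div_of_le (by positivity) (by linarith)) hz.2.1, hz.2.2.trans h'⟩
  have hWmono : ∀ x t, Monotone fun n => W n x t := by
    intro x t m n h
    have h' : (m : ℝ) ≤ n := by exact_mod_cast h
    refine (Set.indicator_le_indicator_of_subset (hSmono h) (fun _ => zero_le) (x, t)).trans ?_
    refine Set.indicator_le_indicator ?_
    exact min_le_min le_rfl (ENNReal.ofReal_le_ofReal h')
  have hWlim : ∀ x t, t ≠ 0 → Tendsto (fun n => W n x t) atTop (𝓝 (V x t)) := by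
    intro x t ht
    have hm : Tendsto (fun n : ℕ => min (V x t) (ENNReal.ofReal n)) atTop (𝓝 (min (V x t) ⊤)) := by
      refine tendsto_const_nhds.min ?_
      simp only [ENNReal.ofReal_natCast]
      exact ENNReal.tendsto_nat_nhds_top
    rw [min_top_right] at hm
    refine hm.congr' ?_
    obtain ⟨n₁, hn₁⟩ := exists_nat_ge ‖x‖
    obtain ⟨n₂, hn₂⟩ := exists_nat_ge |t|
    obtain ⟨n₃, hn₃⟩ := exists_nat_one_div_lt (abs_pos.2 ht)
    filter_upwards [eventually_ge_atTop (n₁ + n₂ + n₃)] with n hn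
    have hn' : (n₁ : ℝ) + n₂ + n₃ ≤ n := by exact_mod_cast hn
    have p1 : (0:ℝ) ≤ n₁ := Nat.cast_nonneg _
    have p2 : (0:ℝ) ≤ n₂ := Nat.cast_nonneg _
    have p3 : (0:ℝ) ≤ n₃ := Nat.cast_nonneg _
    have : (x, t) ∈ S n := ⟨by simp only; linarith, le_trans (one_div_le_one_div_of_le (by positivity) (by linarith)) hn₃.le, by simp only; linarith⟩
    simp only [hW]
    rw [Set.indicator_of_mem this]
  have hNlim : ∀ t, t ≠ 0 → Tendsto (fun n => ∫⁻ x, W n x t ^ r) atTop (𝓝 (∫⁻ x, V x t ^ r)) := by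
    intro t ht
    refine lintegral_tendsto_of_tendsto_of_monotone ?_ ?_ ?_
    · exact fun n => (((hWm n).comp (measurable_prodMk_right (y := t))).pow_const r).aemeasurable
    · exact Eventually.of_forall fun x m n h => ENNReal.rpow_le_rpow (hWmono x t h) hr0.le
    · exact Eventually.of_forall fun x => (ENNReal.continuous_rpow_const.tendsto _).comp (hWlim x t ht)
  have hae : ∀ᵐ t : ℝ, (∫⁻ x, V x t ^ r) ^ (q / r) = liminf (fun n : ℕ => if ENNReal.ofReal (1 / ((n : ℝ) + 1)) ≤ ∫⁻ x, W n x t ^ r then (∫⁻ x, W n x t ^ r) ^ (q / r) else 0) atTop := by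
    have : ∀ᵐ t : ℝ, t ≠ 0 := by simp [ae_iff]
    filter_upwards [this] with t ht
    have hl := hNlim t ht
    symm
    apply Tendsto.liminf_eq
    rcases eq_or_ne (∫⁻ x, V x t ^ r) 0 with h0 | h0
    · rw [h0, ENNReal.zero_rpow_of_pos (by positivity)]
      rw [h0] at hl
      have h2 : Tendsto (fun n => (∫⁻ x, W n x t ^ r) ^ (q / r)) atTop (𝓝 (0 ^ (q / r))) := (ENNReal.continuous_rpow_const.tendsto _).comp hl
      rw [ENNReal.zero_rpow_of_pos (by positivity)] at h2
      refine tendsto_of_tendsto_of_tendsto_of_le_of_le tendsto_const_nhds h2 (fun _ => zero_le) fun n => ?_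
      simp only
      split_ifs
      · exact le_rfl
      · exact zero_le
    · have h2 : Tendsto (fun n => (∫⁻ x, W n x t ^ r) ^ (q / r)) atTop (𝓝 ((∫⁻ x, V x t ^ r) ^ (q / r))) := (ENNReal.continuous_rpow_const.tendsto _).comp hl
      refine h2.congr' ?_
      have h3 : Tendsto (fun n : ℕ => ENNReal.ofReal (1 / ((n : ℝ) + 1))) atTop (𝓝 0) := by
        have := ENNReal.tendsto_ofReal (tendsto_one_div_add_atTop_nhds_zero_nat (𝕜 := ℝ))
        simpa using this
      filter_upwards [h3.eventually_lt hl (pos_iff_ne_zero.2 h0)] with n hn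
      rw [if_pos hn.le]
  have hmeas : ∀ n : ℕ, Measurable fun t : ℝ => if ENNReal.ofReal (1 / ((n : ℝ) + 1)) ≤ ∫⁻ x, W n x t ^ r then (∫⁻ x, W n x t ^ r) ^ (q / r) else 0 := by
    intro n
    have h1 : Measurable fun z : ℝ × (Fin d → ℝ) => W n z.2 z.1 ^ r := ((hWm n).comp measurable_swap).pow_const r
    have h2 : Measurable fun t => ∫⁻ x, W n x t ^ r := h1.lintegral_prod_right'
    exact Measurable.ite (measurableSet_le measurable_const h2) (h2.pow_const _) measurable_const
  have hfin : ∫⁻ t : ℝ, (∫⁻ x, V x t ^ r) ^ (q / r) ≤ M ^ q := by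
    rw [lintegral_congr_ae hae]
    refine (lintegral_liminf_le hmeas).trans ?_
    refine le_trans (liminf_le_liminf (Eventually.of_forall hstep)) ?_
    simp
  unfold mixE
  calc _ ≤ (M ^ q) ^ (1 / q) := ENNReal.rpow_le_rpow hfin (by positivity)
    _ = M := by rw [← ENNReal.rpow_mul, mul_one_div_cancel hq0.ne', ENNReal.rpow_one]


def wZ (a : ℝ) : Measure ℝ := ((volume : Measure ℝ).restrict (Set.Ioi 0)).withDensity fun z => ENNReal.ofReal (z ^ a)

instance (a : ℝ) : SFinite (wZ a) := by unfold wZ; infer_instance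

lemma wZ_dens_meas (a : ℝ) : Measurable fun z : ℝ => ENNReal.ofReal (z ^ a) := by fun_prop

lemma wZ_integral (a : ℝ) (f : ℝ → ℂ) : ∫ ζ, f ζ ∂(wZ a) = ∫ ζ in Set.Ioi (0:ℝ), f ζ * ((ζ ^ a : ℝ) : ℂ) := by
  unfold wZ
  rw [integral_withDensity_eq_integral_toReal_smul (wZ_dens_meas a) (Eventually.of_forall fun _ => ENNReal.ofReal_lt_top)]
  refine setIntegral_congr_fun measurableSet_Ioi fun ζ hζ => ?_
  rw [ENNReal.toReal_ofReal (Real.rpow_nonneg (le_of_lt hζ) _), Complex.real_smul, mul_comm]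

lemma wZ_lintegral (a : ℝ) {f : ℝ → ℝ≥0∞} (hf : Measurable f) : ∫⁻ ζ, f ζ ∂(wZ a) = ∫⁻ ζ in Set.Ioi (0:ℝ), f ζ * ENNReal.ofReal (ζ ^ a) := by
  unfold wZ
  rw [lintegral_withDensity_eq_lintegral_mul _ (wZ_dens_meas a) hf]
  refine lintegral_congr fun ζ => ?_
  simp only [Pi.mul_apply]
  rw [mul_comm]

lemma wZ_ae_pos (a : ℝ) : ∀ᵐ ζ ∂(wZ a), 0 < ζ := by
  unfold wZ
  exact (withDensity_absolutelyContinuous _ _) (ae_restrict_mem measurableSet_Ioi)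

lemma wZ_gauss {a : ℝ} (ha : 0 ≤ a) {ε : ℝ} (hε : 0 < ε) : Integrable (fun ζ : ℝ => Real.exp (-(ε * ζ ^ 2))) (wZ a) := by
  unfold wZ
  rw [integrable_withDensity_iff_integrable_smul' (wZ_dens_meas a) (Eventually.of_forall fun _ => ENNReal.ofReal_lt_top)]
  have h := integrableOn_rpow_mul_exp_neg_mul_sq hε (s := a) (by linarith)
  refine IntegrableOn.congr_fun h (fun ζ hζ => ?_) measurableSet_Ioi
  rw [ENNReal.toReal_ofReal (Real.rpow_nonneg (le_of_lt hζ) _), smul_eq_mul, neg_mul]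

lemma omega_eq (d : ℕ) (a : ℝ) : ωa d a = (volume : Measure (Fin d → ℝ)).prod (wZ a) := rfl

lemma ae_ne (c : ℝ) : ∀ᵐ t : ℝ, t ≠ c := by simp [ae_iff]

def cH (q : ℝ) : ℝ≥0∞ := 4 * (2 * ENNReal.ofReal (1 / (1 - 2 / q)) + 4)

lemma st_bound (d : ℕ) {q r : ℝ} (hq : 2 < q) (hr : 2 ≤ r) {f g : (Fin d → ℝ) → ℝ → ℝ≥0∞} (hf : Measurable fun z : (Fin d → ℝ) × ℝ => f z.1 z.2)
    (hg : Measurable fun z : (Fin d → ℝ) × ℝ => g z.1 z.2) {C0 : ℝ≥0∞} {A : ℝ → ℝ → ℝ≥0∞}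
    (hA : ∀ t s, t ≠ 0 → s ≠ 0 → t ≠ s → A t s ≤ C0 * ((∫⁻ x, f x s ^ (r / (r - 1))) ^ (1 / (r / (r - 1))) * (∫⁻ x, g x t ^ (r / (r - 1))) ^ (1 / (r / (r - 1))) * hK (2 / q) (t - s))) :
    ∫⁻ t, ∫⁻ s, A t s ≤ C0 * (cH q * (mixE d (q / (q - 1)) (r / (r - 1)) f * mixE d (q / (q - 1)) (r / (r - 1)) g)) := by
  have hr1 : 0 < r - 1 := by linarith
  have hq1 : 0 < q - 1 := by linarith
  set r' := r / (r - 1) with hr'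
  have hr'0 : 0 < r' := by rw [hr']; exact div_pos (by linarith) hr1
  set p := q / (q - 1) with hp
  have hN : ∀ {f : (Fin d → ℝ) → ℝ → ℝ≥0∞}, (Measurable fun z : (Fin d → ℝ) × ℝ => f z.1 z.2) → Measurable fun s => (∫⁻ x, f x s ^ r') ^ (1 / r') := by
    intro f hf
    have h1 : Measurable fun z : ℝ × (Fin d → ℝ) => f z.2 z.1 ^ r' := (hf.comp measurable_swap).pow_const r'
    exact h1.lintegral_prod_right'.pow_const _
  have hm : ∀ f : (Fin d → ℝ) → ℝ → ℝ≥0∞, mixE d p r' f = (∫⁻ s, ((∫⁻ x, f x s ^ r') ^ (1 / r')) ^ p) ^ (1 / p) := by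
    intro f
    unfold mixE
    simp_rw [← ENNReal.rpow_mul, one_div_mul_eq_div]
  have h := hls hq rfl hp _ _ (hN hf) (hN hg)
  rw [← hm, ← hm] at h
  have hk := hK_meas (2 / q)
  calc ∫⁻ t, ∫⁻ s, A t s ≤ ∫⁻ t, ∫⁻ s, C0 * ((∫⁻ x, f x s ^ r') ^ (1 / r') * (∫⁻ x, g x t ^ r') ^ (1 / r') * hK (2 / q) (t - s)) := by
        refine lintegral_mono_ae ?_
        filter_upwards [ae_ne 0] with t ht
        refine lintegral_mono_ae ?_
        filter_upwards [ae_ne 0, ae_ne t] with s hs hst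
        exact hA t s ht hs hst.symm
    _ = C0 * ∫⁻ t, ∫⁻ s, ((∫⁻ x, f x s ^ r') ^ (1 / r') * (∫⁻ x, g x t ^ r') ^ (1 / r') * hK (2 / q) (t - s)) := by
        have hm2 : Measurable fun w : ℝ × ℝ => ((∫⁻ x, f x w.2 ^ r') ^ (1 / r') * (∫⁻ x, g x w.1 ^ r') ^ (1 / r') * hK (2 / q) (w.1 - w.2)) :=
          (((hN hf).comp measurable_snd).mul ((hN hg).comp measurable_fst)).mul (hk.comp (measurable_fst.sub measurable_snd))
        rw [← lintegral_const_mul _ hm2.lintegral_prod_right']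
        refine lintegral_congr fun t => ?_
        exact lintegral_const_mul _ (hm2.comp (measurable_prodMk_left (x := t)))
    _ ≤ _ := by gcongr; exact h

lemma AF_pow (d : ℕ) (r : ℝ) (u : ℝ) : AF d u ^ (1 - 2 / r) = (4 * Real.pi) ^ (-((d : ℝ) / 2 * (1 - 2 / r))) * |u| ^ (-((d : ℝ) / 2 * (1 - 2 / r))) := by
  unfold AF
  rw [← Real.rpow_mul (by positivity), Real.mul_rpow (by positivity) (abs_nonneg _), neg_mul]

lemma holder_x {α : Type*} [MeasurableSpace α] (μ : Measure α) {r : ℝ} (hr : 2 ≤ r) {f g : α → ℝ≥0∞} (hf : Measurable f) (hg : Measurable g) :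
    ∫⁻ x, f x * g x ∂μ ≤ (∫⁻ x, f x ^ r ∂μ) ^ (1 / r) * (∫⁻ x, g x ^ (r / (r - 1)) ∂μ) ^ (1 / (r / (r - 1))) := by
  have : r.HolderConjugate (r / (r - 1)) := by
    have := Real.HolderConjugate.conjExponent (p := r) (by linarith)
    exact this
  exact ENNReal.lintegral_mul_le_Lp_mul_Lq μ this hf.aemeasurable hg.aemeasurable

lemma cM_nonneg {r : ℝ} (hr : 2 ≤ r) : 0 ≤ cM r := by
  unfold cM
  split_ifs with h
  · norm_num
  · have : 0 < r - 2 := by rcases lt_or_eq_of_le hr with h1 | h1; · linarith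
                           · exact absurd h1.symm h
    positivity

def cD (d : ℕ) (r : ℝ) : ℝ := cM r * (4 * Real.pi) ^ (-((d : ℝ) / 2 * (1 - 2 / r)))

lemma disp_const (d : ℕ) {a q r : ℝ} (hr : 2 ≤ r) (hq : 2 < q) (hadm : 2 / q + (d : ℝ) / r = ((d : ℝ) + a + 1) / 2) {c u : ℝ} (hc : 0 ≤ c) (hu : u ≠ 0) :
    ENNReal.ofReal (c * |u| ^ (-((a + 1) / 2))) * ENNReal.ofReal (cM r * AF d u ^ (1 - 2 / r)) = ENNReal.ofReal (c * cD d r) * hK (2 / q) u := by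
  have hcM := cM_nonneg hr
  have hu' := abs_pos.2 hu
  have e : 2 / q = (a + 1) / 2 + (d : ℝ) / 2 * (1 - 2 / r) := by
    have : (d : ℝ) / 2 * (1 - 2 / r) = d / 2 - d / r := by ring
    rw [this]; linarith
  unfold hK cD
  rw [← ENNReal.ofReal_mul (by positivity), ← ENNReal.ofReal_mul (by positivity), AF_pow, e, neg_add, Real.rpow_add hu']
  congr 1
  ring


def kA (a z ε t t' : ℝ) : ℂ :=
  ∫ ζ, ((Real.exp (-(ε * ζ ^ 2)) : ℝ) : ℂ) * (SaP a z ζ t * (starRingEnd ℂ) (SaP a z ζ t')) ∂(wZ a)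

def cA (a : ℝ) : ℝ := 2 ^ (1 - a) * (Real.Gamma ((a + 1) / 2))⁻¹

lemma cA_nonneg {a : ℝ} (ha : 0 ≤ a) : 0 ≤ cA a := by
  have := Real.Gamma_pos_of_pos (show 0 < (a + 1) / 2 by linarith)
  unfold cA; positivity

lemma kA_bound {a : ℝ} (ha : 0 ≤ a) {z : ℝ} (hz : 0 ≤ z) {ε : ℝ} (hε : 0 < ε) {t t' : ℝ} (ht : t ≠ 0) (ht' : t' ≠ 0) (htt : t ≠ t') :
    ‖kA a z ε t t'‖ ≤ cA a * |t - t'| ^ (-((a + 1) / 2)) := by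
  unfold kA
  rw [wZ_integral]
  refine le_trans (le_of_eq ?_) (saP_kernel ha hz hε ht ht' htt)
  congr 1
  refine integral_congr_ae (Eventually.of_forall fun ζ => ?_)
  simp only
  ring

lemma kA_meas {a : ℝ} (ha : 0 ≤ a) (z ε : ℝ) : Measurable fun w : ℝ × ℝ => kA a z ε w.1 w.2 := by
  unfold kA
  have h1 := (saP_meas ha z).comp (by fun_prop : Measurable fun w : (ℝ × ℝ) × ℝ => (w.2, w.1.1))
  have h2 := Complex.continuous_conj.measurable.comp ((saP_meas ha z).comp (by fun_prop : Measurable fun w : (ℝ × ℝ) × ℝ => (w.2, w.1.2)))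
  have h3 : Measurable fun w : (ℝ × ℝ) × ℝ => ((Real.exp (-(ε * w.2 ^ 2)) : ℝ) : ℂ) := by fun_prop
  exact (h3.mul (h1.mul h2)).stronglyMeasurable.integral_prod_right'.measurable

lemma kernel_meas (d : ℕ) {a : ℝ} (ha : 0 ≤ a) (z : ℝ) :
    Measurable fun w : ((Fin d → ℝ) × ℝ) × ((Fin d → ℝ) × ℝ) => SaP a z w.1.2 w.2.2 * Sfree d w.2.1 w.1.1 w.2.2 := by
  have h1 := (saP_meas ha z).comp (by fun_prop : Measurable fun w : ((Fin d → ℝ) × ℝ) × ((Fin d → ℝ) × ℝ) => (w.1.2, w.2.2))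
  have h2 := (sfree_meas d).comp (by fun_prop : Measurable fun w : ((Fin d → ℝ) × ℝ) × ((Fin d → ℝ) × ℝ) => ((w.2.1, w.1.1), w.2.2))
  simp only [Function.comp_def] at h1 h2
  exact h1.mul h2

lemma kernel_bound (d : ℕ) {a : ℝ} (ha : 0 ≤ a) (z : ℝ) {δ : ℝ} (hδ : 0 < δ) {t : ℝ} (ht : δ ≤ |t|) (x y : Fin d → ℝ) (ζ : ℝ) :
    ‖SaP a z ζ t * Sfree d x y t‖ ≤ cS a * ((2 * δ) ^ ((a + 1) / 2))⁻¹ * (4 * Real.pi * δ) ^ (-((d : ℝ) / 2)) := by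
  have h0 := (cS_pos ha).le
  rw [norm_mul, sfree_norm]
  have hA := AF_nonneg d t
  refine mul_le_mul ((saP_norm_le ha z ζ t).trans ?_) ?_ hA (by positivity)
  · gcongr
  · unfold AF
    exact Real.rpow_le_rpow_of_nonpos (by positivity) (by gcongr) (by have : (0:ℝ) ≤ d := Nat.cast_nonneg d; linarith)

lemma bdd_supp_int {α : Type*} [NormedAddCommGroup α] [MeasurableSpace α] [BorelSpace α] [ProperSpace α] (μ : Measure α) [IsFiniteMeasureOnCompacts μ] (c R : ℝ) :
    Integrable ((Metric.closedBall (0 : α) R).indicator fun _ => c) μ := by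
  rw [integrable_indicator_iff Metric.isClosed_closedBall.measurableSet]
  exact integrableOn_const (hs := measure_closedBall_lt_top.ne)

lemma slice_int (d : ℕ) {G : (Fin d → ℝ) × ℝ → ℂ} (hG : Measurable G) {K R : ℝ} (hGK : ∀ P, ‖G P‖ ≤ K) (hGs : ∀ P, G P ≠ 0 → ‖P‖ ≤ R) (t : ℝ) :
    Integrable fun x => G (x, t) := by
  refine (bdd_supp_int volume K R).mono' (hG.comp (measurable_prodMk_right (y := t))).aestronglyMeasurable (Eventually.of_forall fun x => ?_)
  by_cases h : G (x, t) = 0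
  · rw [h, norm_zero]
    exact Set.indicator_nonneg (fun _ _ => (norm_nonneg _).trans (hGK 0)) _
  · have h2 := hGs _ h
    rw [Prod.norm_def] at h2
    rw [Set.indicator_of_mem (by simpa using (le_max_left _ _).trans h2)]
    exact hGK _

lemma tt_meas_aux {α γ : Type*} [MeasurableSpace α] [MeasurableSpace γ] (ν : Measure γ) [SFinite ν]
    {g : α → γ → ℂ} (hg : Measurable fun z : α × γ => g z.1 z.2) : Measurable fun x => ∫ y, g x y ∂ν :=
  hg.stronglyMeasurable.integral_prod_right'.measurable

set_option maxHeartbeats 1000000 in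
lemma tt_cut (d : ℕ) {a q r : ℝ} (ha : 0 ≤ a) (hr : 2 ≤ r) (hq : 2 < q) (hadm : 2 / q + (d : ℝ) / r = ((d : ℝ) + a + 1) / 2) {z : ℝ} (hz : 0 ≤ z)
    {ε : ℝ} (hε : 0 < ε) {G : (Fin d → ℝ) × ℝ → ℂ} (hG : Measurable G) {K R δ : ℝ} (hδ : 0 < δ) (hGK : ∀ P, ‖G P‖ ≤ K) (hGs : ∀ P, G P ≠ 0 → ‖P‖ ≤ R ∧ δ ≤ |P.2|) :
    ∫⁻ Y, ENNReal.ofReal (Real.exp (-(ε * ∑ i, Y.1 i ^ 2)) * Real.exp (-(ε * Y.2 ^ 2))) * ‖∫ P, G P * (SaP a z Y.2 P.2 * Sfree d P.1 Y.1 P.2)‖ₑ ^ (2:ℝ) ∂(ωa d a)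
      ≤ ENNReal.ofReal (cA a * cD d r) * (cH q * (mixE d (q / (q - 1)) (r / (r - 1)) (fun x t => ‖G (x, t)‖ₑ) * mixE d (q / (q - 1)) (r / (r - 1)) (fun x t => ‖G (x, t)‖ₑ))) := by
  set χ : (Fin d → ℝ) × ℝ → ℝ := fun Y => Real.exp (-(ε * ∑ i, Y.1 i ^ 2)) * Real.exp (-(ε * Y.2 ^ 2)) with hχ
  have hχi : Integrable χ (ωa d a) := by
    rw [omega_eq]
    exact (gauss_int d hε).mul_prod (wZ_gauss ha hε)
  have hχ0 : ∀ Y, 0 ≤ χ Y := fun Y => by simp only [hχ]; positivity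
  set g : (Fin d → ℝ) × ℝ → (Fin d → ℝ) × ℝ → ℂ := fun Y P => G P * (SaP a z Y.2 P.2 * Sfree d P.1 Y.1 P.2) with hg
  have hgm : Measurable fun w : ((Fin d → ℝ) × ℝ) × ((Fin d → ℝ) × ℝ) => g w.1 w.2 := by
    have h1 := hG.comp (measurable_snd : Measurable (Prod.snd : ((Fin d → ℝ) × ℝ) × ((Fin d → ℝ) × ℝ) → _))
    exact h1.mul (kernel_meas d ha z)
  have hK0 : 0 ≤ K := (norm_nonneg _).trans (hGK 0)
  have hcS := (cS_pos ha).le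
  set B0 : ℝ := K * (cS a * ((2 * δ) ^ ((a + 1) / 2))⁻¹ * (4 * Real.pi * δ) ^ (-((d : ℝ) / 2))) with hB0
  have hB00 : 0 ≤ B0 := by rw [hB0]; positivity
  set B : (Fin d → ℝ) × ℝ → ℝ := (Metric.closedBall 0 R).indicator fun _ => B0 with hB
  have hBi : Integrable B := bdd_supp_int volume B0 R
  have hgB : ∀ Y P, ‖g Y P‖ ≤ B P := by
    intro Y P
    simp only [hg]
    by_cases h : G P = 0
    · rw [h, zero_mul, norm_zero]; exact Set.indicator_nonneg (fun _ _ => hB00) _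
    · obtain ⟨h1, h2⟩ := hGs P h
      rw [hB, Set.indicator_of_mem (by simpa using h1), norm_mul, hB0]
      exact mul_le_mul (hGK P) (kernel_bound d ha z hδ h2 _ _ _) (norm_nonneg _) hK0
  have : SFinite (ωa d a) := by rw [omega_eq]; infer_instance
  obtain ⟨hint, hid⟩ := tt_identity (ωa d a) volume hgm hgB hBi hχi
  have e2 : ∀ w : ((Fin d → ℝ) × ℝ) × ((Fin d → ℝ) × ℝ), ∫ Y, (χ Y : ℂ) * (g Y w.1 * (starRingEnd ℂ) (g Y w.2)) ∂(ωa d a)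
      = G w.1 * (kA a z ε w.1.2 w.2.2 * (kF d ε w.1.2 w.2.2 w.1.1 w.2.1 * (starRingEnd ℂ) (G w.2))) := by
    intro w
    have : kA a z ε w.1.2 w.2.2 * kF d ε w.1.2 w.2.2 w.1.1 w.2.1 = ∫ Y : (Fin d → ℝ) × ℝ, (((Real.exp (-(ε * ∑ i, Y.1 i ^ 2)) : ℝ) : ℂ) * (Sfree d w.1.1 Y.1 w.1.2 * (starRingEnd ℂ) (Sfree d w.2.1 Y.1 w.2.2)))
        * (((Real.exp (-(ε * Y.2 ^ 2)) : ℝ) : ℂ) * (SaP a z Y.2 w.1.2 * (starRingEnd ℂ) (SaP a z Y.2 w.2.2))) ∂(ωa d a) := by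
      rw [omega_eq, integral_prod_mul (fun y : Fin d → ℝ => ((Real.exp (-(ε * ∑ i, y i ^ 2)) : ℝ) : ℂ) * (Sfree d w.1.1 y w.1.2 * (starRingEnd ℂ) (Sfree d w.2.1 y w.2.2)))
        (fun ζ : ℝ => ((Real.exp (-(ε * ζ ^ 2)) : ℝ) : ℂ) * (SaP a z ζ w.1.2 * (starRingEnd ℂ) (SaP a z ζ w.2.2)))]
      unfold kA kF
      ring
    calc _ = ∫ Y : (Fin d → ℝ) × ℝ, (G w.1 * (starRingEnd ℂ) (G w.2)) * ((((Real.exp (-(ε * ∑ i, Y.1 i ^ 2)) : ℝ) : ℂ) * (Sfree d w.1.1 Y.1 w.1.2 * (starRingEnd ℂ) (Sfree d w.2.1 Y.1 w.2.2)))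
        * (((Real.exp (-(ε * Y.2 ^ 2)) : ℝ) : ℂ) * (SaP a z Y.2 w.1.2 * (starRingEnd ℂ) (SaP a z Y.2 w.2.2)))) ∂(ωa d a) := by
          refine integral_congr_ae (Eventually.of_forall fun Y => ?_)
          simp only [hχ, hg, map_mul, Complex.ofReal_mul]
          ring
      _ = _ := by rw [integral_const_mul, ← this]; ring
  simp_rw [e2] at hint hid
  have hgI := tt_meas_aux volume hgm
  have e1 : ∫⁻ Y, ENNReal.ofReal (χ Y) * ‖∫ P, g Y P‖ₑ ^ (2:ℝ) ∂(ωa d a) = ‖((∫ Y, χ Y * ‖∫ P, g Y P‖ ^ 2 ∂(ωa d a) : ℝ) : ℂ)‖ₑ := by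
    have hi : Integrable (fun Y => χ Y * ‖∫ P, g Y P‖ ^ 2) (ωa d a) := by
      refine hχi.mul_bdd (c := (∫ P, B P) ^ 2) (hgI.norm.pow_const 2).aestronglyMeasurable (Eventually.of_forall fun Y => ?_)
      rw [norm_pow, norm_norm]
      have := norm_integral_le_of_norm_le hBi (Eventually.of_forall (hgB Y))
      gcongr
    rw [← ofReal_norm, Complex.norm_real, Real.norm_of_nonneg (integral_nonneg fun Y => mul_nonneg (hχ0 Y) (by positivity)),
      ofReal_integral_eq_lintegral_ofReal hi (Eventually.of_forall fun Y => mul_nonneg (hχ0 Y) (by positivity))]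
    refine lintegral_congr fun Y => ?_
    rw [ENNReal.ofReal_mul (hχ0 Y), ← ofReal_norm, ENNReal.ofReal_rpow_of_nonneg (norm_nonneg _) (by norm_num), Real.rpow_two]
  rw [e1, hid]
  -- the spacetime kernel bound
  set H : ((Fin d → ℝ) × ℝ) → ℝ → ℂ := fun P s => ∫ x', kF d ε P.2 s P.1 x' * (starRingEnd ℂ) (G (x', s)) with hH
  have hHm : Measurable fun w : ((Fin d → ℝ) × ℝ) × ℝ => H w.1 w.2 := by
    have h1 := (kF_meas d ε).comp (by fun_prop : Measurable fun w : (((Fin d → ℝ) × ℝ) × ℝ) × (Fin d → ℝ) => ((w.1.1, (w.2, w.1.2)) : ((Fin d → ℝ) × ℝ) × ((Fin d → ℝ) × ℝ)))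
    have h2 := Complex.continuous_conj.measurable.comp (hG.comp (by fun_prop : Measurable fun w : (((Fin d → ℝ) × ℝ) × ℝ) × (Fin d → ℝ) => (w.2, w.1.2)))
    simp only [Function.comp_def] at h1 h2
    exact (h1.mul h2).stronglyMeasurable.integral_prod_right'.measurable
  have hkm := kA_meas ha z ε
  have hDm : Measurable fun w : ((Fin d → ℝ) × ℝ) × ℝ => ‖G w.1‖ₑ * (‖kA a z ε w.1.2 w.2‖ₑ * ‖H w.1 w.2‖ₑ) := by
    have h1 := hkm.comp (by fun_prop : Measurable fun w : ((Fin d → ℝ) × ℝ) × ℝ => (w.1.2, w.2))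
    simp only [Function.comp_def] at h1
    exact (hG.comp measurable_fst).enorm.mul (h1.enorm.mul hHm.enorm)
  calc _ ≤ ∫⁻ P, ∫⁻ s, ‖G P‖ₑ * (‖kA a z ε P.2 s‖ₑ * ‖H P s‖ₑ) := by
        rw [integral_prod _ hint]
        refine (enorm_integral_le_lintegral_enorm _).trans (lintegral_mono_ae ?_)
        filter_upwards [hint.prod_right_ae] with P hP
        rw [Measure.volume_eq_prod] at hP ⊢
        rw [integral_prod_symm _ hP]
        refine (enorm_integral_le_lintegral_enorm _).trans (lintegral_mono fun s => ?_)
        simp only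
        rw [integral_const_mul, integral_const_mul, enorm_mul, enorm_mul]
    _ = ∫⁻ t, ∫⁻ s, ∫⁻ x, ‖G (x, t)‖ₑ * (‖kA a z ε t s‖ₑ * ‖H (x, t) s‖ₑ) := by
        rw [Measure.volume_eq_prod, lintegral_prod_symm _ hDm.lintegral_prod_right'.aemeasurable]
        refine lintegral_congr fun t => ?_
        refine lintegral_lintegral_swap ?_
        have h1 := hDm.comp (by fun_prop : Measurable fun w : (Fin d → ℝ) × ℝ => ((w.1, t), w.2))
        exact h1.aemeasurable
    _ ≤ _ := by
        have hGm : Measurable fun w : (Fin d → ℝ) × ℝ => ‖G (w.1, w.2)‖ₑ := hG.enorm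
        refine st_bound d hq hr hGm hGm fun t s ht hs hts => ?_
        have hm1 : Measurable fun x => ‖G (x, t)‖ₑ := (hG.comp (measurable_prodMk_right (y := t))).enorm
        have hm2 : Measurable fun x => ‖H (x, t) s‖ₑ := by
          have h1 := hHm.comp (by fun_prop : Measurable fun x : Fin d → ℝ => ((x, t), s))
          exact h1.enorm
        have hf1 : Measurable fun x => (starRingEnd ℂ) (G (x, s)) := Complex.continuous_conj.measurable.comp (hG.comp (measurable_prodMk_right (y := s)))
        have hf2 : Integrable fun x => (starRingEnd ℂ) (G (x, s)) := by
          refine (slice_int d hG hGK (fun P h => (hGs P h).1) s).mono hf1.aestronglyMeasurable (Eventually.of_forall fun x => ?_)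
          rw [RCLike.norm_conj]
        have hdisp := kF_disp d hε ht hs hts hr rfl hf1 hf2
        have hcj : ∀ x, ‖(starRingEnd ℂ) (G (x, s))‖ₑ = ‖G (x, s)‖ₑ := fun x => by rw [← ofReal_norm, ← ofReal_norm, RCLike.norm_conj]
        simp_rw [hcj] at hdisp
        have hk1 : ‖kA a z ε t s‖ₑ ≤ ENNReal.ofReal (cA a * |t - s| ^ (-((a + 1) / 2))) := by
          rw [← ofReal_norm]; exact ENNReal.ofReal_le_ofReal (kA_bound ha hz hε ht hs hts)
        calc ∫⁻ x, ‖G (x, t)‖ₑ * (‖kA a z ε t s‖ₑ * ‖H (x, t) s‖ₑ) = ‖kA a z ε t s‖ₑ * ∫⁻ x, ‖H (x, t) s‖ₑ * ‖G (x, t)‖ₑ := by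
              rw [← lintegral_const_mul' _ _ enorm_ne_top]
              refine lintegral_congr fun x => ?_
              ring
          _ ≤ ENNReal.ofReal (cA a * |t - s| ^ (-((a + 1) / 2))) * ((ENNReal.ofReal (cM r * AF d (t - s) ^ (1 - 2 / r)) * (∫⁻ x, ‖G (x, s)‖ₑ ^ (r / (r - 1))) ^ (1 / (r / (r - 1)))) * (∫⁻ x, ‖G (x, t)‖ₑ ^ (r / (r - 1))) ^ (1 / (r / (r - 1)))) := by
              refine mul_le_mul' hk1 ((holder_x volume hr hm2 hm1).trans ?_)
              exact mul_le_mul' hdisp le_rfl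
          _ = (ENNReal.ofReal (cA a * |t - s| ^ (-((a + 1) / 2))) * ENNReal.ofReal (cM r * AF d (t - s) ^ (1 - 2 / r))) * ((∫⁻ x, ‖G (x, s)‖ₑ ^ (r / (r - 1))) ^ (1 / (r / (r - 1))) * (∫⁻ x, ‖G (x, t)‖ₑ ^ (r / (r - 1))) ^ (1 / (r / (r - 1)))) := by ring
          _ = _ := by
              rw [disp_const d hr hq hadm (cA_nonneg ha) (sub_ne_zero.2 hts)]; ring

attribute [local irreducible] SaP Sfree


lemma tt_full (d : ℕ) {a q r : ℝ} (ha : 0 ≤ a) (hr : 2 ≤ r) (hq : 2 < q) (hadm : 2 / q + (d : ℝ) / r = ((d : ℝ) + a + 1) / 2) {z : ℝ} (hz : 0 ≤ z)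
    {G : (Fin d → ℝ) × ℝ → ℂ} (hG : Measurable G) {K R δ : ℝ} (hδ : 0 < δ) (hGK : ∀ P, ‖G P‖ ≤ K) (hGs : ∀ P, G P ≠ 0 → ‖P‖ ≤ R ∧ δ ≤ |P.2|) :
    ∫⁻ Y, ‖∫ P, G P * (SaP a z Y.2 P.2 * Sfree d P.1 Y.1 P.2)‖ₑ ^ (2:ℝ) ∂(ωa d a)
      ≤ ENNReal.ofReal (cA a * cD d r) * (cH q * (mixE d (q / (q - 1)) (r / (r - 1)) (fun x t => ‖G (x, t)‖ₑ) * mixE d (q / (q - 1)) (r / (r - 1)) (fun x t => ‖G (x, t)‖ₑ))) := by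
  have hgm : Measurable fun w : ((Fin d → ℝ) × ℝ) × ((Fin d → ℝ) × ℝ) => G w.2 * (SaP a z w.1.2 w.2.2 * Sfree d w.2.1 w.1.1 w.2.2) := by
    have h1 := hG.comp (measurable_snd : Measurable (Prod.snd : ((Fin d → ℝ) × ℝ) × ((Fin d → ℝ) × ℝ) → _))
    simp only [Function.comp_def] at h1
    exact h1.mul (kernel_meas d ha z)
  have hu : Measurable fun Y : (Fin d → ℝ) × ℝ => ‖∫ P, G P * (SaP a z Y.2 P.2 * Sfree d P.1 Y.1 P.2)‖ₑ ^ (2:ℝ) :=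
    (tt_meas_aux volume (g := fun Y P : (Fin d → ℝ) × ℝ => G P * (SaP a z Y.2 P.2 * Sfree d P.1 Y.1 P.2)) hgm).enorm.pow_const _
  have hχ : ∀ n : ℕ, Measurable fun Y : (Fin d → ℝ) × ℝ => ENNReal.ofReal (Real.exp (-((1 / ((n : ℝ) + 1)) * ∑ i, Y.1 i ^ 2)) * Real.exp (-((1 / ((n : ℝ) + 1)) * Y.2 ^ 2))) := fun n => by fun_prop
  refine lint_le_of_cut (ωa d a) hu hχ (fun Y => ?_) fun n => ?_
  rotate_left
  · have hε : 0 < 1 / ((n : ℝ) + 1) := by positivity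
    have h := tt_cut d ha hr hq hadm hz hε hG hδ hGK hGs
    exact h
  have := cut_tendsto (∑ i, Y.1 i ^ 2 + Y.2 ^ 2)
  refine this.congr fun n => ?_
  rw [← Real.exp_add]
  congr 2
  ring

lemma mixE_mono (d : ℕ) {q r : ℝ} (hq : 0 ≤ q) (hr : 0 ≤ r) {f g : (Fin d → ℝ) → ℝ → ℝ≥0∞} (h : ∀ x t, f x t ≤ g x t) : mixE d q r f ≤ mixE d q r g := by
  unfold mixE
  refine ENNReal.rpow_le_rpow (lintegral_mono fun t => ENNReal.rpow_le_rpow (lintegral_mono fun x => ENNReal.rpow_le_rpow (h x t) hr) (by positivity)) (by positivity)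

def Uh (d : ℕ) (a z : ℝ) (u : (Fin d → ℝ) × ℝ → ℂ) (P : (Fin d → ℝ) × ℝ) : ℂ :=
  ∫ Y, (SaP a z Y.2 P.2 * Sfree d P.1 Y.1 P.2) * u Y ∂(ωa d a)

def cT (d : ℕ) (a q r : ℝ) : ℝ≥0∞ := (ENNReal.ofReal (cA a * cD d r) * cH q) ^ (1 / 2 : ℝ)

lemma omega_sf (d : ℕ) (a : ℝ) : SFinite (ωa d a) := by rw [omega_eq]; infer_instance

lemma uh_meas (d : ℕ) {a : ℝ} (ha : 0 ≤ a) (z : ℝ) {u : (Fin d → ℝ) × ℝ → ℂ} (hu : Measurable u) : Measurable (Uh d a z u) := by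
  have := omega_sf d a
  have h1 : Measurable fun w : ((Fin d → ℝ) × ℝ) × ((Fin d → ℝ) × ℝ) => SaP a z w.2.2 w.1.2 * Sfree d w.1.1 w.2.1 w.1.2 := by
    have := (kernel_meas d ha z).comp measurable_swap
    simp only [Function.comp_def, Prod.fst_swap, Prod.snd_swap] at this
    exact this
  exact kint_meas (ωa d a) (k := fun P Y : (Fin d → ℝ) × ℝ => SaP a z Y.2 P.2 * Sfree d P.1 Y.1 P.2) h1 hu

set_option maxHeartbeats 1000000 in
lemma hom_est (d : ℕ) {a q r : ℝ} (ha : 0 ≤ a) (hr : 2 ≤ r) (hq : 2 < q) (hadm : 2 / q + (d : ℝ) / r = ((d : ℝ) + a + 1) / 2) {z : ℝ} (hz : 0 ≤ z)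
    {u : (Fin d → ℝ) × ℝ → ℂ} (hu : Measurable u) (hui : Integrable u (ωa d a)) :
    mixE d q r (fun x t => ‖Uh d a z u (x, t)‖ₑ) ≤ cT d a q r * eLpNorm u 2 (ωa d a) := by
  have hsf := omega_sf d a
  have hr1 : 0 < r - 1 := by linarith
  have hq1 : 0 < q - 1 := by linarith
  set U := Uh d a z u with hU
  have hUm : Measurable U := uh_meas d ha z hu
  refine dual d hq hr hUm.enorm fun g K R δ hδ hgm hgK hgs => ?_
  set G : (Fin d → ℝ) × ℝ → ℂ := fun P => ((g P.1 P.2).toReal : ℂ) * ((starRingEnd ℂ) (U P) / (‖U P‖ : ℂ)) with hG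
  have hGm : Measurable G := by
    refine (Complex.measurable_ofReal.comp hgm.ennreal_toReal).mul ?_
    exact (Complex.continuous_conj.measurable.comp hUm).div (Complex.measurable_ofReal.comp hUm.norm)
  have hgtop : ∀ x t, g x t ≠ ⊤ := fun x t => ne_top_of_le_ne_top ENNReal.ofReal_ne_top (hgK x t)
  have hGn : ∀ P, ‖G P‖ ≤ (g P.1 P.2).toReal := by
    intro P
    simp only [hG]
    rw [norm_mul, Complex.norm_real, Real.norm_of_nonneg ENNReal.toReal_nonneg, norm_div, RCLike.norm_conj, Complex.norm_real, norm_norm]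
    exact mul_le_of_le_one_right ENNReal.toReal_nonneg (div_self_le_one _)
  have hGe : ∀ x t, ‖G (x, t)‖ₑ ≤ g x t := by
    intro x t
    rw [← ofReal_norm]
    exact ENNReal.ofReal_le_of_le_toReal (hGn (x, t))
  have hGK : ∀ P, ‖G P‖ ≤ max K 0 := by
    intro P
    refine (hGn P).trans ?_
    refine ENNReal.toReal_le_of_le_ofReal (le_max_right _ _) ((hgK _ _).trans (ENNReal.ofReal_le_ofReal (le_max_left _ _)))
  have hGs : ∀ P, G P ≠ 0 → ‖P‖ ≤ R ∧ δ ≤ |P.2| := by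
    intro P h
    have : g P.1 P.2 ≠ 0 := by
      intro h0
      apply h
      simp only [hG]
      rw [h0]; simp
    obtain ⟨h1, h2, h3⟩ := hgs _ _ this
    exact ⟨by rw [Prod.norm_def]; exact max_le h1 h3, h2⟩
  have hGU : ∀ P, G P * U P = ((‖U P‖ * (g P.1 P.2).toReal : ℝ) : ℂ) := by
    intro P
    simp only [hG]
    by_cases h : U P = 0
    · rw [h]; simp
    · have h2 : (‖U P‖ : ℂ) ≠ 0 := by simpa using h
      rw [mul_assoc, div_mul_eq_mul_div, Complex.conj_mul']
      field_simp
      push_cast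
      ring
  have hK0 : 0 ≤ max K 0 := le_max_right _ _
  have hcS := (cS_pos ha).le
  set B0 : ℝ := max K 0 * (cS a * ((2 * δ) ^ ((a + 1) / 2))⁻¹ * (4 * Real.pi * δ) ^ (-((d : ℝ) / 2))) with hB0
  have hB00 : 0 ≤ B0 := by rw [hB0]; positivity
  set B : (Fin d → ℝ) × ℝ → ℝ := (Metric.closedBall 0 R).indicator fun _ => B0 with hB
  have hBi : Integrable B := bdd_supp_int volume B0 R
  have hgB : ∀ Y P : (Fin d → ℝ) × ℝ, ‖G P * (SaP a z Y.2 P.2 * Sfree d P.1 Y.1 P.2)‖ ≤ B P := by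
    intro Y P
    by_cases h : G P = 0
    · rw [h, zero_mul, norm_zero]; exact Set.indicator_nonneg (fun _ _ => hB00) _
    · obtain ⟨h1, h2⟩ := hGs P h
      rw [hB, Set.indicator_of_mem (by simpa using h1), norm_mul, hB0]
      exact mul_le_mul (hGK P) (kernel_bound d ha z hδ h2 _ _ _) (norm_nonneg _) hK0
  have hkm : Measurable fun w : ((Fin d → ℝ) × ℝ) × ((Fin d → ℝ) × ℝ) => G w.2 * (SaP a z w.1.2 w.2.2 * Sfree d w.2.1 w.1.1 w.2.2) := by
    have h1 := hGm.comp (measurable_snd : Measurable (Prod.snd : ((Fin d → ℝ) × ℝ) × ((Fin d → ℝ) × ℝ) → _))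
    simp only [Function.comp_def] at h1
    exact h1.mul (kernel_meas d ha z)
  have hint : Integrable (fun w : ((Fin d → ℝ) × ℝ) × ((Fin d → ℝ) × ℝ) => u w.1 * (G w.2 * (SaP a z w.1.2 w.2.2 * Sfree d w.2.1 w.1.1 w.2.2))) ((ωa d a).prod volume) := by
    refine (hui.norm.mul_prod hBi).mono' (((hu.comp measurable_fst).mul hkm).aestronglyMeasurable) (Eventually.of_forall fun w => ?_)
    rw [norm_mul]
    exact mul_le_mul_of_nonneg_left (hgB w.1 w.2) (norm_nonneg _)
  have hinner : ∀ P, ∫ Y, u Y * (G P * (SaP a z Y.2 P.2 * Sfree d P.1 Y.1 P.2)) ∂(ωa d a) = G P * U P := by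
    intro P
    rw [hU]
    unfold Uh
    rw [← integral_const_mul]
    refine integral_congr_ae (Eventually.of_forall fun Y => ?_)
    simp only
    ring
  have hGUi : Integrable fun P => G P * U P := by
    have := hint.integral_prod_right
    simp only [hinner] at this
    exact this
  have hswap : ∫ P, G P * U P = ∫ Y, u Y * (∫ P, G P * (SaP a z Y.2 P.2 * Sfree d P.1 Y.1 P.2)) ∂(ωa d a) := by
    have h1 := integral_prod _ hint
    have h2 := integral_prod_symm _ hint
    simp only [hinner] at h2
    rw [← h2, h1]
    refine integral_congr_ae (Eventually.of_forall fun Y => ?_)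
    simp only
    rw [integral_const_mul]
  have hwm : Measurable fun Y : (Fin d → ℝ) × ℝ => ∫ P, G P * (SaP a z Y.2 P.2 * Sfree d P.1 Y.1 P.2) :=
    tt_meas_aux volume (g := fun Y P : (Fin d → ℝ) × ℝ => G P * (SaP a z Y.2 P.2 * Sfree d P.1 Y.1 P.2)) hkm
  have hre : Integrable fun P : (Fin d → ℝ) × ℝ => ‖U P‖ * (g P.1 P.2).toReal := by
    refine hGUi.norm.congr (Eventually.of_forall fun P => ?_)
    simp only
    rw [hGU, Complex.norm_real, Real.norm_of_nonneg (by positivity)]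
  have hlhs : ∫⁻ t, ∫⁻ x, ‖U (x, t)‖ₑ * g x t = ‖∫ P, G P * U P‖ₑ := by
    have h1 : ∫⁻ t, ∫⁻ x, ‖U (x, t)‖ₑ * g x t = ∫⁻ P : (Fin d → ℝ) × ℝ, ‖U P‖ₑ * g P.1 P.2 := by
      have hm : Measurable fun P : (Fin d → ℝ) × ℝ => ‖U P‖ₑ * g P.1 P.2 := hUm.enorm.mul hgm
      rw [Measure.volume_eq_prod, lintegral_prod_symm _ hm.aemeasurable]
    rw [h1]
    simp_rw [hGU]
    rw [integral_complex_ofReal, ← ofReal_norm, Complex.norm_real, Real.norm_of_nonneg (integral_nonneg fun P => by positivity),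
      ofReal_integral_eq_lintegral_ofReal hre (Eventually.of_forall fun P => by positivity)]
    refine lintegral_congr fun P => ?_
    rw [ENNReal.ofReal_mul (norm_nonneg _), ofReal_norm, ENNReal.ofReal_toReal (hgtop _ _)]
  rw [hlhs, hswap]
  set m := mixE d (q / (q - 1)) (r / (r - 1)) (fun x t => ‖G (x, t)‖ₑ) with hm
  have hmle : m ≤ mixE d (q / (q - 1)) (r / (r - 1)) g := mixE_mono d (by positivity) (by positivity) hGe
  have hTT := tt_full d ha hr hq hadm hz hGm hδ hGK hGs
  rw [← hm] at hTT
  have h22 : (2:ℝ) / (2 - 1) = 2 := by norm_num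
  have heL : eLpNorm u 2 (ωa d a) = (∫⁻ Y, ‖u Y‖ₑ ^ (2:ℝ) ∂(ωa d a)) ^ (1 / 2 : ℝ) := by
    rw [eLpNorm_eq_lintegral_rpow_enorm_toReal (by norm_num) (by norm_num)]
    simp
  calc _ ≤ ∫⁻ Y, ‖u Y‖ₑ * ‖∫ P, G P * (SaP a z Y.2 P.2 * Sfree d P.1 Y.1 P.2)‖ₑ ∂(ωa d a) := by
        refine (enorm_integral_le_lintegral_enorm _).trans (le_of_eq ?_)
        simp_rw [enorm_mul]
    _ ≤ eLpNorm u 2 (ωa d a) * (∫⁻ Y, ‖∫ P, G P * (SaP a z Y.2 P.2 * Sfree d P.1 Y.1 P.2)‖ₑ ^ (2:ℝ) ∂(ωa d a)) ^ (1 / 2 : ℝ) := by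
        have := holder_x (ωa d a) (le_refl (2:ℝ)) hu.enorm hwm.enorm
        rw [h22, ← heL] at this
        exact this
    _ ≤ eLpNorm u 2 (ωa d a) * (ENNReal.ofReal (cA a * cD d r) * (cH q * (m * m))) ^ (1 / 2 : ℝ) := by
        gcongr
    _ = cT d a q r * eLpNorm u 2 (ωa d a) * m := by
        unfold cT
        have : (m * m) = m ^ (2:ℝ) := by rw [ENNReal.rpow_two, sq]
        rw [← mul_assoc (ENNReal.ofReal _), ENNReal.mul_rpow_of_nonneg _ _ (by norm_num), this, ← ENNReal.rpow_mul]
        norm_num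
        ring
    _ ≤ _ := by gcongr



lemma ton4 {α β γ δ : Type*} [MeasurableSpace α] [MeasurableSpace β] [MeasurableSpace γ] [MeasurableSpace δ] (μ : Measure α) (ν : Measure β) (ξ : Measure γ) (η : Measure δ)
    [SFinite μ] [SFinite ν] [SFinite ξ] [SFinite η] {H : α → β → γ → δ → ℝ≥0∞} (hH : Measurable fun w : ((α × β) × γ) × δ => H w.1.1.1 w.1.1.2 w.1.2 w.2) :
    ∫⁻ t, ∫⁻ x, ∫⁻ s, ∫⁻ z, H x t s z ∂η ∂ξ ∂μ ∂ν = ∫⁻ z, ∫⁻ t, ∫⁻ s, ∫⁻ x, H x t s z ∂μ ∂ξ ∂ν ∂η := by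
  calc _ = ∫⁻ t, ∫⁻ s, ∫⁻ x, ∫⁻ z, H x t s z ∂η ∂μ ∂ξ ∂ν := by
        refine lintegral_congr fun t => lintegral_lintegral_swap ?_
        exact (Measurable.lintegral_prod_right' (hH.comp (by fun_prop : Measurable fun w : (α × γ) × δ => (((w.1.1, t), w.1.2), w.2)))).aemeasurable
    _ = ∫⁻ t, ∫⁻ s, ∫⁻ z, ∫⁻ x, H x t s z ∂μ ∂η ∂ξ ∂ν := by
        refine lintegral_congr fun t => lintegral_congr fun s => lintegral_lintegral_swap ?_
        exact (hH.comp (by fun_prop : Measurable fun w : α × δ => (((w.1, t), s), w.2))).aemeasurable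
    _ = ∫⁻ t, ∫⁻ z, ∫⁻ s, ∫⁻ x, H x t s z ∂μ ∂ξ ∂η ∂ν := by
        refine lintegral_congr fun t => lintegral_lintegral_swap ?_
        exact (Measurable.lintegral_prod_right' (hH.comp (by fun_prop : Measurable fun w : (γ × δ) × α => (((w.2, t), w.1.1), w.1.2)))).aemeasurable
    _ = _ := by
        refine lintegral_lintegral_swap ?_
        have h1 := Measurable.lintegral_prod_right' (ν := μ) (hH.comp (by fun_prop : Measurable fun w : ((β × δ) × γ) × α => (((w.2, w.1.1.1), w.1.2), w.1.1.2)))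
        exact (Measurable.lintegral_prod_right' (ν := ξ) h1).aemeasurable

def kd (d : ℕ) (a z : ℝ) (F : ((Fin d → ℝ) × ℝ) × ℝ → ℂ) (x : Fin d → ℝ) (t s ζ : ℝ) : ℝ≥0∞ :=
  ‖SaP a z ζ (t - s)‖ₑ * ‖∫ y, Sfree d x y (t - s) * F ((y, ζ), s)‖ₑ

def Vd (d : ℕ) (a z : ℝ) (F : ((Fin d → ℝ) × ℝ) × ℝ → ℂ) (x : Fin d → ℝ) (t : ℝ) : ℝ≥0∞ :=
  ∫⁻ s, ∫⁻ ζ, kd d a z F x t s ζ ∂(wZ a)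

def cB (a : ℝ) : ℝ := cS a * (2 ^ ((a + 1) / 2))⁻¹

lemma cB_nonneg {a : ℝ} (ha : 0 ≤ a) : 0 ≤ cB a := by
  have := (cS_pos ha).le
  unfold cB; positivity

lemma saP_enorm {a : ℝ} (ha : 0 ≤ a) (z ζ t : ℝ) : ‖SaP a z ζ t‖ₑ ≤ ENNReal.ofReal (cB a * |t| ^ (-((a + 1) / 2))) := by
  rw [← ofReal_norm]
  refine ENNReal.ofReal_le_ofReal ((saP_norm_le ha z ζ t).trans (le_of_eq ?_))
  rw [Real.mul_rpow (by norm_num) (abs_nonneg t), Real.rpow_neg (abs_nonneg t), cB]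
  field_simp

lemma kd_meas (d : ℕ) {a : ℝ} (ha : 0 ≤ a) (z : ℝ) {F : ((Fin d → ℝ) × ℝ) × ℝ → ℂ} (hF : Measurable F) :
    Measurable fun w : (((Fin d → ℝ) × ℝ) × ℝ) × ℝ => kd d a z F w.1.1.1 w.1.1.2 w.1.2 w.2 := by
  have h1 := (saP_meas ha z).comp (by fun_prop : Measurable fun w : (((Fin d → ℝ) × ℝ) × ℝ) × ℝ => (w.2, w.1.1.2 - w.1.2))
  have h2 := (sfree_meas d).comp (by fun_prop : Measurable fun w : ((((Fin d → ℝ) × ℝ) × ℝ) × ℝ) × (Fin d → ℝ) => ((w.1.1.1.1, w.2), w.1.1.1.2 - w.1.1.2))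
  have h3 := hF.comp (by fun_prop : Measurable fun w : ((((Fin d → ℝ) × ℝ) × ℝ) × ℝ) × (Fin d → ℝ) => ((w.2, w.1.2), w.1.1.2))
  simp only [Function.comp_def] at h1 h2 h3
  unfold kd
  exact h1.enorm.mul (tt_meas_aux volume (g := fun (w : (((Fin d → ℝ) × ℝ) × ℝ) × ℝ) (y : Fin d → ℝ) => Sfree d w.1.1.1 y (w.1.1.2 - w.1.2) * F ((y, w.2), w.1.2)) (h2.mul h3)).enorm

lemma vd_meas (d : ℕ) {a : ℝ} (ha : 0 ≤ a) (z : ℝ) {F : ((Fin d → ℝ) × ℝ) × ℝ → ℂ} (hF : Measurable F) :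
    Measurable fun w : (Fin d → ℝ) × ℝ => Vd d a z F w.1 w.2 :=
  ((kd_meas d ha z hF).lintegral_prod_right').lintegral_prod_right'

lemma mixE_meas (d : ℕ) {F : ((Fin d → ℝ) × ℝ) × ℝ → ℂ} (hF : Measurable F) (q r : ℝ) : Measurable fun ζ => mixE d q r (fun x t => ‖F ((x, ζ), t)‖ₑ) := by
  unfold mixE
  have h1 : Measurable fun w : (ℝ × ℝ) × (Fin d → ℝ) => ‖F ((w.2, w.1.1), w.1.2)‖ₑ ^ r :=
    (hF.comp (by fun_prop : Measurable fun w : (ℝ × ℝ) × (Fin d → ℝ) => ((w.2, w.1.1), w.1.2))).enorm.pow_const _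
  have h2 := h1.lintegral_prod_right' (ν := volume)
  exact ((h2.pow_const (q / r)).lintegral_prod_right' (ν := volume)).pow_const _

lemma duh_est (d : ℕ) {a q r : ℝ} (ha : 0 ≤ a) (hr : 2 ≤ r) (hq : 2 < q) (hadm : 2 / q + (d : ℝ) / r = ((d : ℝ) + a + 1) / 2) (z : ℝ)
    {F : ((Fin d → ℝ) × ℝ) × ℝ → ℂ} (hF : Measurable F) (hFi : ∀ ζ s, Integrable fun y => F ((y, ζ), s)) :
    mixE d q r (Vd d a z F) ≤ ENNReal.ofReal (cB a * cD d r) * cH q * ∫⁻ ζ, mixE d (q / (q - 1)) (r / (r - 1)) (fun x t => ‖F ((x, ζ), t)‖ₑ) ∂(wZ a) := by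
  have hcB := cB_nonneg ha
  refine dual d hq hr (vd_meas d ha z hF) fun g K R δ hδ hgm hgK hgs => ?_
  set mg := mixE d (q / (q - 1)) (r / (r - 1)) g with hmg
  have hkm := kd_meas d ha z hF
  have hgtop : ∀ x t, g x t ≠ ⊤ := fun x t => ne_top_of_le_ne_top ENNReal.ofReal_ne_top (hgK x t)
  have hHm : Measurable fun w : (((Fin d → ℝ) × ℝ) × ℝ) × ℝ => kd d a z F w.1.1.1 w.1.1.2 w.1.2 w.2 * g w.1.1.1 w.1.1.2 := by
    have h1 := hgm.comp (by fun_prop : Measurable fun w : (((Fin d → ℝ) × ℝ) × ℝ) × ℝ => w.1.1)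
    simp only [Function.comp_def] at h1
    exact hkm.mul h1
  have e1 : ∫⁻ t, ∫⁻ x, Vd d a z F x t * g x t = ∫⁻ ζ, ∫⁻ t, ∫⁻ s, ∫⁻ x, kd d a z F x t s ζ * g x t ∂volume ∂volume ∂volume ∂(wZ a) := by
    rw [← ton4 volume volume volume (wZ a) hHm]
    refine lintegral_congr fun t => lintegral_congr fun x => ?_
    unfold Vd
    rw [← lintegral_mul_const' _ _ (hgtop x t)]
    refine lintegral_congr fun s => ?_
    rw [← lintegral_mul_const' _ _ (hgtop x t)]
  rw [e1]
  have hb : ∀ ζ, ∫⁻ t, ∫⁻ s, ∫⁻ x, kd d a z F x t s ζ * g x t ≤ ENNReal.ofReal (cB a * cD d r) * (cH q * (mixE d (q / (q - 1)) (r / (r - 1)) (fun x t => ‖F ((x, ζ), t)‖ₑ) * mg)) := by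
    intro ζ
    have hfm : Measurable fun w : (Fin d → ℝ) × ℝ => ‖F ((w.1, ζ), w.2)‖ₑ := by
      have h1 := hF.comp (by fun_prop : Measurable fun w : (Fin d → ℝ) × ℝ => ((w.1, ζ), w.2))
      exact h1.enorm
    refine st_bound d hq hr (f := fun x t => ‖F ((x, ζ), t)‖ₑ) hfm hgm fun t s _ _ hts => ?_
    have hu : t - s ≠ 0 := sub_ne_zero.mpr hts
    have hFs : Measurable fun y => F ((y, ζ), s) := hF.comp (by fun_prop : Measurable fun y : Fin d → ℝ => ((y, ζ), s))
    have hgs : Measurable fun x => g x t := hgm.comp (by fun_prop : Measurable fun x : Fin d → ℝ => (x, t))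
    have hWm : Measurable fun x => ∫ y, Sfree d x y (t - s) * F ((y, ζ), s) :=
      kint_meas volume (k := fun x y => Sfree d x y (t - s)) (sfree_meas2 d (t - s)) hFs
    have hdisp := free_disp d hu hr rfl hFs (hFi ζ s)
    set p := r / (r - 1) with hp
    set Nf := (∫⁻ x, ‖F ((x, ζ), s)‖ₑ ^ p) ^ (1 / p)
    set Ng := (∫⁻ x, g x t ^ p) ^ (1 / p)
    calc ∫⁻ x, kd d a z F x t s ζ * g x t = ‖SaP a z ζ (t - s)‖ₑ * ∫⁻ x, ‖∫ y, Sfree d x y (t - s) * F ((y, ζ), s)‖ₑ * g x t := by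
          unfold kd
          rw [← lintegral_const_mul' _ _ enorm_ne_top]
          simp only [mul_assoc]
      _ ≤ ENNReal.ofReal (cB a * |t - s| ^ (-((a + 1) / 2))) * ((ENNReal.ofReal (cM r * AF d (t - s) ^ (1 - 2 / r)) * Nf) * Ng) := by
          refine mul_le_mul' (saP_enorm ha _ _ _) ((holder_x volume hr hWm.enorm hgs).trans ?_)
          exact mul_le_mul' hdisp le_rfl
      _ = (ENNReal.ofReal (cB a * |t - s| ^ (-((a + 1) / 2))) * ENNReal.ofReal (cM r * AF d (t - s) ^ (1 - 2 / r))) * (Nf * Ng) := by ring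
      _ = _ := by
          rw [disp_const d hr hq hadm hcB hu]
          ring
  refine (lintegral_mono hb).trans ?_
  have hC : ENNReal.ofReal (cB a * cD d r) * cH q ≠ ⊤ := by
    refine ENNReal.mul_ne_top ENNReal.ofReal_ne_top ?_
    unfold cH
    finiteness
  have hmm : Measurable fun ζ => mixE d (q / (q - 1)) (r / (r - 1)) (fun x t => ‖F ((x, ζ), t)‖ₑ) := mixE_meas d hF _ _
  calc _ = ∫⁻ ζ, (ENNReal.ofReal (cB a * cD d r) * cH q) * (mixE d (q / (q - 1)) (r / (r - 1)) (fun x t => ‖F ((x, ζ), t)‖ₑ) * mg) ∂(wZ a) := by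
        refine lintegral_congr fun ζ => ?_
        ring
    _ ≤ _ := by
        rw [lintegral_const_mul' _ _ hC, lintegral_mul_const _ hmm]
        exact le_of_eq (by ring)



lemma mixE_add (d : ℕ) {q r : ℝ} (hq : 1 ≤ q) (hr : 1 ≤ r) {f g : (Fin d → ℝ) → ℝ → ℝ≥0∞} (hf : Measurable fun w : (Fin d → ℝ) × ℝ => f w.1 w.2) (hg : Measurable fun w : (Fin d → ℝ) × ℝ => g w.1 w.2) :
    mixE d q r (fun x t => f x t + g x t) ≤ mixE d q r f + mixE d q r g := by
  have key : ∀ h : (Fin d → ℝ) → ℝ → ℝ≥0∞, mixE d q r h = (∫⁻ t, ((∫⁻ x, h x t ^ r) ^ (1 / r)) ^ q) ^ (1 / q) := by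
    intro h
    unfold mixE
    simp_rw [← ENNReal.rpow_mul]
    congr 3
    ext t
    congr 1
    ring
  have hs : ∀ h : (Fin d → ℝ) → ℝ → ℝ≥0∞, (Measurable fun w : (Fin d → ℝ) × ℝ => h w.1 w.2) → Measurable fun t => (∫⁻ x, h x t ^ r) ^ (1 / r) := by
    intro h hh
    have h1 := (hh.comp measurable_swap).pow_const r
    exact (h1.lintegral_prod_right' (ν := volume)).pow_const _
  have hx : ∀ h : (Fin d → ℝ) → ℝ → ℝ≥0∞, (Measurable fun w : (Fin d → ℝ) × ℝ => h w.1 w.2) → ∀ t, Measurable fun x => h x t :=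
    fun h hh t => hh.comp measurable_prodMk_right
  rw [key, key, key]
  refine le_trans ?_ (ENNReal.lintegral_Lp_add_le (hs f hf).aemeasurable (hs g hg).aemeasurable hq)
  refine ENNReal.rpow_le_rpow (lintegral_mono fun t => ENNReal.rpow_le_rpow ?_ (by linarith)) (by positivity)
  exact ENNReal.lintegral_Lp_add_le (hx f hf t).aemeasurable (hx g hg t).aemeasurable hr

lemma omega_ae_pos (d : ℕ) (a : ℝ) : ∀ᵐ Y ∂(ωa d a), 0 < Y.2 := by
  rw [omega_eq]
  exact Measure.quasiMeasurePreserving_snd.ae (wZ_ae_pos a)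

lemma tstar_eq (d : ℕ) (a : ℝ) {z t : ℝ} (hz : 0 < z) (ht : t ≠ 0) (u : (Fin d → ℝ) × ℝ → ℂ) (x : Fin d → ℝ) : Tstar d a u (x, z) t = Uh d a z u (x, t) := by
  unfold Tstar Uh SK
  rw [if_neg ht]
  refine integral_congr_ae ?_
  filter_upwards [omega_ae_pos d a] with Y hY
  rw [saK_eq a hz hY ht]

lemma dop_le (d : ℕ) (a : ℝ) {z : ℝ} (hz : 0 < z) (F : ((Fin d → ℝ) × ℝ) × ℝ → ℂ) (x : Fin d → ℝ) (t : ℝ) :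
    ‖Dop d a (fun Y τ => F (Y, τ)) (x, z) t‖ₑ ≤ Vd d a z F x t := by
  unfold Dop
  rw [← ofReal_norm, intervalIntegral.norm_intervalIntegral_eq, ofReal_norm]
  refine (enorm_integral_le_lintegral_enorm _).trans ((setLIntegral_le_lintegral _ _).trans ?_)
  unfold Vd
  refine lintegral_mono_ae ?_
  filter_upwards [ae_ne t] with s hs
  have hu : t - s ≠ 0 := sub_ne_zero.mpr (Ne.symm hs)
  have e : ∫ Y, SK d a (x, z) Y (t - s) * F (Y, s) ∂(ωa d a) = ∫ Y : (Fin d → ℝ) × ℝ, SaP a z Y.2 (t - s) * (Sfree d x Y.1 (t - s) * F ((Y.1, Y.2), s)) ∂(volume.prod (wZ a)) := by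
    rw [← omega_eq]
    refine integral_congr_ae ?_
    filter_upwards [omega_ae_pos d a] with Y hY
    unfold SK
    rw [saK_eq a hz hY hu, mul_assoc]
  rw [e]
  by_cases hi : Integrable (fun Y : (Fin d → ℝ) × ℝ => SaP a z Y.2 (t - s) * (Sfree d x Y.1 (t - s) * F ((Y.1, Y.2), s))) (volume.prod (wZ a))
  · rw [integral_prod_symm _ hi]
    refine (enorm_integral_le_lintegral_enorm _).trans (lintegral_mono fun ζ => ?_)
    unfold kd
    dsimp only
    rw [integral_const_mul, enorm_mul]
  · rw [integral_undef hi]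
    simp

lemma schwartz_int (d : ℕ) {a : ℝ} (ha : 0 ≤ a) (ha1 : a ≤ 1) (u : SchwartzMap ((Fin d → ℝ) × ℝ) ℂ) : Integrable (fun X => u X) (ωa d a) := by
  have hm : Measurable fun X => u X := u.continuous.measurable
  refine ⟨hm.aestronglyMeasurable, ?_⟩
  have : (volume : Measure ((Fin d → ℝ) × ℝ)).IsAddHaarMeasure := by
    rw [Measure.volume_eq_prod]; infer_instance
  have h0 := u.integrable_pow_mul volume 0
  have h1 := u.integrable_pow_mul volume 1
  have h2 := (h0.add h1).lintegral_lt_top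
  refine lt_of_le_of_lt ?_ h2
  rw [omega_eq, lintegral_prod _ hm.enorm.aemeasurable, Measure.volume_eq_prod, lintegral_prod _ (by
    have : Measurable fun X => u X := hm
    refine Measurable.aemeasurable ?_
    simp only [Pi.add_apply]
    fun_prop)]
  refine lintegral_mono fun y => ?_
  have hmy : Measurable fun ζ => ‖u (y, ζ)‖ₑ := hm.enorm.comp measurable_prodMk_left
  rw [wZ_lintegral a hmy]
  refine le_trans (setLIntegral_mono_ae' measurableSet_Ioi (Eventually.of_forall fun ζ hζ => ?_)) (setLIntegral_le_lintegral _ _)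
  have hζ0 : 0 < ζ := hζ
  rw [← ofReal_norm, ← ENNReal.ofReal_mul (norm_nonneg _)]
  refine ENNReal.ofReal_le_ofReal ?_
  have hn : ζ ≤ ‖(y, ζ)‖ := by
    rw [Prod.norm_def]
    exact le_trans (le_abs_self ζ) (le_max_right _ _)
  have hb : ζ ^ a ≤ 1 + ‖(y, ζ)‖ := by
    rcases le_total ζ 1 with h | h
    · have := Real.rpow_le_one hζ0.le h ha
      linarith [norm_nonneg (y, ζ)]
    · have := Real.rpow_le_rpow_of_exponent_le h ha1
      rw [Real.rpow_one] at this
      linarith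
  simp only [Pi.add_apply, pow_zero, pow_one]
  nlinarith [norm_nonneg (u (y, ζ))]

lemma schwartz_slice (d : ℕ) (F : SchwartzMap (((Fin d → ℝ) × ℝ) × ℝ) ℂ) (ζ s : ℝ) : Integrable fun y => F ((y, ζ), s) := by
  set C := 2 ^ (d + 1) * ((Finset.Iic (d + 1, 0)).sup fun m => SchwartzMap.seminorm ℝ m.1 m.2) F with hC
  have hC1 : ∀ P, (1 + ‖P‖) ^ (d + 1) * ‖F P‖ ≤ C := by
    intro P
    have := SchwartzMap.one_add_le_sup_seminorm_apply (𝕜 := ℝ) (m := (d + 1, 0)) le_rfl le_rfl F P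
    rwa [norm_iteratedFDeriv_zero] at this
  have hi : Integrable fun y : Fin d → ℝ => C * (1 + ‖y‖) ^ (-((d : ℝ) + 1)) := (integrable_one_add_norm (by simp)).const_mul C
  have hm : Measurable fun y => F ((y, ζ), s) := F.continuous.measurable.comp (by fun_prop : Measurable fun y : Fin d → ℝ => ((y, ζ), s))
  refine hi.mono' hm.aestronglyMeasurable (Eventually.of_forall fun y => ?_)
  have hn : ‖y‖ ≤ ‖((y, ζ), s)‖ := by
    rw [Prod.norm_def, Prod.norm_def]
    exact (le_max_left _ _).trans (le_max_left _ _)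
  have hy := norm_nonneg y
  have h1 := hC1 ((y, ζ), s)
  rw [Real.rpow_neg (by positivity), ← div_eq_mul_inv, le_div_iff₀ (by positivity)]
  have e : (1 + ‖y‖) ^ ((d : ℝ) + 1) = (1 + ‖y‖) ^ (d + 1) := by
    rw [← Real.rpow_natCast]; push_cast; rfl
  rw [e, mul_comm]
  refine le_trans (mul_le_mul_of_nonneg_right ?_ (norm_nonneg _)) h1
  gcongr

lemma main_bound (d : ℕ) {a q r : ℝ} (ha : 0 ≤ a) (hr : 2 ≤ r) (hq : 2 < q) (hadm : 2 / q + (d : ℝ) / r = ((d : ℝ) + a + 1) / 2)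
    (u₀ : SchwartzMap ((Fin d → ℝ) × ℝ) ℂ) (F : SchwartzMap (((Fin d → ℝ) × ℝ) × ℝ) ℂ) {z : ℝ} (hz : 0 < z) :
    mixNorm d q r (fun x t => Tstar d a (fun Y => u₀ Y) (x, z) t + Dop d a (fun Y τ => F (Y, τ)) (x, z) t)
      ≤ cT d a q r * eLpNorm (fun X => u₀ X) 2 (ωa d a) + ENNReal.ofReal (cB a * cD d r) * cH q *
        ∫⁻ ζ in Set.Ioi (0 : ℝ), mixNorm d (q / (q - 1)) (r / (r - 1)) (fun x t => F ((x, ζ), t)) * ENNReal.ofReal (ζ ^ a) := by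
  have ha1 : a ≤ 1 := by
    have h1 : 2 / q < 1 := by rw [div_lt_one (by linarith)]; exact hq
    have h2 : (d : ℝ) / r ≤ d / 2 := by gcongr
    linarith
  have hum : Measurable fun X => u₀ X := u₀.continuous.measurable
  have hFm : Measurable fun X => F X := F.continuous.measurable
  have hU := uh_meas d ha z hum
  have hV := vd_meas d ha z hFm
  have e : ∀ q r : ℝ, ∀ Φ : (Fin d → ℝ) → ℝ → ℂ, mixNorm d q r Φ = mixE d q r fun x t => ‖Φ x t‖ₑ := fun _ _ _ => rfl
  simp only [e]
  rw [← wZ_lintegral a (mixE_meas d hFm _ _)]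
  refine le_trans ?_ (add_le_add (hom_est d ha hr hq hadm hz.le hum (schwartz_int d ha ha1 u₀)) (duh_est d ha hr hq hadm z hFm (schwartz_slice d F)))
  refine le_trans ?_ (mixE_add d (by linarith) (by linarith) hU.enorm hV)
  unfold mixE
  refine ENNReal.rpow_le_rpow (lintegral_mono_ae ?_) (by positivity)
  filter_upwards [ae_ne 0] with t ht
  refine ENNReal.rpow_le_rpow (lintegral_mono fun x => ENNReal.rpow_le_rpow ?_ (by linarith)) (by positivity)
  rw [tstar_eq d a hz ht]
  exact (enorm_add_le _ _).trans (add_le_add le_rfl (dop_le d a hz (fun X => F X) x t))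

theorem bulk_strichartz_nonneg
    (d : ℕ) (hd : 1 ≤ d) (a : ℝ) (ha : 0 ≤ a) (q r : ℝ)
    (hr : 2 ≤ r) (hq : 2 < q)
    (hadm : 2 / q + (d : ℝ) / r = ((d : ℝ) + a + 1) / 2) :
    ∃ C > (0 : ℝ), ∀ (u₀ : SchwartzMap ((Fin d → ℝ) × ℝ) ℂ)
      (F : SchwartzMap (((Fin d → ℝ) × ℝ) × ℝ) ℂ),
      (⨆ (z : ℝ) (_ : 0 < z),
          mixNorm d q r (fun x t =>
            Tstar d a (fun Y => u₀ Y) (x, z) t + Dop d a (fun Y τ => F (Y, τ)) (x, z) t))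
        ≤ ENNReal.ofReal C *
          (eLpNorm (fun X => u₀ X) 2 (ωa d a)
            + ∫⁻ ζ in Set.Ioi (0 : ℝ),
                mixNorm d (q / (q - 1)) (r / (r - 1)) (fun x t => F ((x, ζ), t)) *
                  ENNReal.ofReal (ζ ^ a)) := by
  have hH : cH q ≠ ⊤ := by unfold cH; finiteness
  have h1 : cT d a q r ≠ ⊤ := by
    unfold cT
    exact ENNReal.rpow_ne_top_of_nonneg (by norm_num) (ENNReal.mul_ne_top ENNReal.ofReal_ne_top hH)
  have h2 : ENNReal.ofReal (cB a * cD d r) * cH q ≠ ⊤ := ENNReal.mul_ne_top ENNReal.ofReal_ne_top hH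
  set c1 := cT d a q r with hc1
  set c2 := ENNReal.ofReal (cB a * cD d r) * cH q with hc2
  have hle : c1 + c2 ≤ ENNReal.ofReal ((c1 + c2).toReal + 1) := by
    rw [← ENNReal.ofReal_toReal (ENNReal.add_ne_top.mpr ⟨h1, h2⟩), ENNReal.toReal_ofReal ENNReal.toReal_nonneg]
    exact ENNReal.ofReal_le_ofReal (by linarith)
  refine ⟨(c1 + c2).toReal + 1, by positivity, fun u₀ F => iSup₂_le fun z hz => ?_⟩
  refine (main_bound d ha hr hq hadm u₀ F hz).trans ?_
  rw [← hc1, ← hc2, mul_add]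
  exact add_le_add (mul_le_mul' (le_self_add.trans hle) le_rfl) (mul_le_mul' (le_add_self.trans hle) le_rfl)

end
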